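/- (Sharpness of the fixed point bound) Let d ≥ 2 and 1 ≤ n ≤ d be integers and let μ₁, …, μ_n be positive integers with μ₁ + ⋯ + μ_n = d. Then there exist distinct points z₁, …, z_n ∈ ℂ and a polynomial p ∈ ℂ[z] with deg p ≤ d that is coprime to q := ∏_{j=1}^n (z − z_j)^{μ_j} (so the rational function r = p/q has degree d, satisfies r(∞) ≠ ∞, and has exactly n poles, of multiplicities μ₁, …, μ_n), such that the set {z ∈ ℂ : q(z) ≠ 0 and p(z) = conj(z)·q(z)} is finite with exactly min(3d + 2n − 3, 5d − 5) elements. -/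

import Mathlib

open Polynomial

/-- The set of finite fixed points of `z ↦ conj(r(z))` for the rational function
`r = p/q`: points `z` with `q(z) ≠ 0` and `p(z) = conj(z)·q(z)`. -/
def fixedPts (p q : Polynomial ℂ) : Set ℂ :=
  {z | q.eval z ≠ 0 ∧ p.eval z = (starRingEnd ℂ) z * q.eval z}

section Aux
open Filter Topology


/-- Nondegenerate derivative. -/
def ND (f : ℂ → ℂ) (z : ℂ) : Prop :=
  ∃ f' : ℂ →L[ℝ] ℂ, HasFDerivAt f f' z ∧ Function.Injective f'

/-- Counting predicate: exactly `N` zeros in `S`, all nondegenerate. -/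
def Cnt (f : ℂ → ℂ) (S : Set ℂ) (N : ℕ) : Prop :=
  {z | z ∈ S ∧ f z = 0}.encard = N ∧ ∀ z ∈ S, f z = 0 → ND f z

theorem CL {E : Type*} [NormedAddCommGroup E] [NormedSpace ℝ E] [CompleteSpace E]
    (G : E × ℂ → ℂ) (K : Set ℂ) (hK : IsCompact K) (π₀ : E) (N : ℕ)
    (hc : ∀ v ∈ K, ContinuousAt G (π₀, v))
    (hd : ∀ v ∈ K, G (π₀, v) = 0 → ContDiffAt ℝ 1 G (π₀, v) ∧ v ∈ interior K)
    (hN : Cnt (fun v => G (π₀, v)) K N) :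
    ∀ᶠ π in 𝓝 π₀, Cnt (fun v => G (π, v)) K N ∧
      ∀ v ∈ K, G (π, v) = 0 → v ∈ interior K := by
  set Z := {z | z ∈ K ∧ G (π₀, z) = 0} with hZ
  have hfin : Z.Finite := Set.finite_of_encard_eq_coe hN.1
  have key : ∀ z : ℂ, ∃ ψ : E → ℂ, z ∈ Z → Tendsto ψ (𝓝 π₀) (𝓝 z) ∧
      (∀ᶠ u in 𝓝 (π₀, z), (G u = 0 ↔ ψ u.1 = u.2)) ∧
      (∀ᶠ π in 𝓝 π₀, G (π, ψ π) = 0) := by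
    intro z
    by_cases hz : z ∈ Z
    swap
    · exact ⟨fun _ => 0, fun h => absurd h hz⟩
    obtain ⟨hzK, hz0⟩ := hz
    have hs := (hd z hzK hz0).1.hasStrictFDerivAt (by norm_num)
    have hpart : HasFDerivAt (fun v => G (π₀, v))
        ((fderiv ℝ G (π₀, z)) ∘L (.inr ℝ E ℂ)) z := by
      have h1 : HasFDerivAt (fun v : ℂ => ((π₀, v) : E × ℂ)) (.inr ℝ E ℂ) z :=
        hasFDerivAt_prodMk_right π₀ z
      exact hs.hasFDerivAt.comp z h1
    obtain ⟨f', hf', hinj⟩ := hN.2 z hzK hz0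
    rw [hf'.unique hpart] at hinj
    have hinv : ((fderiv ℝ G (π₀, z)) ∘L (.inr ℝ E ℂ)).IsInvertible := by
      set A := ((fderiv ℝ G (π₀, z)) ∘L (.inr ℝ E ℂ)) with hA
      have hinj' : Function.Injective (A : ℂ →ₗ[ℝ] ℂ) := hinj
      refine ⟨(LinearEquiv.ofInjectiveEndo (A : ℂ →ₗ[ℝ] ℂ) hinj').toContinuousLinearEquiv, ?_⟩
      ext <;> rfl
    refine ⟨hs.implicitFunctionOfProdDomain hinv, fun _ => ⟨?_, ?_, ?_⟩⟩
    · exact hs.tendsto_implicitFunctionOfProdDomain hinv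
    · have := hs.eventually_apply_eq_iff_implicitFunctionOfProdDomain hinv
      rwa [hz0] at this
    · have := hs.eventually_apply_implicitFunctionOfProdDomain hinv
      rwa [hz0] at this
  choose ψ hψ using key
  have hP : ∀ᶠ π in 𝓝 π₀, ∀ v ∈ K, G (π, v) = 0 →
      (∃ z ∈ Z, ψ z π = v) ∧ ND (fun v => G (π, v)) v ∧ v ∈ interior K := by
    apply hK.eventually_forall_of_forall_eventually
    intro y hy
    by_cases h0 : G (π₀, y) = 0
    · have hyZ : y ∈ Z := ⟨hy, h0⟩
      obtain ⟨-, h2, -⟩ := hψ y hyZ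
      obtain ⟨hcd, hint⟩ := hd y hy h0
      have h3 : ∀ᶠ u in 𝓝 (π₀, y), u.2 ∈ interior K := by
        have : Tendsto (Prod.snd : E × ℂ → ℂ) (𝓝 (π₀, y)) (𝓝 y) := continuous_snd.tendsto _
        exact this.eventually (isOpen_interior.mem_nhds hint)
      have h4 : ∀ᶠ u in 𝓝 (π₀, y), DifferentiableAt ℝ G u := by
        filter_upwards [hcd.eventually (by simp)] with u hu
        exact hu.differentiableAt (by norm_num)
      have h5 : ∀ᶠ u in 𝓝 (π₀, y),
          Function.Injective ((fderiv ℝ G u) ∘L (.inr ℝ E ℂ)) := by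
        have hcont : ContinuousAt (fun u => (fderiv ℝ G u) ∘L (.inr ℝ E ℂ)) (π₀, y) := by
          have h6 : ContinuousAt (fderiv ℝ G) (π₀, y) := hcd.continuousAt_fderiv (by norm_num)
          exact h6.clm_comp continuousAt_const
        refine hcont.tendsto.eventually
          (ContinuousLinearMap.isOpen_injective.mem_nhds ?_)
        obtain ⟨f', hf', hinj⟩ := hN.2 y hy h0
        have h1 : HasFDerivAt (fun v : ℂ => ((π₀, v) : E × ℂ)) (.inr ℝ E ℂ) y :=
          hasFDerivAt_prodMk_right π₀ y
        have := (hcd.differentiableAt (by norm_num)).hasFDerivAt.comp y h1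
        rw [hf'.unique this] at hinj
        exact hinj
      filter_upwards [h2, h3, h4, h5] with u hu2 hu3 hu4 hu5 hu0
      refine ⟨⟨y, hyZ, hu2.1 hu0⟩, ?_, hu3⟩
      refine ⟨_, HasFDerivAt.comp (g := G) u.2 hu4.hasFDerivAt
        (hasFDerivAt_prodMk_right u.1 u.2), hu5⟩
    · filter_upwards [(hc y hy).eventually_ne h0] with u hu hu0
      exact absurd hu0 hu
  have hQ : ∀ᶠ π in 𝓝 π₀, ∀ z ∈ Z, G (π, ψ z π) = 0 ∧ ψ z π ∈ interior K := by
    rw [hfin.eventually_all]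
    intro z hz
    exact (hψ z hz).2.2.and ((hψ z hz).1.eventually
      (isOpen_interior.mem_nhds (hd z hz.1 hz.2).2))
  have hR : ∀ᶠ π in 𝓝 π₀, ∀ z ∈ Z, ∀ w ∈ Z, z ≠ w → ψ z π ≠ ψ w π := by
    rw [hfin.eventually_all]
    intro z hz
    rw [hfin.eventually_all]
    intro w hw
    by_cases hzw : z = w
    · simp [hzw]
    · filter_upwards [((hψ z hz).1.sub (hψ w hw).1).eventually_ne (sub_ne_zero.2 hzw)] with π h _
      exact sub_ne_zero.1 h
  filter_upwards [hP, hQ, hR] with π h1 h2 h3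
  refine ⟨⟨?_, fun z hz h0 => (h1 z hz h0).2.1⟩, fun z hz h0 => (h1 z hz h0).2.2⟩
  have : {z | z ∈ K ∧ G (π, z) = 0} = (fun z => ψ z π) '' Z := by
    ext v
    constructor
    · rintro ⟨hv, h0⟩
      exact (h1 v hv h0).1
    · rintro ⟨z, hz, rfl⟩
      exact ⟨interior_subset (h2 z hz).2, (h2 z hz).1⟩
  show {z | z ∈ K ∧ G (π, z) = 0}.encard = N
  rw [this, Set.InjOn.encard_image]
  · exact hN.1
  · intro z hz w hw h
    by_contra hne
    exact h3 z hz w hw hne h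

theorem Cnt.union {f : ℂ → ℂ} {S T : Set ℂ} {M N : ℕ} (h1 : Cnt f S M) (h2 : Cnt f T N)
    (hd : Disjoint S T) : Cnt f (S ∪ T) (M + N) := by
  refine ⟨?_, ?_⟩
  · have : {z | z ∈ S ∪ T ∧ f z = 0} = {z | z ∈ S ∧ f z = 0} ∪ {z | z ∈ T ∧ f z = 0} := by
      ext z; simp only [Set.mem_union, Set.mem_setOf_eq]; tauto
    rw [this, Set.encard_union_eq, h1.1, h2.1]
    · push_cast; rfl
    · exact hd.mono (fun z hz => hz.1) (fun z hz => hz.1)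
  · rintro z (hz | hz) h0
    · exact h1.2 z hz h0
    · exact h2.2 z hz h0

theorem Cnt.biUnion {ι : Type*} {f : ℂ → ℂ} {S : ι → Set ℂ} {N : ι → ℕ}
    (h : ∀ i, Cnt f (S i) (N i)) (hd : Pairwise (fun i j => Disjoint (S i) (S j)))
    (s : Finset ι) : Cnt f (⋃ i ∈ s, S i) (∑ i ∈ s, N i) := by
  classical
  induction s using Finset.induction_on with
  | empty => refine ⟨by simp, by simp⟩
  | insert a s ha ih =>
    rw [Finset.set_biUnion_insert, Finset.sum_insert ha]
    refine (h a).union ih ?_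
    rw [Set.disjoint_iUnion₂_right]
    intro i hi
    exact hd (by rintro rfl; exact ha hi)

theorem Cnt.congr_set {f : ℂ → ℂ} {S T : Set ℂ} {N : ℕ} (h : Cnt f S N)
    (hST : ∀ z, f z = 0 → (z ∈ T ↔ z ∈ S)) : Cnt f T N := by
  refine ⟨?_, fun z hz h0 => h.2 z ((hST z h0).1 hz) h0⟩
  rw [← h.1]
  congr 1
  ext z
  exact ⟨fun ⟨a, b⟩ => ⟨(hST z b).1 a, b⟩, fun ⟨a, b⟩ => ⟨(hST z b).2 a, b⟩⟩

theorem ND.transfer {f g a ψ : ℂ → ℂ} {z : ℂ} (hg : ND g z) (hg0 : g z = 0) (ha0 : a z ≠ 0)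
    (ha : DifferentiableAt ℝ a z) (hψ : DifferentiableAt ℝ ψ z)
    (hf : DifferentiableAt ℝ f (ψ z)) (he : ∀ᶠ w in 𝓝 z, g w = a w * f (ψ w)) :
    ND f (ψ z) := by
  have hf0 : f (ψ z) = 0 := by
    have := he.self_of_nhds
    rw [hg0] at this
    exact (mul_eq_zero.1 this.symm).resolve_left ha0
  obtain ⟨g', hg', hinj⟩ := hg
  refine ⟨_, hf.hasFDerivAt, ?_⟩
  have h1 := ha.hasFDerivAt.mul (hf.hasFDerivAt.comp z hψ.hasFDerivAt)
  have h2 := (h1.congr_of_eventuallyEq he).unique hg'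
  have hcomp : ∀ x, g' x = a z * fderiv ℝ f (ψ z) (fderiv ℝ ψ z x) := by
    intro x
    rw [← h2]
    simp [hf0]
  set B := fderiv ℝ f (ψ z)
  set A := fderiv ℝ ψ z
  have hBA : Function.Injective ((B : ℂ →ₗ[ℝ] ℂ) ∘ₗ (A : ℂ →ₗ[ℝ] ℂ)) := by
    intro x y hxy
    apply hinj
    rw [hcomp, hcomp]
    have : B (A x) = B (A y) := hxy
    rw [this]
  have hsurj := LinearMap.injective_iff_surjective.1 hBA
  have hB : Function.Surjective (B : ℂ →ₗ[ℝ] ℂ) := by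
    intro y
    obtain ⟨x, hx⟩ := hsurj y
    exact ⟨A x, hx⟩
  exact LinearMap.injective_iff_surjective.2 hB

theorem Cnt.transfer {f g : ℂ → ℂ} {S T : Set ℂ} {N : ℕ} (a ψ : ℂ → ℂ) (h : Cnt g T N)
    (hinj : ∀ z ∈ T, ∀ w ∈ T, g z = 0 → g w = 0 → ψ z = ψ w → z = w)
    (hmaps : ∀ z ∈ T, g z = 0 → ψ z ∈ S)
    (hsurj : ∀ w ∈ S, f w = 0 → ∃ z ∈ T, ψ z = w)
    (ha0 : ∀ z ∈ T, a z ≠ 0)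
    (ha : ∀ z ∈ T, DifferentiableAt ℝ a z) (hψ : ∀ z ∈ T, DifferentiableAt ℝ ψ z)
    (hf : ∀ z ∈ T, DifferentiableAt ℝ f (ψ z))
    (he : ∀ z ∈ T, ∀ᶠ w in 𝓝 z, g w = a w * f (ψ w)) : Cnt f S N := by
  have hz : ∀ z ∈ T, (g z = 0 ↔ f (ψ z) = 0) := by
    intro z hzT
    rw [(he z hzT).self_of_nhds]
    simp [ha0 z hzT]
  refine ⟨?_, ?_⟩
  · have : {z | z ∈ S ∧ f z = 0} = ψ '' {z | z ∈ T ∧ g z = 0} := by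
      ext w
      constructor
      · rintro ⟨hw, h0⟩
        obtain ⟨z, hzT, rfl⟩ := hsurj w hw h0
        exact ⟨z, ⟨hzT, (hz z hzT).2 h0⟩, rfl⟩
      · rintro ⟨z, ⟨hzT, h0⟩, rfl⟩
        exact ⟨hmaps z hzT h0, (hz z hzT).1 h0⟩
    rw [this, Set.InjOn.encard_image, h.1]
    rintro z ⟨h1, h2⟩ w ⟨h3, h4⟩ h5
    exact hinj z h1 w h3 h2 h4 h5
  · intro w hw h0
    obtain ⟨z, hzT, rfl⟩ := hsurj w hw h0
    have hg0 := (hz z hzT).2 h0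
    exact ND.transfer (h.2 z hzT hg0) hg0 (ha0 z hzT) (ha z hzT) (hψ z hzT) (hf z hzT) (he z hzT)


theorem circle_limit (c : ℝ) (hc : 0 < c) (Y : ℝ) (hY : c < Y) (N : ℕ) (hN : 1 ≤ N) :
    Cnt (fun z : ℂ => (z.im : ℂ) - c * Complex.exp (N * z.re * Complex.I))
      (Set.Icc (-(Real.pi / (2 * N))) (2 * Real.pi - Real.pi / (2 * N)) ×ℂ Set.Icc (-Y) Y)
      (2 * N) ∧ ∀ z : ℂ, z ∈ (Set.Icc (-(Real.pi / (2 * N))) (2 * Real.pi - Real.pi / (2 * N))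
        ×ℂ Set.Icc (-Y) Y) → (z.im : ℂ) - c * Complex.exp (N * z.re * Complex.I) = 0 →
        z.re ∈ Set.Ioo (-(Real.pi / (2 * N))) (2 * Real.pi - Real.pi / (2 * N)) ∧
        z.im ∈ Set.Ioo (-Y) Y := by
  have hN0 : (0 : ℝ) < N := by exact_mod_cast hN
  have hpi := Real.pi_pos
  -- characterization of zeros
  have hchar : ∀ z : ℂ, (z.im : ℂ) - c * Complex.exp (N * z.re * Complex.I) = 0 ↔
      Real.sin (N * z.re) = 0 ∧ z.im = c * Real.cos (N * z.re) := by
    intro z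
    have h1 : ((N : ℂ) * z.re * Complex.I) = ((N * z.re : ℝ) : ℂ) * Complex.I := by push_cast; ring
    rw [h1, Complex.exp_mul_I, ← Complex.ofReal_cos, ← Complex.ofReal_sin, Complex.ext_iff]
    generalize Real.cos (N * z.re) = a
    generalize Real.sin (N * z.re) = b
    simp
    constructor
    · rintro ⟨h2, h3⟩
      exact ⟨h3.resolve_left hc.ne', by linarith⟩
    · rintro ⟨h2, h3⟩
      exact ⟨by linarith, Or.inr h2⟩
  have hzero : ∀ z : ℂ, z.re ∈ Set.Icc (-(Real.pi / (2 * N))) (2 * Real.pi - Real.pi / (2 * N)) →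
      (z.im : ℂ) - c * Complex.exp (N * z.re * Complex.I) = 0 →
      ∃ j ∈ Finset.range (2 * N), z = (⟨Real.pi * j / N, c * Real.cos (Real.pi * j)⟩ : ℂ) := by
    intro z hz h0
    obtain ⟨h1, h2⟩ := (hchar z).1 h0
    obtain ⟨m, hm⟩ := Real.sin_eq_zero_iff.1 h1
    have hre : z.re = Real.pi * m / N := by field_simp; linarith
    have hlo : -(1/2 : ℝ) ≤ m := by
      have := hz.1
      rw [hre] at this
      have h3 : -(Real.pi / (2 * N)) = Real.pi * (-(1/2)) / N := by field_simp
      rw [h3, div_le_div_iff_of_pos_right hN0] at this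
      exact le_of_mul_le_mul_left this hpi
    have hhi : (m : ℝ) ≤ 2 * N - 1/2 := by
      have := hz.2
      rw [hre] at this
      have h3 : 2 * Real.pi - (Real.pi / (2 * N)) = Real.pi * (2 * N - (1/2)) / N := by
        field_simp
      rw [h3, div_le_div_iff_of_pos_right hN0] at this
      exact le_of_mul_le_mul_left this hpi
    have hm0 : 0 ≤ m := by
      have : (-1 : ℝ) < m := by linarith
      have : (-1 : ℤ) < m := by exact_mod_cast this
      omega
    have hm1 : m < 2 * N := by
      have : (m : ℝ) < 2 * N := by linarith
      exact_mod_cast this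
    lift m to ℕ using hm0
    refine ⟨m, ?_, ?_⟩
    · rw [Finset.mem_range]; exact_mod_cast hm1
    · apply Complex.ext
      · simpa using hre
      · simp only
        rw [h2]
        congr 2
        rw [← hm]; push_cast; ring
  have hval : ∀ j : ℕ, ((⟨Real.pi * j / N, c * Real.cos (Real.pi * j)⟩ : ℂ).im : ℂ) -
      c * Complex.exp (N * (⟨Real.pi * j / N, c * Real.cos (Real.pi * j)⟩ : ℂ).re * Complex.I)
      = 0 := by
    intro j
    rw [hchar]
    have : (N : ℝ) * (Real.pi * j / N) = j * Real.pi := by field_simp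
    simp only
    rw [this]
    refine ⟨Real.sin_nat_mul_pi j, by rw [mul_comm Real.pi]⟩
  have hin : ∀ j ∈ Finset.range (2 * N),
      (⟨Real.pi * j / N, c * Real.cos (Real.pi * j)⟩ : ℂ).re ∈
        Set.Ioo (-(Real.pi / (2 * N))) (2 * Real.pi - Real.pi / (2 * N)) ∧
      (⟨Real.pi * j / N, c * Real.cos (Real.pi * j)⟩ : ℂ).im ∈ Set.Ioo (-Y) Y := by
    intro j hj
    rw [Finset.mem_range] at hj
    have hj' : (j : ℝ) + 1 ≤ 2 * N := by exact_mod_cast hj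
    have hj0 : (0 : ℝ) ≤ j := by positivity
    simp only
    refine ⟨⟨?_, ?_⟩, ?_, ?_⟩
    · have h1 : 0 < Real.pi / (2 * N) := by positivity
      have h2 : 0 ≤ Real.pi * j / N := by positivity
      linarith
    · have h3 : 2 * Real.pi - (Real.pi / (2 * N)) = Real.pi * (2 * N - (1/2)) / N := by
        field_simp
      rw [h3, div_lt_div_iff_of_pos_right hN0]
      apply mul_lt_mul_of_pos_left _ hpi
      linarith
    · have := Real.neg_one_le_cos (Real.pi * j)
      nlinarith
    · have := Real.cos_le_one (Real.pi * j)
      nlinarith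
  refine ⟨⟨?_, ?_⟩, ?_⟩
  · have : {z : ℂ | z ∈ (Set.Icc (-(Real.pi / (2 * N))) (2 * Real.pi - Real.pi / (2 * N)) ×ℂ
          Set.Icc (-Y) Y) ∧ (z.im : ℂ) - c * Complex.exp (N * z.re * Complex.I) = 0} =
        (fun j : ℕ => (⟨Real.pi * j / N, c * Real.cos (Real.pi * j)⟩ : ℂ)) ''
          (Finset.range (2 * N) : Set ℕ) := by
      ext z
      constructor
      · rintro ⟨hz, h0⟩
        obtain ⟨j, hj, rfl⟩ := hzero z (Complex.mem_reProdIm.1 hz).1 h0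
        exact ⟨j, hj, rfl⟩
      · rintro ⟨j, hj, rfl⟩
        have := hin j hj
        exact ⟨Complex.mem_reProdIm.2 ⟨Set.Ioo_subset_Icc_self this.1,
          Set.Ioo_subset_Icc_self this.2⟩, hval j⟩
    rw [this, Set.InjOn.encard_image, Set.encard_coe_eq_coe_finsetCard, Finset.card_range]
    intro i _ j _ hij
    have := congrArg Complex.re hij
    simp only at this
    field_simp at this
    exact_mod_cast this
  · intro z hz h0
    obtain ⟨h1, h2⟩ := (hchar z).1 h0
    have hd1 : HasFDerivAt (fun z : ℂ => (z.im : ℂ)) (Complex.ofRealCLM ∘L Complex.imCLM) z :=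
      (Complex.ofRealCLM ∘L Complex.imCLM).hasFDerivAt
    have hd2 : HasFDerivAt (fun z : ℂ => (z.re : ℂ)) (Complex.ofRealCLM ∘L Complex.reCLM) z :=
      (Complex.ofRealCLM ∘L Complex.reCLM).hasFDerivAt
    have hd3 := hd1.sub (((hd2.const_mul (N : ℂ)).mul_const Complex.I).cexp.const_mul (c : ℂ))
    refine ⟨_, hd3, ?_⟩
    rw [injective_iff_map_eq_zero]
    intro w hw
    have hE : (c : ℂ) * Complex.exp (N * z.re * Complex.I) = z.im := by
      linear_combination -h0
    have hcos : Real.cos (N * z.re) ≠ 0 := by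
      intro h
      have := Real.sin_sq_add_cos_sq (N * z.re)
      rw [h1, h] at this; norm_num at this
    have him : z.im ≠ 0 := by rw [h2]; exact mul_ne_zero hc.ne' hcos
    have hw' : (w.im : ℂ) - z.im * (N * w.re * Complex.I) = 0 := by
      rw [← hE]
      rw [← hw]
      simp
      ring
    have h5 := congrArg Complex.re hw'
    have h6 := congrArg Complex.im hw'
    simp at h5 h6
    apply Complex.ext
    · simp
      rcases h6 with h6 | h6 | h6
      · exact absurd h6 him
      · omega
      · exact h6
    · simpa using h5
  · intro z hz h0
    obtain ⟨j, hj, rfl⟩ := hzero z (Complex.mem_reProdIm.1 hz).1 h0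
    exact hin j hj

theorem circle_lemma {E : Type*} [NormedAddCommGroup E] [NormedSpace ℝ E] [CompleteSpace E]
    (B : (ℝ × E) × ℂ → ℂ) (π₀ : E) (M N : ℕ) (hM : 1 ≤ M) (hN : 1 ≤ N) (b₀ : ℂ) (hb₀ : b₀ ≠ 0)
    (hB : ∀ ζ : ℂ, 1 / 2 ≤ Complex.normSq ζ → Complex.normSq ζ ≤ 3 / 2 →
      ContDiffAt ℝ 1 B (((0 : ℝ), π₀), ζ))
    (hb : ∀ ζ : ℂ, Complex.normSq ζ = 1 → B ((0, π₀), ζ) = b₀) :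
    ∀ᶠ P in 𝓝 ((0 : ℝ), π₀), 0 < P.1 →
      Cnt (fun ζ => (Complex.normSq ζ : ℂ) - 1 - (P.1 : ℂ) ^ M * (ζ ^ N * B (P, ζ)))
        {ζ | 1 / 2 ≤ Complex.normSq ζ ∧ Complex.normSq ζ ≤ 3 / 2} (2 * N) := by
  have hN0 : (0 : ℝ) < N := by exact_mod_cast hN
  have hpi := Real.pi_pos
  set Ann : Set ℂ := {ζ | 1 / 2 ≤ Complex.normSq ζ ∧ Complex.normSq ζ ≤ 3 / 2} with hAnn
  have hAc : IsCompact Ann := by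
    apply Metric.isCompact_of_isClosed_isBounded
    · exact (isClosed_le continuous_const Complex.continuous_normSq).inter
        (isClosed_le Complex.continuous_normSq continuous_const)
    · rw [Metric.isBounded_iff_subset_closedBall 0]
      refine ⟨2, fun ζ hζ => ?_⟩
      have := hζ.2
      rw [Complex.normSq_eq_norm_sq] at this
      simp only [Metric.mem_closedBall, dist_zero_right]
      nlinarith [norm_nonneg ζ]
  -- bound on B
  obtain ⟨Y, hYb, hY⟩ : ∃ Y : ℝ, ‖b₀‖ < Y ∧ ∀ᶠ P in 𝓝 ((0 : ℝ), π₀), ∀ ζ ∈ Ann,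
      ‖ζ ^ N * B (P, ζ)‖ < Y := by
    have hcont : ContinuousOn (fun ζ => ζ ^ N * B ((0, π₀), ζ)) Ann := by
      intro ζ hζ
      apply ContinuousAt.continuousWithinAt
      have h1 := (hB ζ hζ.1 hζ.2).continuousAt
      have h2 : ContinuousAt (fun ζ : ℂ => ((((0 : ℝ), π₀), ζ) : (ℝ × E) × ℂ)) ζ := by fun_prop
      exact (continuousAt_id.pow N).mul (ContinuousAt.comp (f := fun ζ : ℂ => ((((0 : ℝ), π₀), ζ) : (ℝ × E) × ℂ)) h1 h2)
    obtain ⟨C, hC⟩ := hAc.exists_bound_of_continuousOn hcont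
    refine ⟨max (C + 1) (‖b₀‖ + 1), lt_max_of_lt_right (by linarith), ?_⟩
    apply hAc.eventually_forall_of_forall_eventually
    intro ζ hζ
    have h1 := (hB ζ hζ.1 hζ.2).continuousAt
    have h2 : ContinuousAt (fun u : (ℝ × E) × ℂ => ‖u.2 ^ N * B u‖) ((0, π₀), ζ) :=
      ((continuousAt_snd.pow N).mul h1).norm
    have h3 := h2.eventually_lt (g := fun _ => max (C + 1) (‖b₀‖ + 1)) continuousAt_const (by
      exact lt_of_le_of_lt (hC ζ hζ) (lt_max_of_lt_left (by linarith)))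
    exact h3
  have hY0 : 0 < Y := lt_of_le_of_lt (norm_nonneg _) hYb
  set β : ℝ := -(Complex.arg b₀) / N with hβ
  have hβb : Complex.exp (N * β * Complex.I) * b₀ = ‖b₀‖ := by
    have h1 : (N : ℂ) * β = -(Complex.arg b₀) := by
      have hNc : (N : ℂ) ≠ 0 := by exact_mod_cast hN0.ne'
      rw [hβ]; push_cast; field_simp
    rw [h1]
    nth_rewrite 2 [← Complex.norm_mul_exp_arg_mul_I b₀]
    rw [mul_left_comm, ← Complex.exp_add]
    simp
  set ψ : (ℝ × E) × ℂ → ℂ := fun u =>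
    (Real.sqrt (1 + u.1.1 ^ M * u.2.im) : ℂ) * Complex.exp ((u.2.re + β) * Complex.I) with hψ
  set g : (ℝ × E) × ℂ → ℂ := fun u => (u.2.im : ℂ) - ψ u ^ N * B (u.1, ψ u) with hg
  set K : Set ℂ := Set.Icc (-(Real.pi / (2 * N))) (2 * Real.pi - Real.pi / (2 * N)) ×ℂ
    Set.Icc (-Y) Y with hK
  have hKc : IsCompact K := isCompact_Icc.reProdIm isCompact_Icc
  have hψ0 : ∀ z : ℂ, ψ ((0, π₀), z) = Complex.exp ((z.re + β) * Complex.I) := by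
    intro z
    simp [hψ, zero_pow (by omega : M ≠ 0)]
  have hψn : ∀ u, 0 ≤ 1 + u.1.1 ^ M * u.2.im → Complex.normSq (ψ u) = 1 + u.1.1 ^ M * u.2.im := by
    intro u hu
    rw [Complex.normSq_eq_norm_sq, hψ]
    simp only [norm_mul, Complex.norm_real]
    have : ((u.2.re : ℂ) + β) * Complex.I = ((u.2.re + β : ℝ) : ℂ) * Complex.I := by push_cast; ring
    rw [this, Complex.norm_exp_ofReal_mul_I, mul_one, Real.norm_eq_abs, sq_abs, Real.sq_sqrt hu]
  have hψ0n : ∀ z : ℂ, Complex.normSq (ψ ((0, π₀), z)) = 1 := by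
    intro z
    rw [hψn _ (by simp [zero_pow (by omega : M ≠ 0)])]
    simp [zero_pow (by omega : M ≠ 0)]
  have hψd : ∀ u : (ℝ × E) × ℂ, 1 + u.1.1 ^ M * u.2.im ≠ 0 → ContDiffAt ℝ 1 ψ u := by
    intro u hu
    have h0 : ContDiffAt ℝ 1 (fun u : (ℝ × E) × ℂ => u.2.im) u :=
      Complex.imCLM.contDiff.contDiffAt.comp u contDiffAt_snd
    have h0' : ContDiffAt ℝ 1 (fun u : (ℝ × E) × ℂ => (u.2.re : ℂ)) u :=
      (Complex.ofRealCLM ∘L Complex.reCLM).contDiff.contDiffAt.comp u contDiffAt_snd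
    have h1 : ContDiffAt ℝ 1 (fun u : (ℝ × E) × ℂ => 1 + u.1.1 ^ M * u.2.im) u :=
      contDiffAt_const.add (((contDiffAt_fst.comp u contDiffAt_fst).pow M).mul h0)
    have h2 : ContDiffAt ℝ 1 (fun u : (ℝ × E) × ℂ =>
        ((Real.sqrt (1 + u.1.1 ^ M * u.2.im) : ℝ) : ℂ)) u :=
      Complex.ofRealCLM.contDiff.contDiffAt.comp u (h1.sqrt hu)
    exact h2.mul ((h0'.add contDiffAt_const).mul contDiffAt_const).cexp
  have hg0 : ∀ z, g ((0, π₀), z) = (z.im : ℂ) - ‖b₀‖ * Complex.exp (N * z.re * Complex.I) := by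
    intro z
    simp only [hg]
    rw [hb _ (hψ0n z), hψ0, ← Complex.exp_nat_mul, ← hβb]
    have : (N : ℂ) * ((z.re + β) * Complex.I) = N * β * Complex.I + N * z.re * Complex.I := by ring
    rw [this, Complex.exp_add]
    ring
  have hlim := circle_limit ‖b₀‖ (norm_pos_iff.2 hb₀) Y hYb N hN
  have hgd : ∀ z, ContDiffAt ℝ 1 g ((0, π₀), z) := by
    intro z
    have h0 : ContDiffAt ℝ 1 (fun u : (ℝ × E) × ℂ => (u.2.im : ℂ)) ((0, π₀), z) :=
      (Complex.ofRealCLM ∘L Complex.imCLM).contDiff.contDiffAt.comp _ contDiffAt_snd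
    have h1 : ContDiffAt ℝ 1 ψ ((0, π₀), z) := by
      apply hψd; simp [zero_pow (by omega : M ≠ 0)]
    have h2 : ContDiffAt ℝ 1 B (((0 : ℝ), π₀), ψ ((0, π₀), z)) := by
      apply hB <;> rw [hψ0n] <;> norm_num
    have h3 : ContDiffAt ℝ 1 (fun u : (ℝ × E) × ℂ => B (u.1, ψ u)) ((0, π₀), z) :=
      ContDiffAt.comp (g := B) (f := fun u : (ℝ × E) × ℂ => (u.1, ψ u)) _ h2
        (contDiffAt_fst.prodMk h1)
    exact h0.sub ((h1.pow N).mul h3)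
  have hCL := CL g K hKc (0, π₀) (2 * N) (fun v _ => (hgd v).continuousAt)
    (fun v hv h0 => ⟨hgd v, by
      rw [hg0] at h0
      have := hlim.2 v hv h0
      rw [hK, Complex.interior_reProdIm, interior_Icc, interior_Icc]
      exact Complex.mem_reProdIm.2 this⟩) (by
      have : (fun v => g ((0, π₀), v)) =
        (fun z : ℂ => (z.im : ℂ) - ‖b₀‖ * Complex.exp (N * z.re * Complex.I)) := funext hg0
      rw [this]; exact hlim.1)
  have hBd : ∀ᶠ P in 𝓝 ((0 : ℝ), π₀), ∀ ζ ∈ Ann, DifferentiableAt ℝ (fun ζ => B (P, ζ)) ζ := by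
    apply hAc.eventually_forall_of_forall_eventually
    intro ζ hζ
    filter_upwards [(hB ζ hζ.1 hζ.2).eventually (by simp)] with u hu
    exact (hu.differentiableAt (by norm_num)).comp u.2
      (hasFDerivAt_prodMk_right u.1 u.2).differentiableAt
  have hτ : ∀ᶠ P in 𝓝 ((0 : ℝ), π₀), P.1 ^ M * Y < 1 / 2 := by
    have : ContinuousAt (fun P : ℝ × E => P.1 ^ M * Y) (0, π₀) := by fun_prop
    apply this.eventually_lt (g := fun _ => (1 / 2 : ℝ)) continuousAt_const
    simp [zero_pow (by omega : M ≠ 0)]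
  filter_upwards [hCL, hBd, hτ, hY] with P h1 h2 h3 h4 hP
  have hPM : 0 < P.1 ^ M := pow_pos hP M
  have hrange : ∀ z ∈ K, 1 / 2 ≤ 1 + P.1 ^ M * z.im ∧ 1 + P.1 ^ M * z.im ≤ 3 / 2 := by
    intro z hz
    have := (Complex.mem_reProdIm.1 hz).2
    constructor <;> nlinarith [this.1, this.2]
  have hAψ : ∀ z ∈ K, ψ (P, z) ∈ Ann := by
    intro z hz
    obtain ⟨h5, h6⟩ := hrange z hz
    show 1 / 2 ≤ Complex.normSq (ψ (P, z)) ∧ Complex.normSq (ψ (P, z)) ≤ 3 / 2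
    rw [hψn (P, z) (by simp only; linarith)]
    exact ⟨h5, h6⟩
  refine Cnt.transfer (fun _ => ((P.1 : ℂ) ^ M)⁻¹) (fun z => ψ (P, z)) h1.1 ?_ ?_ ?_ ?_ ?_ ?_ ?_ ?_
  · intro z hz w hw hz0 hw0 he
    have hzi := h1.2 z hz hz0
    have hwi := h1.2 w hw hw0
    rw [hK, Complex.interior_reProdIm, interior_Icc, interior_Icc] at hzi hwi
    obtain ⟨hzr, -⟩ := Complex.mem_reProdIm.1 hzi
    obtain ⟨hwr, -⟩ := Complex.mem_reProdIm.1 hwi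
    have hn : Complex.normSq (ψ (P, z)) = Complex.normSq (ψ (P, w)) := congrArg Complex.normSq he
    rw [hψn (P, z) (by have := hrange z hz; simp only; linarith),
      hψn (P, w) (by have := hrange w hw; simp only; linarith)] at hn
    have him : z.im = w.im := by
      simp only at hn
      exact mul_left_cancel₀ hPM.ne' (add_left_cancel hn)
    have hexp : Complex.exp ((z.re + β) * Complex.I) = Complex.exp ((w.re + β) * Complex.I) := by
      simp only [hψ] at he
      rw [him] at he
      refine mul_left_cancel₀ ?_ he
      rw [Complex.ofReal_ne_zero, Real.sqrt_ne_zero']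
      have := hrange w hw; linarith
    obtain ⟨k, hk⟩ := Complex.exp_eq_exp_iff_exists_int.1 hexp
    have hk' : z.re = w.re + k * (2 * Real.pi) := by
      have := congrArg Complex.im hk
      simp at this
      linarith
    have hk0 : k = 0 := by
      have h5 : (k : ℝ) < 1 := by nlinarith [hzr.1, hzr.2, hwr.1, hwr.2]
      have h6 : (-1 : ℝ) < k := by nlinarith [hzr.1, hzr.2, hwr.1, hwr.2]
      have h5' : k < 1 := by exact_mod_cast h5
      have h6' : -1 < k := by exact_mod_cast h6
      omega
    apply Complex.ext
    · rw [hk', hk0]; simp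
    · exact him
  · intro z hz _
    exact hAψ z hz
  · intro w hw hw0
    have hwB := h4 w hw
    have hy : ((Complex.normSq w : ℂ) - 1) / (P.1 : ℂ) ^ M = w ^ N * B (P, w) := by
      rw [div_eq_iff (by exact_mod_cast hPM.ne')]
      linear_combination hw0
    set y : ℝ := (Complex.normSq w - 1) / P.1 ^ M with hydef
    have hyB : |y| < Y := by
      rw [← hy] at hwB
      have : ((Complex.normSq w : ℂ) - 1) / (P.1 : ℂ) ^ M = ((y : ℝ) : ℂ) := by
        rw [hydef]; push_cast; rfl
      rw [this, Complex.norm_real] at hwB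
      exact hwB
    have h2pi : 0 < 2 * Real.pi := by positivity
    set θ := toIcoMod h2pi (-(Real.pi / (2 * N))) (Complex.arg w - β) with hθ
    have hθm := toIcoMod_mem_Ico h2pi (-(Real.pi / (2 * N))) (Complex.arg w - β)
    have hθe := self_sub_toIcoMod_eq_mul h2pi (-(Real.pi / (2 * N))) (Complex.arg w - β)
    rw [← hθ] at hθm hθe
    refine ⟨⟨θ, y⟩, ?_, ?_⟩
    · refine Complex.mem_reProdIm.2 ⟨⟨hθm.1, ?_⟩, ?_⟩
      · have := hθm.2; simp only; linarith
      · exact ⟨(abs_lt.1 hyB).1.le, (abs_lt.1 hyB).2.le⟩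
    · simp only [hψ]
      have h5 : 1 + P.1 ^ M * y = ‖w‖ ^ 2 := by
        rw [hydef, ← Complex.normSq_eq_norm_sq]; field_simp; ring
      rw [h5, Real.sqrt_sq (norm_nonneg w)]
      have h6 : (θ : ℂ) + β = Complex.arg w - (toIcoDiv h2pi (-(Real.pi / (2 * N))) (Complex.arg w - β) : ℤ) * (2 * Real.pi) := by
        have : θ + β = Complex.arg w - (toIcoDiv h2pi (-(Real.pi / (2 * N))) (Complex.arg w - β) : ℤ) * (2 * Real.pi) := by
          linarith
        exact_mod_cast congrArg (fun r : ℝ => (r : ℂ)) this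
      rw [h6, sub_mul, Complex.exp_sub]
      have h7 := Complex.exp_int_mul_two_pi_mul_I (toIcoDiv h2pi (-(Real.pi / (2 * N))) (Complex.arg w - β))
      rw [← mul_assoc] at h7
      rw [h7, div_one, Complex.norm_mul_exp_arg_mul_I]
  · intro z _
    exact inv_ne_zero (by exact_mod_cast hPM.ne')
  · intro z _
    exact differentiableAt_const _
  · intro z hz
    have h5 : DifferentiableAt ℝ ψ (P, z) :=
      (hψd (P, z) (by have := hrange z hz; simp only; linarith)).differentiableAt (by norm_num)
    exact h5.comp z (hasFDerivAt_prodMk_right P z).differentiableAt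
  · intro z hz
    have h5 := h2 _ (hAψ z hz)
    have h6 : DifferentiableAt ℝ (fun ζ : ℂ => (Complex.normSq ζ : ℂ)) (ψ (P, z)) := by
      have : (fun ζ : ℂ => (Complex.normSq ζ : ℂ)) = fun ζ => ζ * (Complex.conjCLE ζ) := by
        ext ζ; simp [Complex.mul_conj]
      rw [this]
      exact differentiableAt_id.mul Complex.conjCLE.differentiableAt
    exact (h6.sub_const 1).sub ((differentiableAt_const _).mul ((differentiableAt_id.pow N).mul h5))
  · intro z hz
    have h5 : ∀ᶠ w : ℂ in 𝓝 z, 0 < 1 + P.1 ^ M * w.im := by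
      have : ContinuousAt (fun w : ℂ => 1 + P.1 ^ M * w.im) z := by fun_prop
      apply continuousAt_const.eventually_lt this
      have := hrange z hz; linarith
    filter_upwards [h5] with w hw
    rw [hψn (P, w) hw.le]
    simp only [hg]
    have : (P.1 : ℂ) ^ M ≠ 0 := by exact_mod_cast hPM.ne'
    push_cast
    field_simp
    ring


theorem near_limit (a b : ℂ) (ha : a ≠ 0) (hb : b ≠ 0) (e : ℕ) (he : 2 ≤ e) :
    Cnt (fun Z : ℂ => a * Z ^ e - b * (starRingEnd ℂ) Z) Set.univ (e + 2) := by
  have hba : 0 < ‖b / a‖ := norm_pos_iff.2 (div_ne_zero hb ha)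
  obtain ⟨ρ, hρ, hρe⟩ : ∃ ρ : ℝ, 0 < ρ ∧ ρ ^ (e - 1) = ‖b / a‖ := by
    refine ⟨‖b / a‖ ^ (1 / ((e - 1 : ℕ) : ℝ)), Real.rpow_pos_of_pos hba _, ?_⟩
    rw [← Real.rpow_natCast, ← Real.rpow_mul hba.le, one_div_mul_cancel, Real.rpow_one]
    have : 0 < e - 1 := by omega
    positivity
  set c : ℂ := b / a * ρ ^ 2 with hc
  have hc0 : c ≠ 0 := mul_ne_zero (div_ne_zero hb ha) (by exact_mod_cast (pow_pos hρ 2).ne')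
  have hpow : ∀ Z : ℂ, Z ≠ 0 → (a * Z ^ e - b * (starRingEnd ℂ) Z = 0 ↔ Z ^ (e + 1) = c) ∧
      (a * Z ^ e - b * (starRingEnd ℂ) Z = 0 → ‖Z‖ ^ (e - 1) = ‖b / a‖) := by
    intro Z hZ
    have hZn : 0 < ‖Z‖ := norm_pos_iff.2 hZ
    have hmc : Z * (starRingEnd ℂ) Z = (‖Z‖ : ℂ) ^ 2 := by
      rw [Complex.mul_conj, Complex.normSq_eq_norm_sq]; push_cast; rfl
    have h2 : a * Z ^ e - b * (starRingEnd ℂ) Z = 0 → ‖Z‖ ^ (e - 1) = ‖b / a‖ := by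
      intro h
      have h3 : ‖a * Z ^ e‖ = ‖b * (starRingEnd ℂ) Z‖ := by rw [sub_eq_zero.1 h]
      rw [norm_mul, norm_mul, norm_pow, RCLike.norm_conj] at h3
      rw [norm_div, eq_div_iff (norm_pos_iff.2 ha).ne']
      apply mul_right_cancel₀ hZn.ne'
      rw [← h3]
      have : e = (e - 1) + 1 := by omega
      nth_rewrite 2 [this]
      rw [pow_succ]; ring
    refine ⟨⟨fun h => ?_, fun h => ?_⟩, h2⟩
    · have h3 := h2 h
      have h4 : ‖Z‖ = ρ := by
        rw [← hρe] at h3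
        exact (pow_left_inj₀ hZn.le hρ.le (by omega)).1 h3
      rw [hc, ← h4, ← hmc]
      field_simp
      linear_combination Z * h
    · have h3 : ‖Z‖ = ρ := by
        have h4 : ‖Z‖ ^ (e + 1) = ρ ^ (e + 1) := by
          rw [← norm_pow, h, hc, norm_mul, ← hρe]
          simp only [norm_pow, Complex.norm_real, Real.norm_eq_abs, abs_of_pos hρ]
          rw [← pow_add]; congr 1; omega
        exact (pow_left_inj₀ hZn.le hρ.le (by omega)).1 h4
      rw [hc, ← h3, ← hmc] at h
      field_simp at h
      apply mul_left_cancel₀ hZ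
      linear_combination h
  refine ⟨?_, ?_⟩
  · have hset : {z : ℂ | z ∈ Set.univ ∧ a * z ^ e - b * (starRingEnd ℂ) z = 0} =
        insert 0 ((nthRootsFinset (e + 1) c : Finset ℂ) : Set ℂ) := by
      ext z
      simp only [Set.mem_univ, true_and, Set.mem_insert_iff, Finset.mem_coe,
        mem_nthRootsFinset (Nat.succ_pos e)]
      by_cases hz : z = 0
      · subst hz; simp [show e ≠ 0 by omega]
      · constructor
        · intro h; exact Or.inr ((hpow z hz).1.1 h)
        · intro h; exact (hpow z hz).1.2 (h.resolve_left hz)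
    show {z : ℂ | z ∈ Set.univ ∧ a * z ^ e - b * (starRingEnd ℂ) z = 0}.encard = _
    rw [hset, Set.encard_insert_of_notMem, Set.encard_coe_eq_coe_finsetCard]
    · have hcard : (nthRootsFinset (e + 1) c : Finset ℂ).card = e + 1 := by
        have hprim := Complex.isPrimitiveRoot_exp (e + 1) (by omega)
        obtain ⟨α, hα⟩ := IsAlgClosed.exists_pow_nat_eq c (Nat.succ_pos e)
        classical
        have h1 := hprim.card_nthRoots c
        rw [if_pos ⟨α, hα⟩] at h1
        have h2 := hprim.nthRoots_nodup hc0
        rw [nthRootsFinset_def, Multiset.toFinset_card_of_nodup h2, h1]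
      rw [hcard]; push_cast; ring
    · simp [hc0.symm]
  · intro Z _ h0
    have h0' : a * Z ^ e - b * (starRingEnd ℂ) Z = 0 := h0
    have hd1 : HasFDerivAt (fun Z : ℂ => Z ^ e)
      (((e : ℂ) * Z ^ (e - 1)) • (1 : ℂ →L[ℝ] ℂ)) Z :=
      (hasDerivAt_pow e Z).complexToReal_fderiv
    have hd2 : HasFDerivAt (fun Z : ℂ => (starRingEnd ℂ) Z)
      (Complex.conjCLE : ℂ →L[ℝ] ℂ) Z := Complex.conjCLE.hasFDerivAt
    refine ⟨_, (hd1.const_mul a).sub (hd2.const_mul b), ?_⟩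
    rw [injective_iff_map_eq_zero]
    intro w hw
    simp at hw
    by_contra hw0
    have hwn := norm_pos_iff.2 hw0
    have h3 : ‖a * (e * Z ^ (e - 1) * w)‖ = ‖b * (starRingEnd ℂ) w‖ := by
      rw [sub_eq_zero.1 hw]
    simp only [norm_mul, norm_pow, RCLike.norm_conj] at h3
    have h4 : ‖a‖ * ((e : ℝ) * ‖Z‖ ^ (e - 1)) = ‖b‖ := by
      apply mul_right_cancel₀ hwn.ne'
      rw [← h3]; simp; ring
    have hbp := norm_pos_iff.2 hb
    have hap := norm_pos_iff.2 ha
    by_cases hZ : Z = 0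
    · subst hZ
      simp [show e - 1 ≠ 0 by omega] at h4
      exact hbp.ne h4
    · have h5 := (hpow Z hZ).2 h0'
      rw [h5, norm_div] at h4
      field_simp at h4
      have : (2 : ℝ) ≤ e := by exact_mod_cast he
      nlinarith


/-- evaluated product -/
noncomputable def qe {ι : Type*} [Fintype ι] (μ : ι → ℕ) (x : ι → ℂ) (v : ℂ) : ℂ :=
  ∏ j, (v - x j) ^ μ j

noncomputable def FF {ι : Type*} [Fintype ι] (μ : ι → ℕ) (t : ℝ) (x : ι → ℂ) (v : ℂ) : ℂ :=
  qe μ x v * (1 - t * (v * (starRingEnd ℂ) v)) - qe μ x 0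

theorem contDiff_qe {ι : Type*} [Fintype ι] (μ : ι → ℕ) :
    ContDiff ℝ 1 (fun u : (ι → ℂ) × ℂ => qe μ u.1 u.2) := by
  unfold qe
  apply contDiff_prod
  intro j _
  apply ContDiff.pow
  fun_prop

theorem contDiff_conj : ContDiff ℝ 1 (fun z : ℂ => (starRingEnd ℂ) z) :=
  Complex.conjCLE.contDiff

theorem contDiff_FF {ι : Type*} [Fintype ι] (μ : ι → ℕ) :
    ContDiff ℝ 1 (fun u : (ℝ × (ι → ℂ)) × ℂ => FF μ u.1.1 u.1.2 u.2) := by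
  unfold FF
  have h1 : ContDiff ℝ 1 (fun u : (ℝ × (ι → ℂ)) × ℂ => qe μ u.1.2 u.2) :=
    (contDiff_qe μ).comp (f := fun u : (ℝ × (ι → ℂ)) × ℂ => (u.1.2, u.2)) (by fun_prop)
  have h2 : ContDiff ℝ 1 (fun u : (ℝ × (ι → ℂ)) × ℂ => qe μ u.1.2 0) :=
    (contDiff_qe μ).comp (f := fun u : (ℝ × (ι → ℂ)) × ℂ => (u.1.2, (0 : ℂ))) (by fun_prop)
  have h3 : ContDiff ℝ 1 (fun u : (ℝ × (ι → ℂ)) × ℂ => (starRingEnd ℂ) u.2) :=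
    contDiff_conj.comp contDiff_snd
  have h4 : ContDiff ℝ 1 (fun u : (ℝ × (ι → ℂ)) × ℂ => (u.1.1 : ℂ)) :=
    Complex.ofRealCLM.contDiff.comp (contDiff_fst.comp contDiff_fst)
  exact (h1.mul (contDiff_const.sub (h4.mul (contDiff_snd.mul h3)))).sub h2

theorem FF_differentiable {ι : Type*} [Fintype ι] (μ : ι → ℕ) (t : ℝ) (x : ι → ℂ) (v : ℂ) :
    DifferentiableAt ℝ (FF μ t x) v :=
  ((contDiff_FF μ).differentiable (by norm_num) ((t, x), v)).comp v
    (hasFDerivAt_prodMk_right (t, x) v).differentiableAt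

theorem outer_count {ι : Type*} [Fintype ι] (μ : ι → ℕ) (D : ℕ) (hD : ∑ j, μ j = D) (hD1 : 1 ≤ D)
    (x₀ : ι → ℂ) (hκ : qe μ x₀ 0 ≠ 0) :
    ∃ V₁ : ℝ, 0 < V₁ ∧ ∀ V₀ ≥ V₁, ∀ᶠ P in 𝓝 ((0 : ℝ), x₀), 0 < P.1 →
      Cnt (FF μ P.1 P.2) {v | V₀ < ‖v‖} (2 * D) := by
  set κ := qe μ x₀ 0 with hκdef
  set A : ℝ := ∑ j, ‖x₀ j‖ + 1 with hA
  refine ⟨A + 1 + 3 * (‖κ‖ + 1), by positivity, ?_⟩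
  intro V₀ hV₀
  have hV0pos : 0 < V₀ := lt_of_lt_of_le (by positivity) hV₀
  set B : (ℝ × (ι → ℂ)) × ℂ → ℂ := fun u =>
    qe μ u.1.2 0 * (Complex.normSq u.2) / ∏ j, (1 - u.1.2 j * (u.1.1 * u.2)) ^ μ j with hBdef
  have hstarC : ContDiff ℝ 1 (fun u : (ℝ × (ι → ℂ)) × ℂ =>
      ∏ j, (1 - u.1.2 j * (u.1.1 * u.2)) ^ μ j) := by
    have h4 : ContDiff ℝ 1 (fun u : (ℝ × (ι → ℂ)) × ℂ => (u.1.1 : ℂ)) :=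
      Complex.ofRealCLM.contDiff.comp (contDiff_fst.comp contDiff_fst)
    apply contDiff_prod
    intro j _
    apply ContDiff.pow
    have h5 : ContDiff ℝ 1 (fun u : (ℝ × (ι → ℂ)) × ℂ => u.1.2 j) := by fun_prop
    exact contDiff_const.sub (h5.mul (h4.mul contDiff_snd))
  have hns : ContDiff ℝ 1 (fun u : (ℝ × (ι → ℂ)) × ℂ => (Complex.normSq u.2 : ℂ)) := by
    have : (fun u : (ℝ × (ι → ℂ)) × ℂ => (Complex.normSq u.2 : ℂ)) =
        fun u => u.2 * (starRingEnd ℂ) u.2 := by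
      ext u; rw [Complex.mul_conj]
    rw [this]
    exact contDiff_snd.mul (contDiff_conj.comp contDiff_snd)
  have hq0 : ContDiff ℝ 1 (fun u : (ℝ × (ι → ℂ)) × ℂ => qe μ u.1.2 0) :=
    (contDiff_qe μ).comp (f := fun u : (ℝ × (ι → ℂ)) × ℂ => (u.1.2, (0 : ℂ))) (by fun_prop)
  have hcirc := circle_lemma B x₀ D D hD1 hD1 κ hκ
    (by
      intro ζ _ _
      have hi : ContDiffAt ℝ 1 (fun u : (ℝ × (ι → ℂ)) × ℂ =>
        (∏ j, (1 - u.1.2 j * (u.1.1 * u.2)) ^ μ j)⁻¹) (((0 : ℝ), x₀), ζ) :=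
        hstarC.contDiffAt.inv (by simp)
      have := ((hq0.mul hns).contDiffAt (x := (((0 : ℝ), x₀), ζ))).mul hi
      simpa only [hBdef, div_eq_mul_inv] using this)
    (by
      intro ζ hζ
      simp [hBdef, hζ, ← hκdef])
  have hsq : Tendsto (fun P : ℝ × (ι → ℂ) => (Real.sqrt P.1, P.2)) (𝓝 ((0 : ℝ), x₀))
      (𝓝 ((0 : ℝ), x₀)) := by
    have : ContinuousAt (fun P : ℝ × (ι → ℂ) => (Real.sqrt P.1, P.2)) ((0 : ℝ), x₀) := by fun_prop
    have h := this.tendsto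
    simpa using h
  have hx : ∀ᶠ P in 𝓝 ((0 : ℝ), x₀), ∀ j, ‖P.2 j‖ < A := by
    rw [eventually_all]
    intro j
    have : ContinuousAt (fun P : ℝ × (ι → ℂ) => ‖P.2 j‖) (0, x₀) := by fun_prop
    apply this.eventually_lt (g := fun _ => A) continuousAt_const
    have := Finset.single_le_sum (f := fun j => ‖x₀ j‖) (fun i _ => norm_nonneg _) (Finset.mem_univ j)
    simp only at this ⊢
    linarith
  have hq : ∀ᶠ P in 𝓝 ((0 : ℝ), x₀), ‖qe μ P.2 0‖ < ‖κ‖ + 1 := by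
    have h5 : ContinuousAt (fun P : ℝ × (ι → ℂ) => ‖qe μ P.2 0‖) (0, x₀) := by
      have := (contDiff_qe μ).continuous.comp (f := fun P : ℝ × (ι → ℂ) => (P.2, (0 : ℂ)))
        (by fun_prop)
      exact this.norm.continuousAt
    apply h5.eventually_lt (g := fun _ => ‖κ‖ + 1) continuousAt_const
    simp only [← hκdef]
    linarith
  have hτV : ∀ᶠ P in 𝓝 ((0 : ℝ), x₀), Real.sqrt P.1 * (2 * (V₀ + A)) < 1 := by
    have : ContinuousAt (fun P : ℝ × (ι → ℂ) => Real.sqrt P.1 * (2 * (V₀ + A))) (0, x₀) := by fun_prop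
    apply this.eventually_lt (g := fun _ => 1) continuousAt_const
    simp
  filter_upwards [hsq.eventually hcirc, hx, hq, hτV] with P h1 h2 h3 h4 hP
  set τ := Real.sqrt P.1 with hτ
  have hτ0 : 0 < τ := Real.sqrt_pos.2 hP
  have hτ2 : τ ^ 2 = P.1 := Real.sq_sqrt hP.le
  have h1' := h1 hτ0
  have hApos : 0 < A := by positivity
  have hζ2 : ∀ ζ : ℂ, Complex.normSq ζ ≤ 3 / 2 → ‖ζ‖ < 2 := by
    intro ζ hζ
    rw [Complex.normSq_eq_norm_sq] at hζ
    nlinarith [norm_nonneg ζ]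
  have hst : ∀ ζ : ℂ, ‖ζ‖ < 2 → ∏ j, (1 - P.2 j * (τ * ζ)) ^ μ j ≠ 0 := by
    intro ζ hζ
    rw [Finset.prod_ne_zero_iff]
    intro j _
    apply pow_ne_zero
    intro h0
    have h5 : ‖P.2 j * (τ * ζ)‖ = 1 := by rw [← sub_eq_zero.1 h0]; simp
    rw [norm_mul, norm_mul, Complex.norm_real, Real.norm_eq_abs, abs_of_pos hτ0] at h5
    have h6 := h2 j
    have h7 : ‖P.2 j‖ * (τ * ‖ζ‖) ≤ A * (τ * 2) := by gcongr
    nlinarith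
  have hid : ∀ ζ : ℂ, ζ ≠ 0 → ‖ζ‖ < 2 →
      (Complex.normSq ζ : ℂ) - 1 - (τ : ℂ) ^ D * (ζ ^ D * B ((τ, P.2), ζ)) =
      (((τ : ℂ) * ζ) ^ D * Complex.normSq ζ / ∏ j, (1 - P.2 j * (τ * ζ)) ^ μ j) *
        FF μ P.1 P.2 ((τ * ζ)⁻¹) := by
    intro ζ hζ hζ2
    have hS := hst ζ hζ2
    have hτc : (τ : ℂ) ≠ 0 := by exact_mod_cast hτ0.ne'
    have hw : (τ : ℂ) * ζ ≠ 0 := mul_ne_zero hτc hζ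
    have hqv : qe μ P.2 ((τ * ζ)⁻¹) * ((τ : ℂ) * ζ) ^ D =
        ∏ j, (1 - P.2 j * (τ * ζ)) ^ μ j := by
      unfold qe
      rw [← hD, ← Finset.prod_pow_eq_pow_sum, ← Finset.prod_mul_distrib]
      apply Finset.prod_congr rfl
      intro j _
      rw [← mul_pow]
      congr 1
      rw [sub_mul, inv_mul_cancel₀ hw]
    have hvv : ((τ : ℂ) * ζ)⁻¹ * (starRingEnd ℂ) ((τ : ℂ) * ζ)⁻¹ * P.1 * Complex.normSq ζ = 1 := by
      rw [← hτ2, ← Complex.mul_conj, map_inv₀, map_mul, Complex.conj_ofReal]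
      have : (starRingEnd ℂ) ζ ≠ 0 := by simpa using hζ
      push_cast
      field_simp
    unfold FF
    simp only [hBdef]
    set S := ∏ j, (1 - P.2 j * (τ * ζ)) ^ μ j
    set w := (τ : ℂ) * ζ
    have e1 : (τ : ℂ) ^ D * (ζ ^ D * (qe μ P.2 0 * (Complex.normSq ζ) / S)) =
      w ^ D * (qe μ P.2 0 * (Complex.normSq ζ) / S) := by
      rw [← mul_assoc, ← mul_pow]
    rw [e1]
    generalize qe μ P.2 w⁻¹ = qv at *
    generalize w⁻¹ * (starRingEnd ℂ) w⁻¹ = vc at *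
    generalize qe μ P.2 0 = q0 at *
    generalize (Complex.normSq ζ : ℂ) = nn at *
    clear_value S w
    field_simp
    linear_combination (-nn + nn * (P.1 * vc)) * hqv + S * hvv
  refine Cnt.transfer (fun ζ => ((τ : ℂ) * ζ) ^ D * Complex.normSq ζ /
      ∏ j, (1 - P.2 j * (τ * ζ)) ^ μ j) (fun ζ => ((τ : ℂ) * ζ)⁻¹) h1' ?_ ?_ ?_ ?_ ?_ ?_ ?_ ?_
  · intro z _ w _ _ _ h
    have hτc : (τ : ℂ) ≠ 0 := by exact_mod_cast hτ0.ne'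
    exact mul_left_cancel₀ hτc (inv_injective h)
  · intro z hz _
    have := hζ2 z hz.2
    have hz0 : z ≠ 0 := by rintro rfl; have := hz.1; norm_num at this
    have hzn := norm_pos_iff.2 hz0
    show V₀ < ‖((τ : ℂ) * z)⁻¹‖
    rw [norm_inv, norm_mul, Complex.norm_real, Real.norm_eq_abs, abs_of_pos hτ0,
      lt_inv_comm₀ hV0pos (by positivity), lt_inv_comm₀ (by positivity) hV0pos]
    rw [lt_inv_comm₀ hV0pos (by positivity)]
    rw [← one_div, lt_div_iff₀ hV0pos]
    have : τ * ‖z‖ * V₀ ≤ τ * 2 * V₀ := by gcongr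
    nlinarith
  · intro w hw hw0
    have hw' : V₀ < ‖w‖ := hw
    have hwne : w ≠ 0 := by rintro rfl; simp at hw'; linarith
    have hτc : (τ : ℂ) ≠ 0 := by exact_mod_cast hτ0.ne'
    refine ⟨((τ : ℂ) * w)⁻¹, ?_, by field_simp⟩
    have hqw : 3 * (‖κ‖ + 1) ≤ ‖qe μ P.2 w‖ := by
      have h5 : ∀ j, ‖w‖ - A ≤ ‖w - P.2 j‖ := by
        intro j
        have := norm_sub_norm_le w (P.2 j)
        have := h2 j
        linarith
      have h6 : 1 ≤ ‖w‖ - A := by linarith [norm_nonneg κ]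
      have h7 : (‖w‖ - A) ^ D ≤ ‖qe μ P.2 w‖ := by
        unfold qe
        rw [norm_prod, ← hD, ← Finset.prod_pow_eq_pow_sum]
        apply Finset.prod_le_prod
        · intro j _; positivity
        · intro j _
          rw [norm_pow]
          exact pow_le_pow_left₀ (by linarith) (h5 j) _
      have h8 : ‖w‖ - A ≤ (‖w‖ - A) ^ D := le_self_pow₀ h6 (by omega)
      linarith
    have hreal : ‖qe μ P.2 w‖ * |1 - P.1 * ‖w‖ ^ 2| = ‖qe μ P.2 0‖ := by
      have h5 : qe μ P.2 w * ((1 - P.1 * ‖w‖ ^ 2 : ℝ) : ℂ) = qe μ P.2 0 := by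
        have h6 : FF μ P.1 P.2 w = 0 := hw0
        unfold FF at h6
        rw [Complex.mul_conj, Complex.normSq_eq_norm_sq] at h6
        push_cast at h6 ⊢
        linear_combination h6
      rw [← h5, norm_mul, Complex.norm_real, Real.norm_eq_abs]
    have hlt : |1 - P.1 * ‖w‖ ^ 2| ≤ 1 / 3 := by
      by_contra hcon
      push Not at hcon
      nlinarith [norm_nonneg κ, abs_nonneg (1 - P.1 * ‖w‖ ^ 2)]
    obtain ⟨h5, h6⟩ := abs_le.1 hlt
    have h7 : Complex.normSq ((τ : ℂ) * w)⁻¹ = (P.1 * ‖w‖ ^ 2)⁻¹ := by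
      rw [Complex.normSq_eq_norm_sq, norm_inv, norm_mul, Complex.norm_real, Real.norm_eq_abs,
        abs_of_pos hτ0, inv_pow, mul_pow, hτ2]
    show 1 / 2 ≤ Complex.normSq ((τ : ℂ) * w)⁻¹ ∧ Complex.normSq ((τ : ℂ) * w)⁻¹ ≤ 3 / 2
    rw [h7]
    have h8 : 0 < P.1 * ‖w‖ ^ 2 := by linarith
    constructor
    · rw [le_inv_comm₀ (by norm_num) h8]; norm_num; linarith
    · rw [inv_le_comm₀ h8 (by norm_num)]; norm_num; linarith
  · intro z hz
    have hz0 : z ≠ 0 := by rintro rfl; have := hz.1; norm_num at this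
    have hτc : (τ : ℂ) ≠ 0 := by exact_mod_cast hτ0.ne'
    apply div_ne_zero
    · apply mul_ne_zero (pow_ne_zero _ (mul_ne_zero hτc hz0))
      exact_mod_cast (Complex.normSq_pos.2 hz0).ne'
    · exact hst z (hζ2 z hz.2)
  · intro z hz
    have h5 : DifferentiableAt ℝ (fun ζ : ℂ => (Complex.normSq ζ : ℂ)) z := by
      have := (hns.differentiable (by norm_num) ((τ, P.2), z)).comp z
        (hasFDerivAt_prodMk_right (τ, P.2) z).differentiableAt
      exact this
    have h6 : DifferentiableAt ℝ (fun ζ : ℂ => ∏ j, (1 - P.2 j * (τ * ζ)) ^ μ j) z := by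
      have := (hstarC.differentiable (by norm_num) ((τ, P.2), z)).comp z
        (hasFDerivAt_prodMk_right (τ, P.2) z).differentiableAt
      exact this
    have h7 := ((((differentiableAt_const (τ : ℂ)).mul differentiableAt_id).pow D).mul h5).mul
      (h6.fun_inv (hst z (hζ2 z hz.2)))
    simp only [div_eq_mul_inv]
    exact h7
  · intro z hz
    have hz0 : z ≠ 0 := by rintro rfl; have := hz.1; norm_num at this
    have hτc : (τ : ℂ) ≠ 0 := by exact_mod_cast hτ0.ne'
    exact ((differentiableAt_const _).mul differentiableAt_id).inv (mul_ne_zero hτc hz0)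
  · intro z hz
    exact FF_differentiable μ _ _ _
  · intro z hz
    have hz0 : z ≠ 0 := by rintro rfl; have := hz.1; norm_num at this
    have h5 : ∀ᶠ w : ℂ in 𝓝 z, ‖w‖ < 2 :=
      (continuous_norm.continuousAt).eventually_lt continuousAt_const (hζ2 z hz.2)
    filter_upwards [h5, eventually_ne_nhds hz0] with w h6 h7
    exact hid w h7 h6


def CoSm {E : Type*} [NormedAddCommGroup E] [NormedSpace ℝ E] (P : E → ℂ[X]) : Prop :=
  ∀ l, ContDiff ℝ 1 (fun u => (P u).coeff l)

section CoSm
variable {E : Type*} [NormedAddCommGroup E] [NormedSpace ℝ E]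

theorem CoSm.const (p : ℂ[X]) : CoSm (fun _ : E => p) := fun _ => contDiff_const

theorem CoSm.C {f : E → ℂ} (hf : ContDiff ℝ 1 f) : CoSm (fun u : E => C (f u)) := by
  intro l
  simp only [coeff_C]
  by_cases h : l = 0
  · simpa [h] using hf
  · simpa [h] using contDiff_const

theorem CoSm.add {P Q : E → ℂ[X]} (hP : CoSm P) (hQ : CoSm Q) : CoSm (fun u => P u + Q u) := by
  intro l
  simp only [coeff_add]
  exact (hP l).add (hQ l)

theorem CoSm.sub {P Q : E → ℂ[X]} (hP : CoSm P) (hQ : CoSm Q) : CoSm (fun u => P u - Q u) := by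
  intro l
  simp only [coeff_sub]
  exact (hP l).sub (hQ l)

theorem CoSm.mul {P Q : E → ℂ[X]} (hP : CoSm P) (hQ : CoSm Q) : CoSm (fun u => P u * Q u) := by
  intro l
  simp only [coeff_mul]
  exact ContDiff.sum fun i _ => (hP i.1).mul (hQ i.2)

theorem CoSm.pow {P : E → ℂ[X]} (hP : CoSm P) (n : ℕ) : CoSm (fun u => P u ^ n) := by
  induction n with
  | zero => simpa using CoSm.const 1
  | succ n ih => simpa only [pow_succ] using ih.mul hP

theorem CoSm.prod {ι : Type*} {P : ι → E → ℂ[X]} (s : Finset ι) (hP : ∀ i, CoSm (P i)) :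
    CoSm (fun u => ∏ i ∈ s, P i u) := by
  classical
  induction s using Finset.induction_on with
  | empty => simpa using CoSm.const 1
  | insert a s ha ih => simpa only [Finset.prod_insert ha] using (hP a).mul ih
end CoSm

/-- shifted polynomial -/
noncomputable def bp {ι : Type*} [Fintype ι] (μ : ι → ℕ) (t : ℝ) (x : ι → ℂ) (w : ℂ) : ℂ[X] :=
  (∏ j, (X + C (w - x j)) ^ μ j) * (1 - C (t * (starRingEnd ℂ) w) * (X + C w)) - C (qe μ x 0)

theorem bp_eval {ι : Type*} [Fintype ι] (μ : ι → ℕ) (t : ℝ) (x : ι → ℂ) (w ζ : ℂ) :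
    (bp μ t x w).eval ζ = qe μ x (w + ζ) * (1 - t * (starRingEnd ℂ) w * (w + ζ)) - qe μ x 0 := by
  unfold bp
  simp only [eval_sub, eval_mul, eval_prod, eval_pow, eval_add, eval_X, eval_C, eval_one]
  unfold qe
  congr 2
  · apply Finset.prod_congr rfl
    intro j _
    congr 1; ring
  · ring

theorem bp_natDegree {ι : Type*} [Fintype ι] (μ : ι → ℕ) (t : ℝ) (x : ι → ℂ) (w : ℂ) :
    (bp μ t x w).natDegree ≤ ∑ j, μ j + 1 := by
  unfold bp
  rw [sub_eq_add_neg _ (C (qe μ x 0)), ← C_neg, natDegree_add_C]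
  refine natDegree_mul_le.trans (add_le_add ?_ ?_)
  · refine (natDegree_prod_le _ _).trans (Finset.sum_le_sum fun j _ => ?_)
    refine natDegree_pow_le.trans ?_
    rw [natDegree_X_add_C, mul_one]
  · compute_degree

theorem bp_CoSm {ι : Type*} [Fintype ι] (μ : ι → ℕ) {E : Type*} [NormedAddCommGroup E]
    [NormedSpace ℝ E] {t : E → ℝ} {x : E → ι → ℂ} {w : E → ℂ} (ht : ContDiff ℝ 1 t)
    (hx : ContDiff ℝ 1 x) (hw : ContDiff ℝ 1 w) :
    CoSm (fun u => bp μ (t u) (x u) (w u)) := by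
  unfold bp
  have hxj : ∀ j, ContDiff ℝ 1 (fun u => x u j) := fun j => by fun_prop
  have htc : ContDiff ℝ 1 (fun u => (t u : ℂ)) := Complex.ofRealCLM.contDiff.comp ht
  refine CoSm.sub (CoSm.mul (CoSm.prod _ fun j => CoSm.pow
    (CoSm.add (CoSm.const X) (CoSm.C (hw.sub (hxj j)))) _) (CoSm.sub (CoSm.const 1)
    (CoSm.mul (CoSm.C (htc.mul (contDiff_conj.comp hw))) (CoSm.add (CoSm.const X) (CoSm.C hw)))))
    (CoSm.C ?_)
  exact (contDiff_qe μ).comp (f := fun u => (x u, (0 : ℂ))) (by fun_prop)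

theorem middle_count {ι σ : Type*} [Fintype ι] [Fintype σ] (μ : ι → ℕ) (x₀ : ι → ℂ) (L : ℂ[X])
    (hL : L.Separable) (ω₀ : σ → ℂ) (e : σ → ℕ) (he : ∀ i, 2 ≤ e i)
    (hfac : ∀ v, qe μ x₀ v - qe μ x₀ 0 = L.eval v * ∏ i, (v - ω₀ i) ^ e i)
    (δ V₀ : ℝ) (hδ : ∀ i v, ‖v - ω₀ i‖ ≤ δ → L.eval v ≠ 0) (hδ0 : 0 < δ)
    (hV : ∀ v, L.eval v = 0 → ‖v‖ < V₀) :
    ∀ᶠ P in 𝓝 ((0 : ℝ), x₀), Cnt (FF μ P.1 P.2)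
      (Metric.closedBall 0 V₀ \ ⋃ i, Metric.ball (ω₀ i) δ) L.natDegree := by
  set K : Set ℂ := Metric.closedBall 0 V₀ \ ⋃ i, Metric.ball (ω₀ i) δ with hK
  have hKc : IsCompact K := (isCompact_closedBall 0 V₀).diff
    (isOpen_iUnion fun i => Metric.isOpen_ball)
  have hF0 : ∀ v, FF μ 0 x₀ v = L.eval v * ∏ i, (v - ω₀ i) ^ e i := by
    intro v; rw [← hfac]; simp [FF]
  have hpr : ∀ v, L.eval v = 0 → ∏ i, (v - ω₀ i) ^ e i ≠ 0 := by
    intro v hv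
    rw [Finset.prod_ne_zero_iff]
    intro i _
    apply pow_ne_zero
    intro h
    exact hδ i v (by rw [h]; simpa using hδ0.le) hv
  have hzK : ∀ v ∈ K, (FF μ 0 x₀ v = 0 ↔ L.eval v = 0) := by
    intro v hv
    rw [hF0, mul_eq_zero]
    refine ⟨fun h => h.resolve_right ?_, Or.inl⟩
    rw [← ne_eq, Finset.prod_ne_zero_iff]
    intro i _
    apply pow_ne_zero
    intro h
    apply hv.2
    rw [Set.mem_iUnion]
    refine ⟨i, ?_⟩
    rw [sub_eq_zero.1 h]; exact Metric.mem_ball_self hδ0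
  have hint : ∀ v, L.eval v = 0 → v ∈ interior K := by
    intro v hv
    have hopen : IsOpen (Metric.ball (0 : ℂ) V₀ \ ⋃ i, Metric.closedBall (ω₀ i) δ) :=
      Metric.isOpen_ball.sdiff (isClosed_iUnion_of_finite fun i => Metric.isClosed_closedBall)
    apply interior_maximal _ hopen
    · refine ⟨by simpa using hV v hv, ?_⟩
      rw [Set.mem_iUnion]
      rintro ⟨i, hi⟩
      rw [Metric.mem_closedBall, dist_eq_norm] at hi
      exact hδ i v hi hv
    · exact Set.sdiff_subset_sdiff Metric.ball_subset_closedBall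
        (Set.iUnion_mono fun i => Metric.ball_subset_closedBall)
  have hL0 : L ≠ 0 := hL.ne_zero
  have := CL (fun u : (ℝ × (ι → ℂ)) × ℂ => FF μ u.1.1 u.1.2 u.2) K hKc (0, x₀) L.natDegree
    (fun v _ => (contDiff_FF μ).continuous.continuousAt)
    (fun v hv h0 => ⟨(contDiff_FF μ).contDiffAt, hint v ((hzK v hv).1 h0)⟩) (by
      refine ⟨?_, ?_⟩
      · have hset : {z | z ∈ K ∧ FF μ 0 x₀ z = 0} = L.rootSet ℂ := by
          ext z
          rw [mem_rootSet_of_ne hL0]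
          constructor
          · rintro ⟨h1, h2⟩
            simpa using (hzK z h1).1 h2
          · intro h
            have h' : L.eval z = 0 := by simpa using h
            exact ⟨interior_subset (hint z h'), by rw [hF0, h', zero_mul]⟩
        show {z | z ∈ K ∧ FF μ 0 x₀ z = 0}.encard = _
        rw [hset, ← card_rootSet_eq_natDegree (K := ℂ) hL (IsAlgClosed.splits_domain _),
          Set.encard_eq_coe_toFinset_card, Set.toFinset_card]
      · intro v hv h0
        have hv0 := (hzK v hv).1 h0
        have hd : HasDerivAt (fun v => (L * ∏ i, (X - C (ω₀ i)) ^ e i).eval v)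
          ((derivative (L * ∏ i, (X - C (ω₀ i)) ^ e i)).eval v) v := Polynomial.hasDerivAt _ v
        have heq : (fun v => (L * ∏ i, (X - C (ω₀ i)) ^ e i).eval v) = FF μ 0 x₀ := by
          ext v; rw [hF0]; simp [eval_prod]
        rw [heq] at hd
        refine ⟨_, hd.complexToReal_fderiv, ?_⟩
        have hne : (derivative (L * ∏ i, (X - C (ω₀ i)) ^ e i)).eval v ≠ 0 := by
          rw [derivative_mul, eval_add, eval_mul, eval_mul, hv0, zero_mul, add_zero]
          apply mul_ne_zero
          · exact hL.eval₂_derivative_ne_zero (RingHom.id ℂ) (by simpa using hv0)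
          · simpa [eval_prod] using hpr v hv0
        generalize (derivative (L * ∏ i, (X - C (ω₀ i)) ^ e i)).eval v = c at hne
        intro a b hab
        simpa [hne] using hab)
  filter_upwards [this] with P hP
  exact hP.1

theorem near_count {ι : Type*} [Fintype ι] (μ : ι → ℕ) (x₀ : ι → ℂ) (w₀ : ℂ) (hw₀ : w₀ ≠ 0)
    (e : ℕ) (he : 2 ≤ e) (ha : (bp μ 0 x₀ w₀).coeff e ≠ 0) (hκ : qe μ x₀ w₀ ≠ 0) :
    ∃ δ₁ : ℝ, 0 < δ₁ ∧ ∀ δ : ℝ, 0 < δ → δ ≤ δ₁ →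
      ∀ᶠ P in 𝓝 (((0 : ℝ), x₀, w₀) : ℝ × (ι → ℂ) × ℂ), 0 < P.1 →
        (∀ l < e, (bp μ P.1 P.2.1 P.2.2).coeff l = 0) →
        Cnt (FF μ P.1 P.2.1) (Metric.ball w₀ δ) (e + 2) := by
  set D := ∑ j, μ j with hD
  set P₀ : ℝ × (ι → ℂ) × ℂ := ((0 : ℝ), x₀, w₀) with hP₀
  set hh : (ℝ × (ι → ℂ) × ℂ) × ℂ → ℂ := fun u =>
    ∑ l ∈ Finset.range (D + 2), (bp μ u.1.1 u.1.2.1 u.1.2.2).coeff (e + l) * u.2 ^ l with hhdef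
  have hhC : ContDiff ℝ 1 hh := by
    have hb : CoSm (fun u : (ℝ × (ι → ℂ) × ℂ) × ℂ => bp μ u.1.1 u.1.2.1 u.1.2.2) :=
      bp_CoSm μ (by fun_prop) (by fun_prop) (by fun_prop)
    exact ContDiff.sum fun l _ => (hb (e + l)).mul (contDiff_snd.pow l)
  set qq : (ℝ × (ι → ℂ) × ℂ) × ℂ → ℂ := fun u =>
    (u.1.2.2 + u.2) * qe μ u.1.2.1 (u.1.2.2 + u.2) with hqdef
  have hqC : ContDiff ℝ 1 qq := by
    have h1 : ContDiff ℝ 1 (fun u : (ℝ × (ι → ℂ) × ℂ) × ℂ => u.1.2.2 + u.2) := by fun_prop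
    exact h1.mul ((contDiff_qe μ).comp
      (f := fun u : (ℝ × (ι → ℂ) × ℂ) × ℂ => (u.1.2.1, u.1.2.2 + u.2)) (by fun_prop))
  have hid : ∀ (P : ℝ × (ι → ℂ) × ℂ) (ζ : ℂ), (∀ l < e, (bp μ P.1 P.2.1 P.2.2).coeff l = 0) →
      FF μ P.1 P.2.1 (P.2.2 + ζ) = ζ ^ e * hh (P, ζ) - P.1 * qq (P, ζ) * (starRingEnd ℂ) ζ := by
    intro P ζ hl
    have h1 : (bp μ P.1 P.2.1 P.2.2).eval ζ = ζ ^ e * hh (P, ζ) := by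
      rw [eval_eq_sum_range' (n := e + (D + 2))
        (by have := bp_natDegree μ P.1 P.2.1 P.2.2; omega), Finset.sum_range_add,
        Finset.sum_eq_zero, zero_add, hhdef, Finset.mul_sum]
      · apply Finset.sum_congr rfl
        intro l _
        simp only
        rw [pow_add]; ring
      · intro l hl'
        rw [hl l (Finset.mem_range.1 hl'), zero_mul]
    rw [← h1, bp_eval]
    simp only [FF, hqdef, map_add]
    ring
  set a := (bp μ 0 x₀ w₀).coeff e with hadef
  set b := w₀ * qe μ x₀ w₀ with hbdef
  have hb0 : b ≠ 0 := mul_ne_zero hw₀ hκ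
  have hha : hh (P₀, 0) = a := by
    simp only [hhdef, hP₀]
    rw [Finset.sum_eq_single 0]
    · simp [hadef]
    · intro l _ hl; simp [hl]
    · simp
  have hqb : qq (P₀, 0) = b := by simp [hqdef, hP₀, hbdef]
  have hap := norm_pos_iff.2 ha
  have hbp := norm_pos_iff.2 hb0
  -- uniform estimates
  have hest : ∀ᶠ u in 𝓝 ((P₀, 0) : (ℝ × (ι → ℂ) × ℂ) × ℂ),
      ‖a‖ / 2 < ‖hh u‖ ∧ ‖qq u‖ < ‖b‖ + 1 := by
    refine Eventually.and ?_ ?_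
    · apply continuousAt_const.eventually_lt hhC.continuous.norm.continuousAt
      rw [hha]; linarith
    · apply hqC.continuous.norm.continuousAt.eventually_lt continuousAt_const
      rw [hqb]; linarith
  rw [nhds_prod_eq, eventually_prod_iff] at hest
  obtain ⟨pa, hpa, pb, hpb, hest⟩ := hest
  obtain ⟨δ₂, hδ₂, hball⟩ := Metric.eventually_nhds_iff.1 hpb
  refine ⟨δ₂ / 2, by positivity, ?_⟩
  intro δ hδ hδle
  set Cc : ℝ := 2 * (‖b‖ + 1) / ‖a‖ with hCc
  set R : ℝ := max 1 Cc + 1 with hR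
  have hRpos : 0 < R := by positivity
  have hRbound : ∀ r : ℝ, 0 ≤ r → r ^ (e - 1) ≤ Cc → r < R := by
    intro r hr h
    by_contra hcon
    push Not at hcon
    have h1 : 1 ≤ r := by have := le_max_left 1 Cc; linarith
    have h2 : r ≤ r ^ (e - 1) := le_self_pow₀ h1 (by omega)
    have := le_max_right 1 Cc
    linarith
  set G : (ℝ × (ℝ × (ι → ℂ) × ℂ)) × ℂ → ℂ := fun u =>
    u.2 ^ e * hh (u.1.2, u.1.1 * u.2) - qq (u.1.2, u.1.1 * u.2) * (starRingEnd ℂ) u.2 with hG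
  have hGC : ContDiff ℝ 1 G := by
    have h1 : ContDiff ℝ 1 (fun u : (ℝ × (ℝ × (ι → ℂ) × ℂ)) × ℂ => (u.1.1 : ℂ)) :=
      Complex.ofRealCLM.contDiff.comp (contDiff_fst.comp contDiff_fst)
    have h2 : ContDiff ℝ 1 (fun u : (ℝ × (ℝ × (ι → ℂ) × ℂ)) × ℂ => (u.1.2, (u.1.1 : ℂ) * u.2)) :=
      (contDiff_snd.comp contDiff_fst).prodMk (h1.mul contDiff_snd)
    exact ((contDiff_snd.pow e).mul (hhC.comp h2)).sub
      ((hqC.comp h2).mul (contDiff_conj.comp contDiff_snd))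
  have hG0 : ∀ Z, G ((0, P₀), Z) = a * Z ^ e - b * (starRingEnd ℂ) Z := by
    intro Z
    simp only [hG]
    rw [Complex.ofReal_zero, zero_mul, hha, hqb]; ring
  have hGz : ∀ Z, a * Z ^ e - b * (starRingEnd ℂ) Z = 0 → ‖Z‖ < R := by
    intro Z hZ
    by_cases hZ0 : Z = 0
    · subst hZ0; simpa using hRpos
    have hZn := norm_pos_iff.2 hZ0
    apply hRbound _ hZn.le
    have h3 : ‖a * Z ^ e‖ = ‖b * (starRingEnd ℂ) Z‖ := by rw [sub_eq_zero.1 hZ]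
    rw [norm_mul, norm_mul, norm_pow, RCLike.norm_conj] at h3
    have h4 : ‖a‖ * ‖Z‖ ^ (e - 1) = ‖b‖ := by
      apply mul_right_cancel₀ hZn.ne'
      rw [← h3]
      conv_rhs => rw [show e = (e - 1) + 1 by omega, pow_succ]
      ring
    rw [hCc, le_div_iff₀ hap]
    linarith
  have hCL := CL G (Metric.closedBall 0 R) (isCompact_closedBall 0 R) (0, P₀) (e + 2)
    (fun v _ => hGC.continuous.continuousAt)
    (fun v _ h0 => ⟨hGC.contDiffAt, by
      rw [hG0] at h0
      apply interior_maximal Metric.ball_subset_closedBall Metric.isOpen_ball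
      simpa using hGz v h0⟩)
    (by
      have h1 : (fun v => G ((0, P₀), v)) = fun Z => a * Z ^ e - b * (starRingEnd ℂ) Z :=
        funext hG0
      rw [h1]
      refine (near_limit a b ha hb0 e he).congr_set fun z hz => ?_
      simpa using (hGz z hz).le)
  have he1 : (0 : ℝ) < 1 / ((e - 1 : ℕ) : ℝ) := by
    have : 0 < e - 1 := by omega
    positivity
  have hs : Tendsto (fun P : ℝ × (ι → ℂ) × ℂ => (P.1 ^ (1 / ((e - 1 : ℕ) : ℝ)), P)) (𝓝 P₀)
      (𝓝 (0, P₀)) := by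
    have h1 : ContinuousAt (fun P : ℝ × (ι → ℂ) × ℂ => P.1 ^ (1 / ((e - 1 : ℕ) : ℝ))) P₀ :=
      (Real.continuousAt_rpow_const _ _ (Or.inr he1.le)).comp continuousAt_fst
    have h2 : ContinuousAt (fun P : ℝ × (ι → ℂ) × ℂ => (P.1 ^ (1 / ((e - 1 : ℕ) : ℝ)), P)) P₀ :=
      h1.prodMk continuousAt_id
    have h3 := h2.tendsto
    simp only [hP₀, Real.zero_rpow he1.ne'] at h3
    exact h3
  have hsm : ∀ᶠ P in 𝓝 P₀, ‖P.2.2 - w₀‖ + P.1 ^ (1 / ((e - 1 : ℕ) : ℝ)) * R < δ := by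
    have h1 : ContinuousAt (fun P : ℝ × (ι → ℂ) × ℂ => P.1 ^ (1 / ((e - 1 : ℕ) : ℝ))) P₀ :=
      (Real.continuousAt_rpow_const _ _ (Or.inr he1.le)).comp continuousAt_fst
    have h2 : ContinuousAt (fun P : ℝ × (ι → ℂ) × ℂ => ‖P.2.2 - w₀‖) P₀ := by fun_prop
    apply (h2.add (h1.mul continuousAt_const)).eventually_lt continuousAt_const
    simp [hP₀, Real.zero_rpow (show ((e - 1 : ℕ) : ℝ)⁻¹ ≠ 0 by simpa using he1.ne'), hδ]
  filter_upwards [hs.eventually hCL, hsm, hpa] with P h1 h2 h3 hP hlow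
  set s := P.1 ^ (1 / ((e - 1 : ℕ) : ℝ)) with hsdef
  have hs0 : 0 < s := Real.rpow_pos_of_pos hP _
  have hst : s ^ (e - 1) = P.1 := by
    rw [hsdef, ← Real.rpow_natCast, ← Real.rpow_mul hP.le, one_div_mul_cancel, Real.rpow_one]
    have : 0 < e - 1 := by omega
    positivity
  have hsc : (s : ℂ) ≠ 0 := by exact_mod_cast hs0.ne'
  have hste : (P.1 : ℂ) * s = (s : ℂ) ^ e := by
    rw [← hst]; push_cast
    rw [← pow_succ]; congr 1; omega
  have hid' : ∀ Z, FF μ P.1 P.2.1 (P.2.2 + s * Z) = (s : ℂ) ^ e * G ((s, P), Z) := by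
    intro Z
    rw [hid P _ hlow]
    simp only [hG, map_mul, Complex.conj_ofReal, mul_pow]
    linear_combination (-qq (P, s * Z) * (starRingEnd ℂ) Z) * hste
  refine Cnt.transfer (fun _ => ((s : ℂ) ^ e)⁻¹) (fun Z => P.2.2 + s * Z) h1.1
    ?_ ?_ ?_ ?_ ?_ ?_ ?_ ?_
  · intro z _ w _ _ _ h
    exact mul_left_cancel₀ hsc (add_left_cancel h)
  · intro z hz _
    rw [Metric.mem_ball, dist_eq_norm]
    have h5 : ‖z‖ ≤ R := by simpa using hz
    calc ‖P.2.2 + s * z - w₀‖ = ‖(P.2.2 - w₀) + s * z‖ := by congr 1; ring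
      _ ≤ ‖P.2.2 - w₀‖ + ‖(s : ℂ) * z‖ := norm_add_le _ _
      _ ≤ ‖P.2.2 - w₀‖ + s * R := by
        rw [norm_mul, Complex.norm_real, Real.norm_eq_abs, abs_of_pos hs0]; gcongr
      _ < δ := h2
  · intro v hv hv0
    set Z := (v - P.2.2) / s with hZ
    have hvZ : P.2.2 + s * Z = v := by rw [hZ]; field_simp; ring
    refine ⟨Z, ?_, hvZ⟩
    rw [Metric.mem_closedBall, dist_zero_right]
    by_cases hZ0 : Z = 0
    · rw [hZ0]; simpa using hRpos.le
    have hZn := norm_pos_iff.2 hZ0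
    apply le_of_lt
    apply hRbound _ hZn.le
    have hsZ : dist (s * Z) 0 < δ₂ := by
      rw [dist_zero_right]
      have h5 : (s : ℂ) * Z = (v - w₀) - (P.2.2 - w₀) := by rw [← hvZ]; ring
      rw [Metric.mem_ball, dist_eq_norm] at hv
      rw [h5]
      have h6 := norm_sub_le (v - w₀) (P.2.2 - w₀)
      have h7 : 0 < s * R := by positivity
      linarith
    obtain ⟨h5, h6⟩ := hest h3 (hball hsZ)
    have h7 : G ((s, P), Z) = 0 := by
      have := hid' Z
      rw [hvZ, hv0] at this
      exact (mul_eq_zero.1 this.symm).resolve_left (pow_ne_zero _ hsc)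
    have h8 : ‖Z ^ e * hh (P, s * Z)‖ = ‖qq (P, s * Z) * (starRingEnd ℂ) Z‖ := by
      have := sub_eq_zero.1 h7
      simp only at this
      rw [this]
    rw [norm_mul, norm_mul, norm_pow, RCLike.norm_conj] at h8
    have h9 : ‖Z‖ ^ (e - 1) * ‖hh (P, s * Z)‖ = ‖qq (P, s * Z)‖ := by
      apply mul_right_cancel₀ hZn.ne'
      rw [← h8]
      conv_rhs => rw [show e = (e - 1) + 1 by omega, pow_succ]
      ring
    rw [hCc, le_div_iff₀ hap]
    have h10 : 0 < ‖Z‖ ^ (e - 1) := by positivity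
    nlinarith
  · intro z _; exact inv_ne_zero (pow_ne_zero _ hsc)
  · intro z _; exact differentiableAt_const _
  · intro z _; exact ((differentiableAt_const _).add ((differentiableAt_const _).mul differentiableAt_id))
  · intro z _; exact FF_differentiable μ _ _ _
  · intro z _
    apply Eventually.of_forall
    intro w
    rw [hid' w, ← mul_assoc, inv_mul_cancel₀ (pow_ne_zero _ hsc), one_mul]


theorem bp_coeff_ne {ι σ : Type*} [Fintype ι] [Fintype σ] (μ : ι → ℕ) (x₀ : ι → ℂ) (L : ℂ[X])
    (ω₀ : σ → ℂ) (e : σ → ℕ)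
    (hfac : ∀ v, qe μ x₀ v - qe μ x₀ 0 = L.eval v * ∏ i, (v - ω₀ i) ^ e i)
    (hω : Function.Injective ω₀) (hLω : ∀ i, L.eval (ω₀ i) ≠ 0) (i : σ) :
    (∀ l < e i, (bp μ 0 x₀ (ω₀ i)).coeff l = 0) ∧ (bp μ 0 x₀ (ω₀ i)).coeff (e i) ≠ 0 := by
  classical
  set R : ℂ[X] := L.comp (X + C (ω₀ i)) * ∏ k ∈ Finset.univ.erase i, (X + C (ω₀ i) - C (ω₀ k)) ^ e k
    with hR
  have h : bp μ 0 x₀ (ω₀ i) = X ^ e i * R := by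
    apply Polynomial.funext
    intro ζ
    rw [bp_eval, hR]
    have := hfac (ω₀ i + ζ)
    rw [← Finset.mul_prod_erase _ _ (Finset.mem_univ i)] at this
    simp only [Complex.ofReal_zero, zero_mul, sub_zero, mul_one, this, eval_mul, eval_pow, eval_X,
      eval_comp, eval_add, eval_C, eval_prod, eval_sub]
    rw [show ω₀ i + ζ - ω₀ i = ζ by ring, add_comm ζ (ω₀ i)]
    ring
  constructor
  · intro l hl
    rw [h, coeff_X_pow_mul', if_neg (by omega)]
  · rw [h, coeff_X_pow_mul', if_pos le_rfl, Nat.sub_self, coeff_zero_eq_eval_zero, hR]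
    simp only [eval_mul, eval_comp, eval_add, eval_X, eval_C, eval_prod, eval_pow, eval_sub, zero_add]
    refine mul_ne_zero (hLω i) (Finset.prod_ne_zero_iff.2 fun k hk => pow_ne_zero _ ?_)
    rw [sub_ne_zero]
    intro hh
    exact (Finset.ne_of_mem_erase hk) (hω hh).symm

theorem assembly {ι σ : Type*} [Fintype ι] [Fintype σ] (μ : ι → ℕ) (D : ℕ) (hD : ∑ j, μ j = D)
    (hD1 : 1 ≤ D) (x₀ : ι → ℂ) (L : ℂ[X])
    (hL : L.Separable) (ω₀ : σ → ℂ) (e : σ → ℕ) (he : ∀ i, 2 ≤ e i)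
    (hfac : ∀ v, qe μ x₀ v - qe μ x₀ 0 = L.eval v * ∏ i, (v - ω₀ i) ^ e i)
    (hω : Function.Injective ω₀) (hω0 : ∀ i, ω₀ i ≠ 0) (hLω : ∀ i, L.eval (ω₀ i) ≠ 0)
    (hκ : qe μ x₀ 0 ≠ 0) :
    ∀ᶠ P in 𝓝 (((0 : ℝ), x₀, ω₀) : ℝ × (ι → ℂ) × (σ → ℂ)), 0 < P.1 →
      (∀ i, ∀ l < e i, (bp μ P.1 P.2.1 (P.2.2 i)).coeff l = 0) →
      Cnt (FF μ P.1 P.2.1) Set.univ (2 * D + ∑ i, (e i + 2) + L.natDegree) := by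
  classical
  obtain ⟨V₁, hV₁, hout⟩ := outer_count μ D hD hD1 x₀ hκ
  have hκω : ∀ i, qe μ x₀ (ω₀ i) ≠ 0 := by
    intro i
    have h := hfac (ω₀ i)
    rw [← Finset.mul_prod_erase _ _ (Finset.mem_univ i), sub_self,
      zero_pow (by have := he i; omega), zero_mul, mul_zero, sub_eq_zero] at h
    rw [h]; exact hκ
  have hnear := fun i => near_count μ x₀ (ω₀ i) (hω0 i) (e i) (he i)
    (bp_coeff_ne μ x₀ L ω₀ e hfac hω hLω i).2 (hκω i)
  choose δ₁ hδ₁ hnear using hnear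
  have hδex : ∀ᶠ δ : ℝ in 𝓝[>] 0, (∀ i, δ ≤ δ₁ i) ∧ (∀ i v, ‖v - ω₀ i‖ ≤ δ → L.eval v ≠ 0) ∧
      (∀ i j, i ≠ j → δ + δ ≤ dist (ω₀ i) (ω₀ j)) ∧ 0 < δ := by
    refine Filter.Eventually.and ?_ (Filter.Eventually.and ?_ (Filter.Eventually.and ?_ ?_))
    · rw [eventually_all]
      intro i
      exact mem_nhdsWithin_of_mem_nhds (Iic_mem_nhds (hδ₁ i))
    · rw [eventually_all]
      intro i
      have : ∀ᶠ v in 𝓝 (ω₀ i), L.eval v ≠ 0 := L.continuous.continuousAt.eventually_ne (hLω i)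
      rw [Metric.eventually_nhds_iff] at this
      obtain ⟨ε, hε, h⟩ := this
      have h2 : ∀ᶠ δ : ℝ in 𝓝[>] 0, δ < ε := mem_nhdsWithin_of_mem_nhds (Iio_mem_nhds hε)
      filter_upwards [h2] with δ hδ v hv
      apply h
      rw [dist_eq_norm]; linarith
    · rw [eventually_all]; intro i
      rw [eventually_all]; intro j
      by_cases hij : i = j
      · simp [hij]
      have hd : 0 < dist (ω₀ i) (ω₀ j) := dist_pos.2 fun h => hij (hω h)
      have h2 : ∀ᶠ δ : ℝ in 𝓝[>] 0, δ < dist (ω₀ i) (ω₀ j) / 2 :=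
        mem_nhdsWithin_of_mem_nhds (Iio_mem_nhds (by positivity))
      filter_upwards [h2] with δ hδ _
      linarith
    · exact self_mem_nhdsWithin
  obtain ⟨δ, hδ1, hδ2, hδ3, hδ0⟩ := hδex.exists
  have hL0 : L ≠ 0 := hL.ne_zero
  obtain ⟨V₀, hV0a, hV0b, hV0c⟩ : ∃ V₀ : ℝ, V₁ ≤ V₀ ∧ (∀ v, L.eval v = 0 → ‖v‖ < V₀) ∧
      ∀ i, ‖ω₀ i‖ + δ ≤ V₀ := by
    have h1 : ∀ᶠ V : ℝ in atTop, V₁ ≤ V ∧ (∀ v ∈ L.roots.toFinset, ‖v‖ < V) ∧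
      ∀ i, ‖ω₀ i‖ + δ ≤ V := by
      refine Filter.Eventually.and (eventually_ge_atTop _) (Filter.Eventually.and ?_ ?_)
      · rw [Finset.eventually_all]
        intro v _
        exact eventually_gt_atTop _
      · rw [eventually_all]; intro i
        exact eventually_ge_atTop _
    obtain ⟨V, a, b, c⟩ := h1.exists
    refine ⟨V, a, fun v hv => b v ?_, c⟩
    simp [hL0, hv]
  have hmid := middle_count μ x₀ L hL ω₀ e he hfac δ V₀ hδ2 hδ0 hV0b
  have hout := hout V₀ hV0a
  have hc1 : Tendsto (fun P : ℝ × (ι → ℂ) × (σ → ℂ) => (P.1, P.2.1)) (𝓝 ((0 : ℝ), x₀, ω₀))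
      (𝓝 ((0 : ℝ), x₀)) := by
    have : Continuous (fun P : ℝ × (ι → ℂ) × (σ → ℂ) => (P.1, P.2.1)) := by fun_prop
    exact this.tendsto _
  have hc2 : ∀ i, Tendsto (fun P : ℝ × (ι → ℂ) × (σ → ℂ) => (P.1, P.2.1, P.2.2 i))
      (𝓝 ((0 : ℝ), x₀, ω₀)) (𝓝 ((0 : ℝ), x₀, ω₀ i)) := by
    intro i
    have : Continuous (fun P : ℝ × (ι → ℂ) × (σ → ℂ) => (P.1, P.2.1, P.2.2 i)) := by fun_prop
    exact this.tendsto _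
  have hnear' := eventually_all.2 fun i => (hc2 i).eventually (hnear i δ hδ0 (hδ1 i))
  filter_upwards [hc1.eventually hmid, hc1.eventually hout, hnear'] with P h1 h2 h3 hP hlow
  have h3' := Cnt.biUnion (fun i => h3 i hP (hlow i)) (fun i j hij => Metric.ball_disjoint_ball
    (hδ3 i j hij)) Finset.univ
  have h2' := h2 hP
  simp only [Finset.mem_univ, Set.iUnion_true] at h3'
  have hsub : (⋃ i, Metric.ball (ω₀ i) δ) ⊆ Metric.closedBall 0 V₀ := by
    refine Set.iUnion_subset fun i v hv => ?_
    simp only [Metric.mem_ball, dist_eq_norm, Metric.mem_closedBall, sub_zero] at hv ⊢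
    have := norm_sub_norm_le v (ω₀ i)
    have := hV0c i
    linarith
  have hd1 : Disjoint {v : ℂ | V₀ < ‖v‖} (⋃ i, Metric.ball (ω₀ i) δ) := by
    rw [Set.disjoint_left]
    intro v hv hv2
    have := hsub hv2
    simp at this hv
    linarith
  have h4 := h2'.union h3' hd1
  have h5 := h4.union h1 (by
    rw [Set.disjoint_left]
    rintro v hv ⟨hv2, hv3⟩
    rcases hv with hv | hv
    · simp at hv hv2; linarith
    · exact hv3 hv)
  refine h5.congr_set fun z _ => ⟨fun _ => ?_, fun _ => trivial⟩
  by_cases hz : V₀ < ‖z‖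
  · exact Or.inl (Or.inl hz)
  · by_cases hz2 : z ∈ (⋃ i, Metric.ball (ω₀ i) δ)
    · exact Or.inl (Or.inr hz2)
    · exact Or.inr ⟨by simpa using hz, hz2⟩


noncomputable def Qp {ι : Type*} [Fintype ι] (μ : ι → ℕ) (x : ι → ℂ) : ℂ[X] :=
  ∏ j, (X - C (x j)) ^ μ j

theorem Qp_eval {ι : Type*} [Fintype ι] (μ : ι → ℕ) (x : ι → ℂ) (v : ℂ) :
    (Qp μ x).eval v = qe μ x v := by
  simp [Qp, qe, eval_prod]

noncomputable def Nt {ι : Type*} [Fintype ι] [DecidableEq ι] (μ : ι → ℕ) (x δ : ι → ℂ) : ℂ[X] :=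
  ∑ j, C (μ j * δ j) * ((X - C (x j)) ^ (μ j - 1) *
    ∏ k ∈ Finset.univ.erase j, (X - C (x k)) ^ μ k)

theorem Nt_eq {ι : Type*} [Fintype ι] [DecidableEq ι] (μ : ι → ℕ) (hμ : ∀ j, 0 < μ j)
    (x δ : ι → ℂ) :
    Nt μ x δ = (∏ j, (X - C (x j)) ^ (μ j - 1)) *
      ∑ j, C (μ j * δ j) * ∏ k ∈ Finset.univ.erase j, (X - C (x k)) := by
  unfold Nt
  rw [Finset.mul_sum]
  refine Finset.sum_congr rfl fun j _ => ?_
  rw [← Finset.mul_prod_erase _ (fun j => (X - C (x j)) ^ (μ j - 1)) (Finset.mem_univ j)]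
  have : ∏ k ∈ Finset.univ.erase j, (X - C (x k)) ^ μ k =
      (∏ k ∈ Finset.univ.erase j, (X - C (x k)) ^ (μ k - 1)) *
      ∏ k ∈ Finset.univ.erase j, (X - C (x k)) := by
    rw [← Finset.prod_mul_distrib]
    refine Finset.prod_congr rfl fun k _ => ?_
    rw [← pow_succ, Nat.sub_add_cancel (hμ k)]
  rw [this]; ring

theorem Qp_derivative {ι : Type*} [Fintype ι] [DecidableEq ι] (μ : ι → ℕ) (x : ι → ℂ) :
    derivative (Qp μ x) = Nt μ x (fun _ => 1) := by
  unfold Qp Nt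
  rw [derivative_prod_finset]
  refine Finset.sum_congr rfl fun j _ => ?_
  rw [derivative_X_sub_C_pow]
  simp only [mul_one]
  ring

theorem lagr {ι : Type*} [Fintype ι] [DecidableEq ι] (μ : ι → ℕ) (hμ : ∀ j, 0 < μ j)
    (x : ι → ℂ) (hx : Function.Injective x) (N : ℂ[X]) (hN : N.degree < Fintype.card ι) :
    ∃ δ : ι → ℂ, N = ∑ j, C (μ j * δ j) * ∏ k ∈ Finset.univ.erase j, (X - C (x k)) := by
  have hne : ∀ j, ∏ k ∈ Finset.univ.erase j, (x j - x k) ≠ 0 := by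
    intro j
    refine Finset.prod_ne_zero_iff.2 fun k hk => sub_ne_zero.2 fun h => ?_
    exact (Finset.ne_of_mem_erase hk) (hx h).symm
  have hμ' : ∀ j, (μ j : ℂ) ≠ 0 := fun j => Nat.cast_ne_zero.2 (hμ j).ne'
  refine ⟨fun j => N.eval (x j) / (μ j * ∏ k ∈ Finset.univ.erase j, (x j - x k)), ?_⟩
  refine eq_of_degrees_lt_of_eval_index_eq Finset.univ hx.injOn (by simpa using hN) ?_ ?_
  · refine (degree_sum_le _ _).trans_lt ?_
    rw [Finset.sup_lt_iff (by simp [bot_lt_iff_ne_bot])]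
    intro j _
    have hp : 0 < Fintype.card ι := Fintype.card_pos_iff.2 ⟨j⟩
    refine (degree_mul_le _ _).trans_lt ?_
    refine (add_le_add degree_C_le le_rfl).trans_lt ?_
    rw [zero_add, degree_prod]
    simp only [degree_X_sub_C, Finset.sum_const, Finset.card_univ, nsmul_eq_mul, mul_one]
    rw [Finset.card_erase_of_mem (Finset.mem_univ j), Finset.card_univ]
    exact_mod_cast Nat.sub_lt hp one_pos
  · intro i _
    rw [eval_finsetSum, Finset.sum_eq_single i]
    · simp only [eval_mul, eval_C, eval_prod, eval_sub, eval_X]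
      have := hne i
      have := hμ' i
      field_simp
    · intro j _ hj
      rw [eval_mul, eval_prod, Finset.prod_eq_zero (i := i)]
      · simp
      · simp [hj.symm]
      · simp
    · simp

theorem surj_alg {ι σ : Type*} [Fintype ι] [DecidableEq ι] [Fintype σ] (μ : ι → ℕ)
    (hμ : ∀ j, 0 < μ j) (x : ι → ℂ) (hx : Function.Injective x) (ω : σ → ℂ)
    (hω : Function.Injective ω) (hω0 : ∀ i, ω i ≠ 0) (hQω : ∀ i, qe μ x (ω i) ≠ 0)
    (e : σ → ℕ) (he : ∀ i, 1 ≤ e i)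
    (hord : ∀ i, ∃ A : ℂ[X], derivative (Qp μ x) = (X - C (ω i)) ^ (e i - 1) * A ∧ A.eval (ω i) ≠ 0)
    (hcard : ∑ i, (e i - 1) + 1 = Fintype.card ι) (c : σ → ℕ → ℂ) :
    ∃ (δ : ι → ℂ) (ν : σ → ℂ), (Nt μ x δ).eval 0 = 0 ∧ ∀ i, ∀ l < e i,
      ((C (ν i) * derivative (Qp μ x) - Nt μ x δ).comp (X + C (ω i))).coeff l = c i l := by
  set W : ℂ[X] := ∏ j, (X - C (x j)) ^ (μ j - 1) with hW
  have hne : ∀ i j, ω i ≠ x j := by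
    intro i j h
    apply hQω i
    unfold qe
    refine Finset.prod_eq_zero (Finset.mem_univ j) ?_
    rw [h, sub_self, zero_pow (hμ j).ne']
  have hcop0 : ∀ i, IsCoprime (X * W) (X - C (ω i)) := by
    intro i
    refine IsCoprime.mul_left ?_ ?_
    · have := isCoprime_X_sub_C_of_isUnit_sub (a := (0 : ℂ)) (b := ω i) (by
        simpa using hω0 i)
      simpa using this
    · refine IsCoprime.prod_left fun j _ => IsCoprime.pow_left ?_
      exact isCoprime_X_sub_C_of_isUnit_sub (isUnit_iff_ne_zero.2 (sub_ne_zero.2 (hne i j).symm))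
  have hcop : ∀ i, IsCoprime (X * W) ((X - C (ω i)) ^ (e i - 1)) := fun i => (hcop0 i).pow_right
  choose a b hab using hcop
  set Ci : σ → ℂ[X] := fun i => ∑ l ∈ Finset.range (e i), C (c i l) * (X - C (ω i)) ^ l with hCi
  have hpair : Pairwise (Function.onFun IsCoprime
      (fun i => Ideal.span {(X - C (ω i)) ^ (e i - 1)})) := by
    intro i j hij
    rw [Function.onFun, Ideal.isCoprime_span_singleton_iff]
    exact (isCoprime_X_sub_C_of_isUnit_sub (isUnit_iff_ne_zero.2 (sub_ne_zero.2
      fun h => hij (hω h)))).pow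
  obtain ⟨M₀, hM₀⟩ := Ideal.exists_forall_sub_mem_ideal hpair (fun i => - Ci i * a i)
  set Z : ℂ[X] := ∏ i, (X - C (ω i)) ^ (e i - 1) with hZ
  have hZm : Z.Monic := monic_prod_of_monic _ _ fun i _ => (monic_X_sub_C _).pow _
  have hZd : Z.natDegree = ∑ i, (e i - 1) := by
    rw [hZ, natDegree_prod_of_monic _ _ fun i _ => (monic_X_sub_C _).pow _]
    simp
  set M := M₀ %ₘ Z with hM
  have hMd : M.degree < (∑ i, (e i - 1) : ℕ) := by
    have := degree_modByMonic_lt M₀ hZm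
    rwa [degree_eq_natDegree hZm.ne_zero, hZd] at this
  have hNd : (X * M : ℂ[X]).degree < (Fintype.card ι : WithBot ℕ) := by
    by_cases h0 : M = 0
    · rw [h0, mul_zero, degree_zero]
      exact WithBot.bot_lt_coe _
    · rw [← hcard, degree_eq_natDegree (mul_ne_zero X_ne_zero h0), natDegree_X_mul h0]
      rw [degree_eq_natDegree h0] at hMd
      have : M.natDegree < ∑ i, (e i - 1) := by exact_mod_cast hMd
      exact_mod_cast Nat.add_lt_add_right this 1
  obtain ⟨δ, hδ⟩ := lagr μ hμ x hx _ hNd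
  have hNt : Nt μ x δ = W * (X * M) := by rw [Nt_eq μ hμ, ← hδ]
  have hdvd : ∀ i, (X - C (ω i)) ^ (e i - 1) ∣ - Nt μ x δ - Ci i := by
    intro i
    have h1 : (X - C (ω i)) ^ (e i - 1) ∣ M₀ - (- Ci i * a i) := by
      rw [← Ideal.mem_span_singleton]; exact hM₀ i
    have h2 : (X - C (ω i)) ^ (e i - 1) ∣ Z := Finset.dvd_prod_of_mem _ (Finset.mem_univ i)
    have h3 : M = M₀ - Z * (M₀ /ₘ Z) := by
      rw [hM, eq_sub_iff_add_eq, modByMonic_add_div]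
    have h4 : - Nt μ x δ - Ci i = -(X * W) * (M₀ - (- Ci i * a i)) + (X * W) * (M₀ /ₘ Z) * Z
      - Ci i * b i * (X - C (ω i)) ^ (e i - 1) := by
      rw [hNt, h3]
      linear_combination (Ci i) * hab i
    rw [h4]
    exact dvd_sub (dvd_add (h1.mul_left _) (h2.mul_left _)) (Dvd.intro_left _ rfl)
  choose B hB using hdvd
  choose A hA hA0 using hord
  refine ⟨δ, fun i => - (B i).eval (ω i) / (A i).eval (ω i), ?_, ?_⟩
  · rw [hNt]; simp
  · intro i l hl
    have h5 : (X - C (ω i)) ∣ C (- (B i).eval (ω i) / (A i).eval (ω i)) * A i + B i := by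
      rw [dvd_iff_isRoot]
      simp only [IsRoot, eval_add, eval_mul, eval_C]
      have := hA0 i
      field_simp
      ring
    obtain ⟨S, hS⟩ := h5
    have h6 : C (- (B i).eval (ω i) / (A i).eval (ω i)) * derivative (Qp μ x) - Nt μ x δ =
        Ci i + (X - C (ω i)) ^ (e i) * S := by
      have h7 : (X - C (ω i)) ^ (e i) = (X - C (ω i)) ^ (e i - 1) * (X - C (ω i)) := by
        rw [← pow_succ, Nat.sub_add_cancel (he i)]
      rw [h7, mul_assoc, ← hS, hA i]
      linear_combination hB i
    rw [h6]
    simp only [hCi, add_comp, mul_comp, pow_comp, sub_comp, X_comp, C_comp, Polynomial.sum_comp,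
      add_sub_cancel_right, coeff_add, finsetSum_coeff, coeff_C_mul, coeff_X_pow, mul_ite, mul_one,
      mul_zero, Finset.sum_ite_eq, Finset.mem_range, hl, if_true]
    rw [coeff_X_pow_mul', if_neg (by omega), add_zero]


def CoD (P : ℝ → ℂ[X]) (P' : ℂ[X]) : Prop :=
  ∀ l, HasDerivAt (fun u => (P u).coeff l) (P'.coeff l) 0

theorem CoD.mul {P Q : ℝ → ℂ[X]} {P' Q' : ℂ[X]} (hP : CoD P P') (hQ : CoD Q Q') :
    CoD (fun u => P u * Q u) (P' * Q 0 + P 0 * Q') := by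
  intro l
  simp only [coeff_add, coeff_mul]
  rw [← Finset.sum_add_distrib]
  exact HasDerivAt.fun_sum fun k _ => (hP k.1).mul (hQ k.2)

theorem CoD.const (p : ℂ[X]) : CoD (fun _ => p) 0 := fun l => by
  simpa using hasDerivAt_const _ _

theorem CoD.pow {P : ℝ → ℂ[X]} {P' : ℂ[X]} (hP : CoD P P') (m : ℕ) :
    CoD (fun u => P u ^ m) (C (m : ℂ) * P 0 ^ (m - 1) * P') := by
  induction m with
  | zero => simpa using CoD.const 1
  | succ m ih =>
    have := ih.mul hP
    simp only [← pow_succ] at this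
    convert this using 1
    rcases m with _ | m
    · simp
    · simp only [Nat.add_sub_cancel, pow_succ]
      push_cast
      simp only [C_add, C_1]
      ring

theorem CoD.prod {ι : Type*} [DecidableEq ι] {P : ι → ℝ → ℂ[X]} {P' : ι → ℂ[X]}
    (hP : ∀ i, CoD (P i) (P' i)) (s : Finset ι) :
    CoD (fun u => ∏ i ∈ s, P i u) (∑ j ∈ s, P' j * ∏ k ∈ s.erase j, P k 0) := by
  induction s using Finset.induction_on with
  | empty => simpa using CoD.const 1
  | insert a s ha ih =>
    have := (hP a).mul ih
    simp only [Finset.prod_insert ha]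
    convert this using 1
    rw [Finset.sum_insert ha, Finset.erase_insert ha, Finset.mul_sum]
    congr 1
    refine Finset.sum_congr rfl fun j hj => ?_
    have hja : a ≠ j := by rintro rfl; exact ha hj
    rw [Finset.erase_insert_of_ne hja, Finset.prod_insert (by simp [ha])]
    ring

theorem CoD.lin (a b : ℂ) : CoD (fun u : ℝ => X + C (a + u * b)) (C b) := by
  intro l
  simp only [coeff_add, coeff_C]
  by_cases hl : l = 0
  · simp only [hl, if_true]
    have h : HasDerivAt (fun u : ℝ => (u : ℂ)) 1 0 := by
      simpa using (hasDerivAt_id (0 : ℝ)).ofReal_comp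
    have := ((h.mul_const b).const_add a).const_add ((X : ℂ[X]).coeff 0)
    simpa using this
  · simp only [hl, if_false]
    exact hasDerivAt_const _ _

theorem CoD.prodlin {ι : Type*} [Fintype ι] [DecidableEq ι] (μ : ι → ℕ) (x δ : ι → ℂ) (w ν : ℂ) :
    CoD (fun u : ℝ => ∏ j, (X + C ((w + u * ν) - (x j + u * δ j))) ^ μ j)
      ((C ν * derivative (Qp μ x) - Nt μ x δ).comp (X + C w)) := by
  have h := CoD.prod (fun j => (CoD.lin (w - x j) (ν - δ j)).pow (μ j)) Finset.univ
  have h1 : (fun u : ℝ => ∏ j, (X + C ((w + u * ν) - (x j + u * δ j))) ^ μ j) =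
      fun u : ℝ => ∏ i, (X + C (w - x i + ↑u * (ν - δ i))) ^ μ i := by
    ext1 u
    refine Finset.prod_congr rfl fun j _ => ?_
    congr 3; ring
  rw [h1]
  convert h using 1
  rw [Qp_derivative]
  unfold Nt
  rw [Finset.mul_sum, ← Finset.sum_sub_distrib, Polynomial.sum_comp]
  refine Finset.sum_congr rfl fun j _ => ?_
  have h2 : ∀ k, (X - C (x k)).comp (X + C w) = X + C (w - x k) := by
    intro k; simp [C_sub]; ring
  simp only [sub_comp, mul_comp, pow_comp, prod_comp, C_comp, mul_one, X_comp,
    Complex.ofReal_zero, zero_mul, add_zero, C_mul, C_sub] at *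
  simp only [h2]
  ring

theorem CoD_bp {ι : Type*} [Fintype ι] [DecidableEq ι] (μ : ι → ℕ) (x δ : ι → ℂ) (w ν : ℂ)
    (h0 : (Nt μ x δ).eval 0 = 0) :
    CoD (fun u : ℝ => bp μ 0 (fun j => x j + u * δ j) (w + u * ν))
      ((C ν * derivative (Qp μ x) - Nt μ x δ).comp (X + C w)) := by
  intro l
  have h1 := CoD.prodlin μ x δ w ν l
  have h2 := CoD.prodlin μ x δ 0 0 0
  have h3 : ∀ u : ℝ, (∏ j, (X + C (((0 : ℂ) + u * 0) - (x j + u * δ j))) ^ μ j).coeff 0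
      = qe μ (fun j => x j + u * δ j) 0 := by
    intro u
    simp [coeff_zero_eq_eval_zero, eval_prod, qe]
  simp only [h3] at h2
  have h4 : ((C 0 * derivative (Qp μ x) - Nt μ x δ).comp (X + C 0)).coeff 0 = 0 := by
    simp [coeff_zero_eq_eval_zero, h0]
  rw [h4] at h2
  unfold bp
  simp only [Complex.ofReal_zero, zero_mul, C_0, sub_zero, mul_one, coeff_sub, coeff_C]
  by_cases hl : l = 0
  · simp only [hl, if_true] at h1 ⊢
    have h5 := h1.fun_sub h2
    rw [sub_zero] at h5
    exact h5
  · simp only [hl, if_false, sub_zero]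
    exact h1

theorem ift_exists {ι σ : Type*} [Fintype ι] [Fintype σ] (μ : ι → ℕ) (hμ : ∀ j, 0 < μ j)
    (x₀ : ι → ℂ) (hx : Function.Injective x₀) (L : ℂ[X])
    (ω₀ : σ → ℂ) (e : σ → ℕ) (he : ∀ i, 2 ≤ e i)
    (hfac : ∀ v, qe μ x₀ v - qe μ x₀ 0 = L.eval v * ∏ i, (v - ω₀ i) ^ e i)
    (hω : Function.Injective ω₀) (hω0 : ∀ i, ω₀ i ≠ 0) (hLω : ∀ i, L.eval (ω₀ i) ≠ 0)
    (hκ : qe μ x₀ 0 ≠ 0) (hcard : ∑ i, (e i - 1) + 1 = Fintype.card ι)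
    (S : ℝ × (ι → ℂ) × (σ → ℂ) → Prop)
    (hS : ∀ᶠ P in 𝓝 (((0 : ℝ), x₀, ω₀) : ℝ × (ι → ℂ) × (σ → ℂ)), S P) :
    ∃ P, S P ∧ 0 < P.1 ∧ ∀ i, ∀ l < e i, (bp μ P.1 P.2.1 (P.2.2 i)).coeff l = 0 := by
  classical
  set Φ : ℝ × (ι → ℂ) × (σ → ℂ) → ℝ × (∀ i : σ, Fin (e i) → ℂ) := fun P =>
    (P.1, fun i l => (bp μ P.1 P.2.1 (P.2.2 i)).coeff l) with hΦ
  set P₀ : ℝ × (ι → ℂ) × (σ → ℂ) := ((0 : ℝ), x₀, ω₀) with hP₀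
  have hC : ContDiff ℝ 1 Φ := by
    refine contDiff_fst.prodMk (contDiff_pi.2 fun i => contDiff_pi.2 fun l => ?_)
    exact bp_CoSm μ (t := fun P : ℝ × (ι → ℂ) × (σ → ℂ) => P.1) (x := fun P => P.2.1)
      (w := fun P => P.2.2 i) (by fun_prop) (by fun_prop) (by fun_prop) l
  have hs := hC.contDiffAt (x := P₀) |>.hasStrictFDerivAt (by norm_num)
  set f' := fderiv ℝ Φ P₀ with hf'
  have hΦ0 : Φ P₀ = (0, 0) := by
    refine Prod.ext rfl ?_
    funext i l
    exact (bp_coeff_ne μ x₀ L ω₀ e hfac hω hLω i).1 l l.2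
  have hκω : ∀ i, qe μ x₀ (ω₀ i) ≠ 0 := by
    intro i
    have h := hfac (ω₀ i)
    rw [← Finset.mul_prod_erase _ _ (Finset.mem_univ i), sub_self,
      zero_pow (by have := he i; omega), zero_mul, mul_zero, sub_eq_zero] at h
    rw [h]; exact hκ
  have hord : ∀ i, ∃ A : ℂ[X], derivative (Qp μ x₀) = (X - C (ω₀ i)) ^ (e i - 1) * A ∧
      A.eval (ω₀ i) ≠ 0 := by
    intro i
    set B : ℂ[X] := L * ∏ k ∈ Finset.univ.erase i, (X - C (ω₀ k)) ^ e k with hB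
    have h1 : Qp μ x₀ = C (qe μ x₀ 0) + (X - C (ω₀ i)) ^ e i * B := by
      apply Polynomial.funext
      intro v
      rw [Qp_eval, ← sub_add_cancel (qe μ x₀ v) (qe μ x₀ 0), hfac v,
        ← Finset.mul_prod_erase _ _ (Finset.mem_univ i), hB]
      simp only [eval_add, eval_mul, eval_C, eval_pow, eval_sub, eval_X, eval_prod]
      ring
    refine ⟨C (e i : ℂ) * B + (X - C (ω₀ i)) * derivative B, ?_, ?_⟩
    · rw [h1, derivative_add, derivative_C, derivative_mul, derivative_X_sub_C_pow]
      have h7 : (X - C (ω₀ i)) ^ (e i) = (X - C (ω₀ i)) ^ (e i - 1) * (X - C (ω₀ i)) := by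
        rw [← pow_succ, Nat.sub_add_cancel (by have := he i; omega)]
      rw [h7]
      ring
    · simp only [eval_add, eval_mul, eval_C, eval_sub, eval_X, sub_self, zero_mul, add_zero, hB,
        eval_prod, eval_pow]
      refine mul_ne_zero (Nat.cast_ne_zero.2 (by have := he i; omega)) (mul_ne_zero (hLω i)
        (Finset.prod_ne_zero_iff.2 fun k hk => pow_ne_zero _ (sub_ne_zero.2 fun h => ?_)))
      exact (Finset.ne_of_mem_erase hk) (hω h).symm
  have hfst : ∀ v, (f' v).1 = v.1 := by
    intro v
    have h1 := hs.hasFDerivAt.fst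
    have h2 : HasFDerivAt (fun P : ℝ × (ι → ℂ) × (σ → ℂ) => P.1)
      (ContinuousLinearMap.fst ℝ ℝ ((ι → ℂ) × (σ → ℂ))) P₀ := hasFDerivAt_fst
    have h3 := h1.unique h2
    exact congrArg (fun T => T v) h3
  have hsol : ∀ c : (∀ i : σ, Fin (e i) → ℂ), ∃ v, f' v = (0, c) := by
    intro c
    obtain ⟨δ, ν, h0, h1⟩ := surj_alg μ hμ x₀ hx ω₀ hω hω0 hκω e
      (fun i => by have := he i; omega) hord hcard
      (fun i l => if h : l < e i then c i ⟨l, h⟩ else 0)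
    refine ⟨(0, δ, ν), ?_⟩
    set γ : ℝ → ℝ × (ι → ℂ) × (σ → ℂ) := fun u =>
      (0, (fun j => x₀ j + u * δ j), (fun i => ω₀ i + u * ν i)) with hγ
    have hlin : ∀ a b : ℂ, HasDerivAt (fun u : ℝ => a + u * b) b 0 := by
      intro a b
      have h : HasDerivAt (fun u : ℝ => (u : ℂ)) 1 0 := by
        simpa using (hasDerivAt_id (0 : ℝ)).ofReal_comp
      simpa using ((h.mul_const b).const_add a)
    have hγd : HasDerivAt γ (0, δ, ν) 0 := by
      refine (hasDerivAt_const _ _).prodMk (HasDerivAt.prodMk ?_ ?_)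
      · exact hasDerivAt_pi.2 fun j => hlin _ _
      · exact hasDerivAt_pi.2 fun j => hlin _ _
    have hγ0 : γ 0 = P₀ := by simp [hγ, hP₀]
    have h2 : HasDerivAt (Φ ∘ γ) (f' (0, δ, ν)) 0 := by
      apply HasFDerivAt.comp_hasDerivAt _ _ hγd
      rw [hγ0]; exact hs.hasFDerivAt
    have h3 : HasDerivAt (Φ ∘ γ) ((0 : ℝ), c) 0 := by
      refine HasDerivAt.prodMk (hasDerivAt_const _ _) ?_
      refine hasDerivAt_pi.2 fun i => hasDerivAt_pi.2 fun l => ?_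
      have h4 := CoD_bp μ x₀ δ (ω₀ i) (ν i) h0 l
      rw [h1 i l l.2] at h4
      simpa using h4
    exact h2.unique h3
  have hsurj : (f' : ℝ × (ι → ℂ) × (σ → ℂ) →ₗ[ℝ] ℝ × (∀ i : σ, Fin (e i) → ℂ)).range = ⊤ := by
    rw [LinearMap.range_eq_top]
    rintro ⟨s, c⟩
    obtain ⟨v, hv⟩ := hsol (c - (f' (s, 0, 0)).2)
    refine ⟨(s, 0, 0) + v, ?_⟩
    rw [map_add]
    change f' (s, 0, 0) + f' v = (s, c)
    rw [hv]
    refine Prod.ext ?_ ?_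
    · simp [hfst]
    · simp
  have hmap := hs.map_nhds_eq_of_surj hsurj
  rw [hΦ0] at hmap
  have h5 : ∀ᶠ y in 𝓝 ((0, 0) : ℝ × (∀ i : σ, Fin (e i) → ℂ)), ∃ P, S P ∧ Φ P = y := by
    rw [← hmap]
    rw [eventually_map]
    filter_upwards [hS] with P hP
    exact ⟨P, hP, rfl⟩
  have h6 : Tendsto (fun t : ℝ => ((t, 0) : ℝ × (∀ i : σ, Fin (e i) → ℂ))) (𝓝[>] 0) (𝓝 (0, 0)) := by
    have : Continuous (fun t : ℝ => ((t, 0) : ℝ × (∀ i : σ, Fin (e i) → ℂ))) := by fun_prop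
    exact (this.tendsto 0).mono_left nhdsWithin_le_nhds
  obtain ⟨t, ⟨P, hP, hPt⟩, ht⟩ := ((h6.eventually h5).and self_mem_nhdsWithin).exists
  refine ⟨P, hP, ?_, ?_⟩
  · have := congrArg Prod.fst hPt
    simp only [hΦ] at this
    rw [this]; exact ht
  · intro i l hl
    have := congrFun (congrFun (congrArg Prod.snd hPt) i) ⟨l, hl⟩
    exact this


noncomputable def GG (p q : ℂ[X]) (z : ℂ) : ℂ := p.eval z - (starRingEnd ℂ) z * q.eval z

theorem poly_diffR (p : ℂ[X]) (z : ℂ) : DifferentiableAt ℝ (fun z => p.eval z) z :=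
  (p.differentiable z).restrictScalars ℝ

theorem poly_contDiffR (p : ℂ[X]) : ContDiff ℝ 1 (fun z : ℂ => p.eval z) := by
  have : ContDiff ℂ 1 (fun z : ℂ => p.eval z) := by
    simpa [aeval_def] using p.contDiff_aeval (𝕜 := ℂ) (n := 1)
  exact this.restrict_scalars ℝ

theorem contDiff_GG (p q : ℂ[X]) : ContDiff ℝ 1 (GG p q) :=
  (poly_contDiffR p).sub (contDiff_conj.mul (poly_contDiffR q))

theorem GG_diff (p q : ℂ[X]) (z : ℂ) : DifferentiableAt ℝ (GG p q) z :=
  (contDiff_GG p q).differentiable (by norm_num) z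

theorem inj_open {ι : Type*} [Finite ι] (x₀ : ι → ℂ) (hx : Function.Injective x₀) :
    ∀ᶠ x in 𝓝 x₀, Function.Injective x := by
  have : ∀ᶠ x in 𝓝 x₀, ∀ i j, i ≠ j → x i ≠ x j := by
    rw [eventually_all]; intro i
    rw [eventually_all]; intro j
    by_cases hij : i = j
    · simp [hij]
    have h1 : ContinuousAt (fun x : ι → ℂ => x i) x₀ := (continuous_apply i).continuousAt
    have h2 : ContinuousAt (fun x : ι → ℂ => x j) x₀ := (continuous_apply j).continuousAt
    filter_upwards [h1.ne_iff_eventually_ne h2 |>.1 (fun h => hij (hx h))] with x hx _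
    exact hx
  filter_upwards [this] with x hx i j hij
  by_contra h
  exact hx i j h hij

theorem FF_to_GG {ι : Type*} [Fintype ι] (μ : ι → ℕ) (t : ℝ) (ht : 0 < t) (x : ι → ℂ) (N : ℕ)
    (h : Cnt (FF μ t x) Set.univ (N + 1)) :
    Cnt (GG (C ((t : ℂ)⁻¹) * divX (Qp μ x)) (Qp μ x)) Set.univ N := by
  have htc : (t : ℂ) ≠ 0 := by exact_mod_cast ht.ne'
  set p := C ((t : ℂ)⁻¹) * divX (Qp μ x) with hp
  have hFG : ∀ v, FF μ t x v = (t * v) * GG p (Qp μ x) v := by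
    intro v
    have h1 : (Qp μ x).eval v = v * (divX (Qp μ x)).eval v + qe μ x 0 := by
      conv_lhs => rw [← X_mul_divX_add (Qp μ x)]
      rw [eval_add, eval_mul, eval_X, eval_C, coeff_zero_eq_eval_zero, Qp_eval]
    unfold FF GG
    rw [← Qp_eval μ x v]
    simp only [hp, eval_mul, eval_C]
    field_simp
    rw [h1]
    ring
  have hF0 : FF μ t x 0 = 0 := by rw [hFG]; simp
  have hG0 : GG p (Qp μ x) 0 ≠ 0 := by
    intro hG0
    obtain ⟨f', hf', hinj⟩ := h.2 0 trivial hF0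
    have h1 : DifferentiableAt ℝ (fun v : ℂ => (t : ℂ) * v) 0 := by fun_prop
    have h2 := h1.hasFDerivAt.mul (GG_diff p (Qp μ x) 0).hasFDerivAt
    have h3 : FF μ t x = (fun v : ℂ => (t : ℂ) * v) * GG p (Qp μ x) := by
      funext v; simp [hFG]
    rw [h3] at hf'
    have h4 := hf'.unique h2
    rw [hG0] at h4
    simp only [mul_zero, zero_smul, add_zero] at h4
    have : f' 1 = f' 0 := by rw [h4]; simp
    exact one_ne_zero (hinj this)
  have h1 : Cnt (FF μ t x) {0}ᶜ N := by
    refine ⟨?_, fun z _ hz => h.2 z trivial hz⟩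
    have h2 := h.1
    have h3 : {z | z ∈ Set.univ ∧ FF μ t x z = 0} =
        insert 0 {z | z ∈ ({0}ᶜ : Set ℂ) ∧ FF μ t x z = 0} := by
      ext z
      simp only [Set.mem_univ, true_and, Set.mem_ofPred_eq, Set.mem_insert_iff, Set.mem_compl_iff,
        Set.mem_singleton_iff]
      by_cases hz : z = 0
      · simp [hz, hF0]
      · simp [hz]
    rw [h3, Set.encard_insert_of_notMem (by simp)] at h2
    push_cast at h2
    exact ENat.add_left_injective_of_ne_top ENat.one_ne_top h2
  have h2 : Cnt (GG p (Qp μ x)) {0}ᶜ N := by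
    refine Cnt.transfer (fun v => t * v) id h1 ?_ ?_ ?_ ?_ ?_ ?_ ?_ ?_
    · intro z _ w _ _ _ h; exact h
    · intro z hz _; exact hz
    · intro w hw _; exact ⟨w, hw, rfl⟩
    · intro z hz; exact mul_ne_zero htc hz
    · intro z _; fun_prop
    · intro z _; fun_prop
    · intro z _; exact GG_diff _ _ _
    · intro z _; exact Eventually.of_forall fun w => hFG w
  refine h2.congr_set fun z hz => ⟨fun _ => ?_, fun _ => trivial⟩
  rintro rfl
  exact hG0 hz

theorem cluster_good {ι σ : Type*} [Fintype ι] [Fintype σ] (μ : ι → ℕ) (hμ : ∀ j, 0 < μ j)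
    (D : ℕ) (hD : ∑ j, μ j = D) (hD1 : 1 ≤ D)
    (x₀ : ι → ℂ) (hx : Function.Injective x₀) (L : ℂ[X]) (hL : L.Separable)
    (ω₀ : σ → ℂ) (e : σ → ℕ) (he : ∀ i, 2 ≤ e i)
    (hfac : ∀ v, qe μ x₀ v - qe μ x₀ 0 = L.eval v * ∏ i, (v - ω₀ i) ^ e i)
    (hω : Function.Injective ω₀) (hω0 : ∀ i, ω₀ i ≠ 0) (hLω : ∀ i, L.eval (ω₀ i) ≠ 0)
    (hκ : qe μ x₀ 0 ≠ 0) (hcard : ∑ i, (e i - 1) + 1 = Fintype.card ι) (N : ℕ)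
    (hN : 2 * D + ∑ i, (e i + 2) + L.natDegree = N + 1) :
    ∃ (x : ι → ℂ) (p : ℂ[X]), Function.Injective x ∧ p.natDegree ≤ D ∧ (∀ j, p.eval (x j) ≠ 0) ∧
      Cnt (GG p (Qp μ x)) Set.univ N ∧
      ∀ i, ∃ (w : ℂ) (H : ℂ[X]), p - C ((starRingEnd ℂ) w) * Qp μ x = (X - C w) ^ e i * H ∧
        H.eval w ≠ 0 ∧ (Qp μ x).eval w ≠ 0 := by
  have hass := assembly μ D hD hD1 x₀ L hL ω₀ e he hfac hω hω0 hLω hκ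
  have hS : ∀ᶠ P in 𝓝 (((0 : ℝ), x₀, ω₀) : ℝ × (ι → ℂ) × (σ → ℂ)),
      (0 < P.1 → (∀ i, ∀ l < e i, (bp μ P.1 P.2.1 (P.2.2 i)).coeff l = 0) →
      Cnt (FF μ P.1 P.2.1) Set.univ (2 * D + ∑ i, (e i + 2) + L.natDegree)) ∧
      Function.Injective P.2.1 ∧ qe μ P.2.1 0 ≠ 0 ∧ (∀ i, P.2.2 i ≠ 0) ∧
      ∀ i, (bp μ P.1 P.2.1 (P.2.2 i)).coeff (e i) ≠ 0 := by
    refine hass.and (Eventually.and ?_ (Eventually.and ?_ (Eventually.and ?_ ?_)))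
    · have : Continuous (fun P : ℝ × (ι → ℂ) × (σ → ℂ) => P.2.1) := by fun_prop
      exact (this.tendsto ((0 : ℝ), x₀, ω₀)).eventually (inj_open x₀ hx)
    · have : Continuous (fun P : ℝ × (ι → ℂ) × (σ → ℂ) => qe μ P.2.1 0) :=
        (contDiff_qe μ).continuous.comp (by fun_prop : Continuous
          (fun P : ℝ × (ι → ℂ) × (σ → ℂ) => (P.2.1, (0 : ℂ))))
      exact this.continuousAt.eventually_ne hκ
    · rw [eventually_all]; intro i
      have : Continuous (fun P : ℝ × (ι → ℂ) × (σ → ℂ) => P.2.2 i) := by fun_prop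
      exact this.continuousAt.eventually_ne (hω0 i)
    · rw [eventually_all]; intro i
      have := bp_CoSm μ (t := fun P : ℝ × (ι → ℂ) × (σ → ℂ) => P.1) (x := fun P => P.2.1)
        (w := fun P => P.2.2 i) (by fun_prop) (by fun_prop) (by fun_prop) (e i)
      exact this.continuous.continuousAt.eventually_ne
        (bp_coeff_ne μ x₀ L ω₀ e hfac hω hLω i).2
  obtain ⟨⟨t, x, ω⟩, ⟨h1, h2, h3, h4, h5⟩, ht, hlow⟩ := ift_exists μ hμ x₀ hx L ω₀ e he hfac hω
    hω0 hLω hκ hcard _ hS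
  simp only at h1 h2 h3 h4 h5 ht hlow
  have htc : (t : ℂ) ≠ 0 := by exact_mod_cast ht.ne'
  have hcnt := h1 ht hlow
  rw [hN] at hcnt
  have hdiv : Qp μ x = X * divX (Qp μ x) + C (qe μ x 0) := by
    conv_lhs => rw [← X_mul_divX_add (Qp μ x)]
    rw [coeff_zero_eq_eval_zero, Qp_eval]
  have hpx : ∀ j, (C ((t : ℂ)⁻¹) * divX (Qp μ x)).eval (x j) ≠ 0 := by
    intro j h
    rw [eval_mul, eval_C] at h
    have h6 := (mul_eq_zero.1 h).resolve_left (inv_ne_zero htc)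
    have h7 := congrArg (eval (x j)) hdiv
    rw [eval_add, eval_mul, h6, eval_C, mul_zero, zero_add, Qp_eval] at h7
    apply h3
    rw [← h7]
    unfold qe
    exact Finset.prod_eq_zero (Finset.mem_univ j) (by rw [sub_self, zero_pow (hμ j).ne'])
  refine ⟨x, C ((t : ℂ)⁻¹) * divX (Qp μ x), h2, ?_, hpx, FF_to_GG μ t ht x N hcnt, ?_⟩
  · refine (natDegree_C_mul_le _ _).trans ?_
    rw [natDegree_divX_eq_natDegree_tsub_one]
    have : (Qp μ x).natDegree = D := by
      unfold Qp
      rw [natDegree_prod_of_monic _ _ fun i _ => (monic_X_sub_C _).pow _]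
      simpa using hD
    omega
  · intro i
    set w := ω i with hw
    have hw0 : w ≠ 0 := h4 i
    set p := C ((t : ℂ)⁻¹) * divX (Qp μ x) with hp
    set T := p - C ((starRingEnd ℂ) w) * Qp μ x with hT
    have hb : (bp μ t x w).comp (X - C w) = C (t : ℂ) * (X * T) := by
      apply Polynomial.funext
      intro v
      have h7 := congrArg (eval v) hdiv
      rw [eval_add, eval_mul, eval_C, eval_X] at h7
      rw [eval_comp, bp_eval]
      simp only [eval_sub, eval_X, eval_C, eval_mul, hT, hp, add_sub_cancel, ← Qp_eval μ x v]
      field_simp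
      linear_combination h7
    obtain ⟨B, hB⟩ : X ^ e i ∣ bp μ t x w := X_pow_dvd_iff.2 (hlow i)
    have hB0 : B.eval 0 ≠ 0 := by
      have := h5 i
      rwa [← hw, hB, coeff_X_pow_mul', if_pos le_rfl, Nat.sub_self, coeff_zero_eq_eval_zero] at this
    have hb2 : C (t : ℂ) * (X * T) = (X - C w) ^ e i * B.comp (X - C w) := by
      rw [← hb, hB]; simp
    have hcop : IsCoprime ((X - C w) ^ e i) (C (t : ℂ) * X) := by
      refine IsCoprime.pow_left ?_
      refine IsCoprime.mul_right ?_ ?_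
      · exact isCoprime_one_right.of_isCoprime_of_dvd_right
          (isUnit_C.2 (isUnit_iff_ne_zero.2 htc)).dvd
      · have := isCoprime_X_sub_C_of_isUnit_sub (a := w) (b := (0 : ℂ)) (by simpa using hw0)
        simpa using this
    obtain ⟨H, hH⟩ : (X - C w) ^ e i ∣ T := by
      refine hcop.dvd_of_dvd_mul_left ?_
      rw [mul_assoc, hb2]
      exact dvd_mul_right _ _
    refine ⟨w, H, hH, ?_, ?_⟩
    · intro hH0
      apply hB0
      have h8 : B.comp (X - C w) = C (t : ℂ) * X * H := by
        have hne : (X - C w) ^ e i ≠ 0 := pow_ne_zero _ (X_sub_C_ne_zero w)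
        apply mul_left_cancel₀ hne
        rw [← hb2, hH]; ring
      have h9 := congrArg (eval w) h8
      simpa [eval_comp, hH0] using h9
    · intro hq
      have h8 := congrArg (eval w) hH
      rw [hT] at h8
      simp only [eval_mul, eval_pow, eval_sub, eval_X, eval_C, sub_self] at h8
      rw [zero_pow (by have := he i; omega), zero_mul, hq, mul_zero, sub_zero] at h8
      rw [Qp_eval] at hq
      unfold qe at hq
      obtain ⟨j, _, hj⟩ := Finset.prod_eq_zero_iff.1 hq
      have hj2 := sub_eq_zero.1 (pow_eq_zero_iff (hμ j).ne' |>.1 hj)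
      rw [hj2] at h8
      exact hpx j h8


theorem krull_lemma {s τ : Type*} [Fintype s] [Fintype τ] (f : τ → MvPolynomial s ℂ)
    (h0 : ∀ i, MvPolynomial.eval 0 (f i) = 0) (hcard : Fintype.card τ < Fintype.card s) :
    ∃ x : s → ℂ, x ≠ 0 ∧ ∀ i, MvPolynomial.eval x (f i) = 0 := by
  by_contra hcon
  push Not at hcon
  set I : Ideal (MvPolynomial s ℂ) := Ideal.span (Set.range f) with hI
  set m : Ideal (MvPolynomial s ℂ) := MvPolynomial.vanishingIdeal ℂ {(0 : s → ℂ)} with hm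
  have hzl : MvPolynomial.zeroLocus ℂ I = {(0 : s → ℂ)} := by
    rw [hI, MvPolynomial.zeroLocus_span]
    ext x
    simp only [Set.mem_ofPred_eq, Set.mem_range, forall_exists_index, forall_apply_eq_imp_iff,
      Set.mem_singleton_iff]
    constructor
    · intro h
      by_contra hx
      obtain ⟨i, hi⟩ := hcon x hx
      exact hi (by simpa [MvPolynomial.coe_aeval_eq_eval] using h i)
    · rintro rfl i
      simpa [MvPolynomial.coe_aeval_eq_eval] using h0 i
  have hrad : I.radical = m := by
    rw [← MvPolynomial.vanishingIdeal_zeroLocus_eq_radical (K := ℂ), hzl]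
  have hmax : m.IsMaximal := MvPolynomial.isMaximal_iff_eq_vanishingIdeal_singleton.2 ⟨0, rfl⟩
  have hmin : m ∈ I.minimalPrimes := by
    refine ⟨⟨hmax.isPrime, ?_⟩, ?_⟩
    · rw [← hrad]; exact Ideal.le_radical
    · rintro P ⟨hP, hIP⟩ _
      rw [← hrad]
      exact (hP.radical_le_iff).2 hIP
  have hht : m.height ≤ (Fintype.card τ : ℕ) := by
    refine (Ideal.height_le_card_of_mem_minimalPrimes_span (Set.finite_range f) hmin).trans ?_
    rw [← Set.image_univ]
    have := Set.ncard_image_le (f := f) (Set.finite_univ)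
    rw [Set.ncard_univ, Nat.card_eq_fintype_card] at this
    exact_mod_cast this
  have hall : ∀ M : Ideal (MvPolynomial s ℂ), M.IsMaximal → M.height ≤ (Fintype.card τ : ℕ) := by
    intro M hM
    obtain ⟨a, rfl⟩ := MvPolynomial.isMaximal_iff_eq_vanishingIdeal_singleton.1 hM
    let e : MvPolynomial s ℂ ≃ₐ[ℂ] MvPolynomial s ℂ := AlgEquiv.ofAlgHom
      (MvPolynomial.aeval fun i => MvPolynomial.X i - MvPolynomial.C (a i))
      (MvPolynomial.aeval fun i => MvPolynomial.X i + MvPolynomial.C (a i))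
      (by ext i; simp) (by ext i; simp)
    have he : (MvPolynomial.vanishingIdeal ℂ {a}).comap (e : MvPolynomial s ℂ ≃+* _) = m := by
      ext p
      rw [Ideal.mem_comap, hm, MvPolynomial.mem_vanishingIdeal_singleton_iff,
        MvPolynomial.mem_vanishingIdeal_singleton_iff]
      have : MvPolynomial.aeval a (e p) = MvPolynomial.aeval (0 : s → ℂ) p := by
        change MvPolynomial.aeval a (MvPolynomial.aeval
          (fun i => MvPolynomial.X i - MvPolynomial.C (a i)) p) = _
        rw [← AlgHom.comp_apply, MvPolynomial.comp_aeval]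
        congr 2
        ext i
        simp
      rw [← this]
      rfl
    rw [← RingEquiv.height_comap (e : MvPolynomial s ℂ ≃+* _), he]
    exact hht
  have hdim : ringKrullDim (MvPolynomial s ℂ) ≤ ((Fintype.card τ : ℕ) : WithBot ℕ∞) := by
    rw [ringKrullDim_le_iff_isMaximal_height_le]
    intro M hM
    have := hall M hM
    exact_mod_cast this
  rw [MvPolynomial.ringKrullDim_of_isNoetherianRing, ringKrullDim_eq_zero_of_field, zero_add,
    Nat.card_eq_fintype_card] at hdim
  have : Fintype.card s ≤ Fintype.card τ := by exact_mod_cast hdim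
  omega


theorem Qp_monic {ι : Type*} [Fintype ι] (μ : ι → ℕ) (x : ι → ℂ) : (Qp μ x).Monic :=
  monic_prod_of_monic _ _ fun j _ => (monic_X_sub_C _).pow _

theorem Qp_natDegree {ι : Type*} [Fintype ι] (μ : ι → ℕ) (x : ι → ℂ) :
    (Qp μ x).natDegree = ∑ j, μ j := by
  unfold Qp
  rw [natDegree_prod_of_monic _ _ fun j _ => (monic_X_sub_C _).pow _]
  simp [natDegree_pow]

theorem cluster_from {ι σ : Type*} [Fintype ι] [Fintype σ] (μ : ι → ℕ) (hμ : ∀ j, 0 < μ j)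
    (D : ℕ) (hD : ∑ j, μ j = D) (x : ι → ℂ) (hx : Function.Injective x) (U : ℂ[X])
    (hU : ∀ a, U.eval a = 0 → (derivative U).eval a ≠ 0)
    (ω : σ → ℂ) (e : σ → ℕ) (he : ∀ i, 2 ≤ e i) (κ : ℂ) (hκ : κ ≠ 0)
    (hfac : Qp μ x - C κ = U * ∏ i, (X - C (ω i)) ^ e i)
    (hω : Function.Injective ω) (hUω : ∀ i, U.eval (ω i) ≠ 0)
    (hcard : ∑ i, (e i - 1) + 1 = Fintype.card ι) (hlt : ∑ i, e i < D) (N : ℕ)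
    (hN : 3 * D + 2 * Fintype.card σ = N + 1) :
    ∃ (x : ι → ℂ) (p : ℂ[X]), Function.Injective x ∧ p.natDegree ≤ D ∧ (∀ j, p.eval (x j) ≠ 0) ∧
      Cnt (GG p (Qp μ x)) Set.univ N ∧
      ∀ i, ∃ (w : ℂ) (H : ℂ[X]), p - C ((starRingEnd ℂ) w) * Qp μ x = (X - C w) ^ e i * H ∧
        H.eval w ≠ 0 ∧ (Qp μ x).eval w ≠ 0 := by
  have hmon : (∏ i, (X - C (ω i)) ^ e i).Monic :=
    monic_prod_of_monic _ _ fun j _ => (monic_X_sub_C _).pow _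
  have hUne : U ≠ 0 := by
    rintro rfl
    exact hU 0 (by simp) |>.elim (by simp)
  have hUdeg : U.natDegree + ∑ i, e i = D := by
    have h1 : (Qp μ x - C κ).natDegree = D := by
      rw [natDegree_sub_C, Qp_natDegree, hD]
    rw [hfac, mul_comm, hmon.natDegree_mul' hUne] at h1
    have h2 : (∏ i, (X - C (ω i)) ^ e i).natDegree = ∑ i, e i := Qp_natDegree e ω
    omega
  obtain ⟨l, hl⟩ : ∃ l, U.IsRoot l := by
    apply IsAlgClosed.exists_root
    intro h
    have h3 : U.natDegree = 0 := natDegree_eq_of_degree_eq_some h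
    omega
  have hl' : U.eval l = 0 := hl
  have hqe : ∀ v, qe μ (fun j => x j - l) v = qe μ x (v + l) := by
    intro v
    unfold qe
    refine Finset.prod_congr rfl fun j _ => ?_
    congr 1; ring
  have hev : ∀ v, qe μ x v - κ = U.eval v * ∏ i, (v - ω i) ^ e i := by
    intro v
    have := congrArg (fun P => P.eval v) hfac
    simpa [Qp_eval, eval_prod] using this
  have hk : qe μ x l = κ := by
    have := hev l
    rw [hl', zero_mul, sub_eq_zero] at this
    exact this
  refine cluster_good μ hμ D hD (by omega) (fun j => x j - l) ?_ (U.comp (X + C l)) ?_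
    (fun i => ω i - l) e he ?_ ?_ ?_ ?_ ?_ hcard N ?_
  · intro a b h; exact hx (sub_left_injective h)
  · rw [Separable, isCoprime_iff_aeval_ne_zero_of_isAlgClosed (k := ℂ) (K := ℂ)]
    intro a
    by_cases h : U.eval (a + l) = 0
    · right
      have := hU _ h
      simpa [derivative_comp] using this
    · left; simpa using h
  · intro v
    rw [hqe, hqe, zero_add, hk, hev, eval_comp]
    simp only [eval_add, eval_X, eval_C]
    congr 1
    refine Finset.prod_congr rfl fun j _ => ?_
    congr 1; ring
  · intro a b h; exact hω (sub_left_injective h)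
  · intro i h
    apply hUω i
    rw [sub_eq_zero.1 h, hl']
  · intro i
    simpa using hUω i
  · rw [hqe, zero_add, hk]; exact hκ
  · rw [natDegree_comp, natDegree_X_add_C, mul_one, Finset.sum_add_distrib]
    simp only [Finset.sum_const, Finset.card_univ, smul_eq_mul]
    omega

theorem all_eq {ι : Type*} [Fintype ι] (μ : ι → ℕ) (hμ : ∀ j, 0 < μ j) (x : ι → ℂ)
    (hD : 1 ≤ ∑ j, μ j)
    (h : ∀ a, (derivative (Qp μ x)).eval a = 0 → (Qp μ x).eval a = 0) (i j : ι) : x i = x j := by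
  classical
  set Q := Qp μ x with hQ
  have hm := Qp_monic μ x
  have hdeg := Qp_natDegree μ x
  rw [← hQ] at hm hdeg
  have hQ0 : Q ≠ 0 := hm.ne_zero
  have hd0 : derivative Q ≠ 0 := by
    intro h0
    rw [derivative_eq_zero] at h0
    omega
  have hdd : (derivative Q).natDegree = Q.natDegree - 1 := by
    simp
  have c1 : Multiset.card (derivative Q).roots = Q.natDegree - 1 := by
    rw [IsAlgClosed.card_roots_eq_natDegree, hdd]
  have c2 : Multiset.card Q.roots = Q.natDegree := IsAlgClosed.card_roots_eq_natDegree
  have s1 : ∑ a ∈ Q.roots.toFinset, (derivative Q).roots.count a = Q.natDegree - 1 := by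
    rw [← c1]
    apply Multiset.sum_count_eq_card
    intro a ha
    rw [mem_roots hd0] at ha
    rw [Multiset.mem_toFinset, mem_roots hQ0]
    exact h a ha
  have s2 : ∑ a ∈ Q.roots.toFinset, Q.roots.count a = Q.natDegree := by
    rw [← c2]
    apply Multiset.sum_count_eq_card
    intro a ha
    rwa [Multiset.mem_toFinset]
  have s3 : ∑ a ∈ Q.roots.toFinset, Q.roots.count a =
      ∑ a ∈ Q.roots.toFinset, (derivative Q).roots.count a + Q.roots.toFinset.card := by
    rw [Finset.card_eq_sum_ones, ← Finset.sum_add_distrib]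
    refine Finset.sum_congr rfl fun a ha => ?_
    rw [Multiset.mem_toFinset] at ha
    have h1 : 0 < Q.roots.count a := Multiset.count_pos.2 ha
    have h2 := derivative_rootMultiplicity_of_root (isRoot_of_mem_roots ha)
    rw [count_roots] at h1 ⊢
    rw [count_roots, h2]
    omega
  have hcard : Q.roots.toFinset.card ≤ 1 := by omega
  have hr : ∀ i, x i ∈ Q.roots.toFinset := by
    intro i
    rw [Multiset.mem_toFinset, mem_roots hQ0, IsRoot.def, hQ, Qp_eval, qe]
    apply Finset.prod_eq_zero (Finset.mem_univ i)
    simp [(hμ i).ne']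
  exact Finset.card_le_one.1 hcard _ (hr i) _ (hr j)

noncomputable def Qg {A ι : Type*} [CommRing A] [Fintype ι] (μ : ι → ℕ) (x : ι → A) : A[X] :=
  ∏ j, (X - C (x j)) ^ μ j

noncomputable def Rg {A ι : Type*} [CommRing A] [Fintype ι] [DecidableEq ι] (c : A) (μ : ι → ℕ)
    (x : ι → A) : A[X] :=
  C c * ∑ j, C (μ j : A) * ∏ k ∈ Finset.univ.erase j, (X - C (x k))

theorem Qg_map {A B ι : Type*} [CommRing A] [CommRing B] [Fintype ι] (φ : A →+* B) (μ : ι → ℕ)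
    (x : ι → A) : (Qg μ x).map φ = Qg μ (fun j => φ (x j)) := by
  simp [Qg, Polynomial.map_prod]

theorem Rg_map {A B ι : Type*} [CommRing A] [CommRing B] [Fintype ι] [DecidableEq ι]
    (φ : A →+* B) (c : A) (μ : ι → ℕ)
    (x : ι → A) : (Rg c μ x).map φ = Rg (φ c) μ (fun j => φ (x j)) := by
  simp [Rg, Polynomial.map_prod, Polynomial.map_sum]

theorem Rg_deg {A ι : Type*} [CommRing A] [Nontrivial A] [Fintype ι] [DecidableEq ι] (c : A)
    (μ : ι → ℕ) (x : ι → A) (hc : c * ((∑ j, μ j : ℕ) : A) = 1) :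
    (Rg c μ x).Monic ∧ (Rg c μ x).natDegree = Fintype.card ι - 1 := by
  have hm : ∀ j, (∏ k ∈ Finset.univ.erase j, (X - C (x k))).Monic :=
    fun j => monic_prod_of_monic _ _ fun k _ => monic_X_sub_C _
  have hd : ∀ j, (∏ k ∈ Finset.univ.erase j, (X - C (x k))).natDegree = Fintype.card ι - 1 := by
    intro j
    rw [natDegree_prod_of_monic _ _ fun k _ => monic_X_sub_C _]
    simp [Finset.card_erase_of_mem]
  have h1 : (Rg c μ x).natDegree ≤ Fintype.card ι - 1 := by
    unfold Rg
    refine (natDegree_C_mul_le _ _).trans ?_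
    refine natDegree_sum_le_of_forall_le _ _ fun j _ => ?_
    refine (natDegree_C_mul_le _ _).trans ?_
    rw [hd]
  have h2 : (Rg c μ x).coeff (Fintype.card ι - 1) = 1 := by
    unfold Rg
    rw [coeff_C_mul, finsetSum_coeff, ← hc]
    congr 1
    push_cast
    refine Finset.sum_congr rfl fun j _ => ?_
    rw [coeff_C_mul]
    nth_rewrite 2 [← mul_one (μ j : A)]
    congr 1
    rw [← hd j]
    exact hm j
  have hmon := monic_of_natDegree_le_of_coeff_eq_one _ h1 h2
  refine ⟨hmon, le_antisymm h1 ?_⟩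
  apply le_natDegree_of_ne_zero
  rw [h2]; exact one_ne_zero

theorem Rg_zero {A ι : Type*} [CommRing A] [Nontrivial A] [Fintype ι] [DecidableEq ι] (c : A)
    (μ : ι → ℕ) (hc : c * ((∑ j, μ j : ℕ) : A) = 1) :
    Rg c μ (fun _ => (0 : A)) = X ^ (Fintype.card ι - 1) := by
  unfold Rg
  simp only [C_0, sub_zero, Finset.prod_const, Finset.card_erase_of_mem, Finset.mem_univ,
    Finset.card_univ]
  rw [← Finset.sum_mul, ← mul_assoc]
  have : C c * ∑ j, C (μ j : A) = 1 := by
    rw [← map_sum, ← C_mul, ← C_1, ← hc]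
    push_cast; rfl
  rw [this, one_mul]

theorem Qp_der {ι : Type*} [Fintype ι] [DecidableEq ι] (c : ℂ) (μ : ι → ℕ) (hμ : ∀ j, 0 < μ j)
    (x : ι → ℂ) (hc : c * ((∑ j, μ j : ℕ) : ℂ) = 1) :
    derivative (Qp μ x) = C ((∑ j, μ j : ℕ) : ℂ) * (Rg c μ x * Qp (fun j => μ j - 1) x) := by
  rw [Qp_derivative, Nt_eq μ hμ]
  have h2 : C ((∑ j, μ j : ℕ) : ℂ) * C c = 1 := by
    rw [← C_mul, mul_comm, hc, C_1]
  unfold Rg Qp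
  simp only [mul_one]
  set S := ∑ j, C (μ j : ℂ) * ∏ k ∈ Finset.univ.erase j, (X - C (x k)) with hS
  set W := ∏ j, (X - C (x j)) ^ (μ j - 1)
  calc W * S = (C ((∑ j, μ j : ℕ) : ℂ) * C c) * (W * S) := by rw [h2, one_mul]
    _ = _ := by ring


theorem Qp_root {ι : Type*} [Fintype ι] (μ : ι → ℕ) (hμ : ∀ j, 0 < μ j) (x : ι → ℂ) (j : ι) :
    (Qp μ x).eval (x j) = 0 := by
  rw [Qp_eval, qe]
  apply Finset.prod_eq_zero (Finset.mem_univ j)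
  simp [(hμ j).ne']

theorem Rg_double {ι : Type*} [Fintype ι] [DecidableEq ι] (c : ℂ) (μ : ι → ℕ) (x : ι → ℂ)
    {i j : ι} (hij : i ≠ j) (h : x i = x j) : (Rg c μ x).eval (x i) = 0 := by
  unfold Rg
  rw [eval_C_mul, eval_finsetSum]
  rw [Finset.sum_eq_zero, mul_zero]
  intro k _
  rw [eval_C_mul, eval_prod]
  by_cases hk : k = i
  · subst hk
    rw [Finset.prod_eq_zero (i := j), mul_zero]
    · simp [hij.symm]
    · simp [h]
  · rw [Finset.prod_eq_zero (i := i), mul_zero]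
    · simp [Ne.symm hk]
    · simp

theorem W_ne {ι : Type*} [Fintype ι] (μ : ι → ℕ) (hμ : ∀ j, 0 < μ j) (x : ι → ℂ) (a : ℂ)
    (h : (Qp μ x).eval a ≠ 0) : (Qp (fun j => μ j - 1) x).eval a ≠ 0 := by
  rw [Qp_eval, qe, Finset.prod_ne_zero_iff] at h ⊢
  intro j hj
  have := h j hj
  refine pow_ne_zero _ fun h0 => this ?_
  rw [h0, zero_pow (hμ j).ne']

theorem krullC {ι : Type*} [Fintype ι] [DecidableEq ι] (μ : ι → ℕ) (hμ : ∀ j, 0 < μ j)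
    (c : ℂ) (hc : c * ((∑ j, μ j : ℕ) : ℂ) = 1) (hn : 2 ≤ Fintype.card ι)
    (hD : 2 * Fintype.card ι ≤ ∑ j, μ j + 1) :
    ∃ (x : ι → ℂ) (j₀ : ι), x ≠ 0 ∧ x j₀ = 0 ∧ ∀ l < Fintype.card ι - 2,
      ((derivative (Qp μ x %ₘ (Rg c μ x ^ 2))) /ₘ Rg c μ x).coeff l = 0 := by
  obtain ⟨j₀⟩ : Nonempty ι := Fintype.card_pos_iff.1 (by omega)
  let A := MvPolynomial ι ℂ
  let xA : ι → A := MvPolynomial.X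
  let cA : A := MvPolynomial.C c
  have hcA : cA * ((∑ j, μ j : ℕ) : A) = 1 := by
    have := congrArg (MvPolynomial.C : ℂ →+* A) hc
    rw [map_mul, map_natCast, map_one] at this
    exact this
  have hR := (Rg_deg cA μ xA hcA).1
  let g : A[X] := (derivative (Qg μ xA %ₘ (Rg cA μ xA ^ 2))) /ₘ Rg cA μ xA
  have hg : ∀ x : ι → ℂ, g.map (MvPolynomial.eval x) =
      ((derivative (Qp μ x %ₘ (Rg c μ x ^ 2))) /ₘ Rg c μ x) := by
    intro x
    have h1 : (Qg μ xA).map (MvPolynomial.eval x) = Qp μ x := by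
      rw [Qg_map]; simp [xA, Qg, Qp]
    have h2 : (Rg cA μ xA).map (MvPolynomial.eval x) = Rg c μ x := by
      rw [Rg_map]; simp [xA, cA]
    rw [map_divByMonic _ hR, ← derivative_map, map_modByMonic _ (hR.pow 2), Polynomial.map_pow,
      h1, h2]
  obtain ⟨x, hx0, hx⟩ := krull_lemma (s := ι) (τ := Option (Fin (Fintype.card ι - 2)))
    (fun o => o.elim (MvPolynomial.X j₀) (fun l => g.coeff l)) (by
      rintro (_ | l)
      · simp
      · simp only [Option.elim]
        rw [← coeff_map, hg]
        have h1 : Rg c μ (0 : ι → ℂ) = X ^ (Fintype.card ι - 1) := Rg_zero c μ hc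
        have h2 : Qp μ (0 : ι → ℂ) = X ^ (∑ j, μ j) := by
          simp [Qp, Finset.prod_pow_eq_pow_sum]
        rw [h1, h2, ← pow_mul, (modByMonic_eq_zero_iff_dvd (monic_X_pow _)).2
          (pow_dvd_pow _ (by omega))]
        simp) (by
      rw [Fintype.card_option, Fintype.card_fin]; omega)
  refine ⟨x, j₀, hx0, ?_, ?_⟩
  · simpa using hx none
  · intro l hl
    have := hx (some ⟨l, hl⟩)
    simp only [Option.elim] at this
    rwa [← coeff_map, hg] at this

theorem polyC {ι : Type*} [Fintype ι] [DecidableEq ι] (μ : ι → ℕ) (hμ : ∀ j, 0 < μ j)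
    (c : ℂ) (hc : c * ((∑ j, μ j : ℕ) : ℂ) = 1) (hn : 2 ≤ Fintype.card ι)
    (hD : 2 * Fintype.card ι ≤ ∑ j, μ j + 1) :
    ∃ (x : ι → ℂ) (κ : ℂ) (U : ℂ[X]), (∃ i j, x i ≠ x j) ∧
      Qp μ x = C κ + Rg c μ x ^ 2 * U := by
  obtain ⟨x, j₀, hx0, hxj, hx⟩ := krullC μ hμ c hc hn hD
  obtain ⟨hR, hRd⟩ := Rg_deg c μ x hc
  have hder := Qp_der c μ hμ x hc
  set Q := Qp μ x
  set R := Rg c μ x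
  set W := Qp (fun j => μ j - 1) x
  set V := Q /ₘ (R ^ 2)
  set T := Q %ₘ (R ^ 2) with hT
  have hQ : T + R ^ 2 * V = Q := modByMonic_add_div Q (R ^ 2)
  have hdvd : R ∣ derivative T := by
    have h1 : derivative T = C ((∑ j, μ j : ℕ) : ℂ) * (R * W) - derivative (R ^ 2 * V) := by
      rw [← hder, ← hQ, derivative_add]; ring
    rw [h1]
    refine dvd_sub ((Dvd.intro _ rfl : R ∣ R * W).mul_left _) ?_
    rw [derivative_mul, derivative_pow]
    refine dvd_add ⟨C 2 * derivative R * V, ?_⟩ ⟨R * derivative V, by ring⟩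
    simp; ring
  have hT0 : derivative T = 0 := by
    by_contra hne
    set g := derivative T /ₘ R with hg
    have hRg : R * g = derivative T := by
      have h1 := modByMonic_add_div (derivative T) R
      rwa [(modByMonic_eq_zero_iff_dvd hR).2 hdvd, zero_add] at h1
    have hg0 : g ≠ 0 := by
      intro h; apply hne; rw [← hRg, h, mul_zero]
    have hdeg : (derivative T).natDegree = Fintype.card ι - 1 + g.natDegree := by
      rw [← hRg, hR.natDegree_mul' hg0, hRd]
    have hTd : T.natDegree ≠ 0 := by
      intro h; exact hne (derivative_eq_zero.2 h)
    have h2 := natDegree_derivative_lt hTd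
    have h3 : T.natDegree < (R ^ 2).natDegree := by
      apply natDegree_modByMonic_lt _ (hR.pow 2)
      intro h
      have : (R ^ 2).natDegree = 0 := by rw [h, natDegree_one]
      rw [natDegree_pow, hRd] at this
      omega
    rw [natDegree_pow, hRd] at h3
    have h4 := hx g.natDegree (by omega)
    exact hg0 (leadingCoeff_eq_zero.1 h4)
  obtain ⟨κ, hκ⟩ := natDegree_eq_zero.1 (derivative_eq_zero.1 hT0)
  refine ⟨x, κ, V, ?_, ?_⟩
  · obtain ⟨i, hi⟩ := Function.ne_iff.1 hx0
    exact ⟨i, j₀, by rw [hxj]; exact hi⟩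
  · rw [hκ, hQ]

def Clu {ι : Type*} [Fintype ι] (μ : ι → ℕ) (N : ℕ) : Prop :=
  ∃ (x : ι → ℂ) (p : ℂ[X]), Function.Injective x ∧ p.natDegree ≤ ∑ j, μ j ∧
    (∀ j, p.eval (x j) ≠ 0) ∧ Cnt (GG p (Qp μ x)) Set.univ N

theorem caseC {ι : Type*} [Fintype ι] (μ : ι → ℕ) (hμ : ∀ j, 0 < μ j)
    (hn : 2 ≤ Fintype.card ι) (hD : 2 * Fintype.card ι ≤ ∑ j, μ j + 1) :
    Clu μ (3 * ∑ j, μ j + 2 * Fintype.card ι - 3) := by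
  classical
  set D := ∑ j, μ j with hDdef
  have hDC : (D : ℂ) ≠ 0 := by
    have : D ≠ 0 := by omega
    exact_mod_cast this
  set c : ℂ := (D : ℂ)⁻¹ with hcdef
  have hc : c * ((∑ j, μ j : ℕ) : ℂ) = 1 := inv_mul_cancel₀ hDC
  obtain ⟨x, κ, U, ⟨i, j, hij⟩, hQ⟩ := polyC μ hμ c hc hn hD
  obtain ⟨hR, hRd⟩ := Rg_deg c μ x hc
  have hder := Qp_der c μ hμ x hc
  have hW := W_ne μ hμ x
  have hroot := Qp_root μ hμ x
  have hae := all_eq μ hμ x (by omega)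
  have hdbl := fun i j (hij : i ≠ j) => Rg_double c μ x hij
  have hQd := Qp_natDegree μ x
  rw [← hDdef] at hQd hder
  set W := Qp (fun j => μ j - 1) x
  set R := Rg c μ x with hRdef
  set Q := Qp μ x with hQdef
  have hRQ : ∀ a, R.eval a = 0 → Q.eval a = κ := by
    intro a ha
    rw [hQ]; simp [ha]
  have hUQ : ∀ a, U.eval a = 0 → Q.eval a = κ := by
    intro a ha
    rw [hQ]; simp [ha]
  have hκ : κ ≠ 0 := by
    intro hk
    apply hij
    refine hae ?_ i j
    intro a ha
    by_cases hWa : W.eval a = 0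
    · by_contra h
      exact hW a h hWa
    · rw [hder] at ha
      simp only [eval_mul, eval_C, mul_eq_zero, hDC, hWa, or_false, false_or] at ha
      rw [hRQ a ha, hk]
  have hxinj : Function.Injective x := by
    intro i j h
    by_contra hne
    have h1 := hRQ _ (hdbl i j hne h)
    rw [hroot] at h1
    exact hκ h1.symm
  have hWR : ∀ a, Q.eval a = κ → W.eval a ≠ 0 := fun a h => hW a (by rw [h]; exact hκ)
  have hid : C 2 * derivative R * U + R * derivative U = C (D : ℂ) * W := by
    have h1 : R * (C 2 * derivative R * U + R * derivative U) = R * (C (D : ℂ) * W) := by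
      have h2 : derivative Q = R * (C (D : ℂ) * W) := by rw [hder]; ring
      rw [← h2, hQ]
      simp only [derivative_add, derivative_C, derivative_mul, derivative_pow]
      simp; ring
    exact mul_left_cancel₀ hR.ne_zero h1
  have hide : ∀ a, 2 * (derivative R).eval a * U.eval a + R.eval a * (derivative U).eval a =
      D * W.eval a := by
    intro a
    have := congrArg (fun P => P.eval a) hid
    simpa using this
  have hRU : ∀ a, R.eval a = 0 → (derivative R).eval a ≠ 0 ∧ U.eval a ≠ 0 := by
    intro a ha
    have h1 := hide a
    rw [ha, zero_mul, add_zero] at h1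
    have h2 : (D : ℂ) * W.eval a ≠ 0 := mul_ne_zero hDC (hWR a (hRQ a ha))
    rw [← h1] at h2
    constructor
    · intro h; rw [h] at h2; simp at h2
    · intro h; rw [h] at h2; simp at h2
  have hUU : ∀ a, U.eval a = 0 → (derivative U).eval a ≠ 0 := by
    intro a ha h
    have h1 := hide a
    rw [ha, h, mul_zero, mul_zero, add_zero] at h1
    exact mul_ne_zero hDC (hWR a (hUQ a ha)) h1.symm
  have hRsep : R.Separable := by
    rw [Separable, isCoprime_iff_aeval_ne_zero_of_isAlgClosed (k := ℂ) (K := ℂ)]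
    intro a
    by_cases h : R.eval a = 0
    · right; simpa using (hRU a h).1
    · left; simpa using h
  have hnd : R.roots.Nodup := nodup_roots hRsep
  have hRprod : R = ∏ a ∈ R.roots.toFinset, (X - C a) := by
    have h1 := Splits.eq_prod_roots_of_monic (IsAlgClosed.splits R) hR
    rw [Finset.prod, Multiset.toFinset_val, hnd.dedup]
    exact h1
  have hcardR : Fintype.card R.roots.toFinset = Fintype.card ι - 1 := by
    rw [Fintype.card_coe, Multiset.toFinset_card_of_nodup hnd,
      IsAlgClosed.card_roots_eq_natDegree, hRd]
  have hmemR : ∀ a : R.roots.toFinset, R.eval (a : ℂ) = 0 := by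
    intro a
    have := a.2
    rw [Multiset.mem_toFinset] at this
    exact (isRoot_of_mem_roots this)
  obtain ⟨x', p, h1, h2, h3, h4, -⟩ := cluster_from (σ := R.roots.toFinset) μ hμ D rfl x hxinj U hUU
    (fun a => (a : ℂ)) (fun _ => 2) (fun _ => le_refl _) κ hκ (by
      rw [← hQdef, hQ, add_sub_cancel_left, mul_comm]
      congr 1
      rw [Finset.prod_pow]
      congr 1
      rw [Finset.univ_eq_attach, Finset.prod_attach R.roots.toFinset (fun a => X - C a)]
      exact hRprod)
    Subtype.val_injective (fun a => (hRU _ (hmemR a)).2) (by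
      simp only [Finset.sum_const, Finset.card_univ, hcardR, smul_eq_mul]
      omega) (by
      simp only [Finset.sum_const, Finset.card_univ, hcardR, smul_eq_mul]
      omega) (3 * D + 2 * Fintype.card ι - 3) (by rw [hcardR]; omega)
  exact ⟨x', p, h1, h2, h3, h4⟩

theorem caseOne {ι : Type*} [Fintype ι] (μ : ι → ℕ) (hμ : ∀ j, 0 < μ j)
    (hn : Fintype.card ι = 1) :
    Clu μ (3 * ∑ j, μ j + 2 * Fintype.card ι - 3) := by
  classical
  obtain ⟨i, hi⟩ := Fintype.card_eq_one_iff.1 hn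
  have hpos : 0 < ∑ j, μ j := (hμ i).trans_le (Finset.single_le_sum (fun _ _ => Nat.zero_le _) (Finset.mem_univ i))
  have hQ : Qp μ (fun _ => 0) = X ^ (∑ j, μ j) := by
    simp [Qp, Finset.prod_pow_eq_pow_sum]
  obtain ⟨x', p, h1, h2, h3, h4, -⟩ := cluster_from (σ := Empty) μ hμ (∑ j, μ j) rfl (fun _ => 0)
    (fun a b _ => (hi a).trans (hi b).symm) (X ^ (∑ j, μ j) - C 1) (by
      intro a ha h
      simp only [eval_sub, eval_pow, eval_X, eval_C, derivative_sub, derivative_X_pow,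
        derivative_C, sub_zero, eval_mul, mul_eq_zero, pow_eq_zero_iff', Nat.cast_eq_zero, C_eq_natCast, eval_natCast] at ha h
      rcases h with h | h
      · omega
      · rw [h.1, zero_pow hpos.ne'] at ha
        simp at ha)
    (fun a => a.elim) (fun _ => 2) (fun _ => le_refl _) 1 one_ne_zero (by
      rw [hQ]; simp) (fun a => a.elim) (fun a => a.elim) (by simp [hn]) (by simpa using hpos)
    (3 * ∑ j, μ j + 2 * Fintype.card ι - 3) (by simp [hn]; omega)
  exact ⟨x', p, h1, h2, h3, h4⟩

theorem caseB {ι : Type*} [Fintype ι] (μ : ι → ℕ) (hμ : ∀ j, 0 < μ j)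
    (hn : 2 ≤ Fintype.card ι) (hD : Fintype.card ι < ∑ j, μ j) :
    ∃ (x : ι → ℂ) (p : ℂ[X]), Function.Injective x ∧ p.natDegree ≤ ∑ j, μ j ∧
      (∀ j, p.eval (x j) ≠ 0) ∧ Cnt (GG p (Qp μ x)) Set.univ (3 * (∑ j, μ j) + 1) ∧
      ∃ (w : ℂ) (H : ℂ[X]), p - C ((starRingEnd ℂ) w) * Qp μ x =
        (X - C w) ^ (Fintype.card ι) * H ∧ H.eval w ≠ 0 ∧ (Qp μ x).eval w ≠ 0 := by
  classical
  set D := ∑ j, μ j with hDdef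
  have hDC : (D : ℂ) ≠ 0 := by
    have : D ≠ 0 := by omega
    exact_mod_cast this
  set c : ℂ := (D : ℂ)⁻¹ with hcdef
  have hc : c * ((∑ j, μ j : ℕ) : ℂ) = 1 := inv_mul_cancel₀ hDC
  set k := Fintype.card ι with hk
  obtain ⟨x, hx0, hx⟩ := krull_lemma (s := ι) (τ := Fin (k - 1))
    (fun l => (Rg (MvPolynomial.C c) μ (MvPolynomial.X : ι → MvPolynomial ι ℂ)).coeff l) (by
      intro l
      rw [← coeff_map, Rg_map]
      simp only [MvPolynomial.eval_C, MvPolynomial.eval_X, Pi.zero_apply]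
      rw [Rg_zero c μ hc, coeff_X_pow, if_neg]
      have := l.2
      omega) (by rw [Fintype.card_fin]; omega)
  obtain ⟨hR, hRd⟩ := Rg_deg c μ x hc
  have hder := Qp_der c μ hμ x hc
  have hW := W_ne μ hμ x
  have hroot := Qp_root μ hμ x
  have hae := all_eq μ hμ x (by omega)
  have hdbl := fun i j (hij : i ≠ j) => Rg_double c μ x hij
  have hRX : Rg c μ x = X ^ (k - 1) := by
    ext l
    rw [coeff_X_pow]
    split_ifs with h
    · rw [h, hk, ← hRd]; exact hR
    · rcases lt_or_gt_of_ne h with h | h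
      · have := hx ⟨l, h⟩
        rw [← coeff_map, Rg_map] at this
        simpa using this
      · apply coeff_eq_zero_of_natDegree_lt; rw [hRd]; exact h
  rw [← hDdef, hRX] at hder
  rw [hRX] at hdbl
  set W := Qp (fun j => μ j - 1) x
  set Q := Qp μ x with hQdef
  set κ := Q.eval 0 with hκdef
  have hκ : κ ≠ 0 := by
    intro hk0
    have heq := hae (by
      intro a ha
      by_cases hWa : W.eval a = 0
      · by_contra h
        exact hW a h hWa
      · rw [hder] at ha
        simp only [eval_mul, eval_C, mul_eq_zero, hDC, hWa, or_false, false_or, eval_pow, eval_X] at ha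
        rw [eq_zero_of_pow_eq_zero ha]; exact hk0)
    apply hx0
    rw [hκdef, hQdef, Qp_eval, qe, Finset.prod_eq_zero_iff] at hk0
    obtain ⟨i, -, hi⟩ := hk0
    have h1 := eq_zero_of_pow_eq_zero hi
    rw [zero_sub, neg_eq_zero] at h1
    funext j
    rw [heq j i, h1]; rfl
  have hxinj : Function.Injective x := by
    intro i j h
    by_contra hne
    have h1 := hdbl i j hne h
    rw [eval_pow, eval_X] at h1
    have h2 := hroot i
    rw [eq_zero_of_pow_eq_zero h1] at h2
    exact hκ h2
  have hdvd : X ^ k ∣ Q - C κ := by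
    rw [X_pow_dvd_iff]
    intro l hl
    rcases l with _ | l
    · simp [hκdef, coeff_zero_eq_eval_zero]
    · have h1 : (derivative Q).coeff l = 0 := by
        rw [hder, coeff_C_mul, coeff_X_pow_mul', if_neg (by omega), mul_zero]
      rw [coeff_derivative] at h1
      rw [coeff_sub, coeff_C_ne_zero (Nat.succ_ne_zero l), sub_zero]
      have h2 : ((l : ℂ) + 1) ≠ 0 := by exact_mod_cast Nat.succ_ne_zero l
      exact (mul_eq_zero.1 h1).resolve_right h2
  obtain ⟨U, hU⟩ := hdvd
  have hUQ : ∀ a, U.eval a = 0 → Q.eval a = κ := by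
    intro a ha
    have := congrArg (fun P => P.eval a) hU
    simp only [eval_sub, eval_C, eval_mul, ha, mul_zero] at this
    exact sub_eq_zero.1 this
  have hWR : ∀ a, Q.eval a = κ → W.eval a ≠ 0 := fun a h => hW a (by rw [h]; exact hκ)
  have hid : C (k : ℂ) * U + X * derivative U = C (D : ℂ) * W := by
    have h1 : X ^ (k - 1) * (C (k : ℂ) * U + X * derivative U) = X ^ (k - 1) * (C (D : ℂ) * W) := by
      have h2 : derivative Q = X ^ (k - 1) * (C (D : ℂ) * W) := by rw [hder]; ring
      have h3 : derivative Q = derivative (X ^ k * U) := by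
        rw [← hU]; simp
      rw [← h2, h3]
      rw [derivative_mul, derivative_X_pow]
      have h4 : (X : ℂ[X]) ^ k = X ^ (k - 1) * X := by
        rw [← pow_succ, Nat.sub_add_cancel (by omega)]
      rw [h4]; ring
    exact mul_left_cancel₀ (pow_ne_zero _ X_ne_zero) h1
  have hide : ∀ a, k * U.eval a + a * (derivative U).eval a = D * W.eval a := by
    intro a
    have := congrArg (fun P => P.eval a) hid
    simpa using this
  have hU0 : U.eval 0 ≠ 0 := by
    intro h
    have h1 := hide 0
    rw [h, mul_zero, zero_mul, add_zero] at h1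
    exact mul_ne_zero hDC (hWR 0 rfl) h1.symm
  have hUU : ∀ a, U.eval a = 0 → (derivative U).eval a ≠ 0 := by
    intro a ha h
    have h1 := hide a
    rw [ha, h, mul_zero, mul_zero, add_zero] at h1
    exact mul_ne_zero hDC (hWR a (hUQ a ha)) h1.symm
  obtain ⟨x', p, h1, h2, h3, h4, h5⟩ := cluster_from (σ := Unit) μ hμ D rfl x hxinj U hUU
    (fun _ => 0) (fun _ => k) (fun _ => hn) κ hκ (by
      rw [← hQdef, hU, mul_comm]; simp)
    (fun _ _ _ => rfl) (fun _ => hU0) (by simp; omega) (by simpa using hD) (3 * D + 1) (by simp)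
  exact ⟨x', p, h1, h2, h3, h4, h5 ()⟩


theorem poly_bound (p : ℂ[X]) (D : ℕ) (hp : p.natDegree ≤ D) :
    ∃ B : ℝ, 0 ≤ B ∧ ∀ z : ℂ, 1 ≤ ‖z‖ → ‖p.eval z‖ ≤ B * ‖z‖ ^ D := by
  refine ⟨∑ i ∈ Finset.range (D + 1), ‖p.coeff i‖, Finset.sum_nonneg fun _ _ => norm_nonneg _, ?_⟩
  intro z hz
  rw [eval_eq_sum_range' (Nat.lt_succ_of_le hp), Finset.sum_mul]
  refine (norm_sum_le _ _).trans (Finset.sum_le_sum fun i hi => ?_)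
  rw [norm_mul, norm_pow]
  exact mul_le_mul_of_nonneg_left
    (pow_le_pow_right₀ hz (Nat.lt_succ_iff.1 (Finset.mem_range.1 hi))) (norm_nonneg _)

theorem Qp_lower {ι : Type*} [Fintype ι] (μ : ι → ℕ) (r : ℝ) (x : ι → ℂ) (hx : ∀ j, ‖x j‖ ≤ r)
    (z : ℂ) (hz : 2 * r ≤ ‖z‖) : (‖z‖ / 2) ^ (∑ j, μ j) ≤ ‖(Qp μ x).eval z‖ := by
  rw [Qp_eval, qe, norm_prod, ← Finset.prod_pow_eq_pow_sum]
  refine Finset.prod_le_prod (fun j _ => by positivity) fun j _ => ?_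
  rw [norm_pow]
  refine pow_le_pow_left₀ (by positivity) ?_ _
  have := norm_sub_norm_le z (x j)
  have := hx j
  linarith

theorem big {ι : Type*} [Fintype ι] (μ : ι → ℕ) (p : ℂ[X]) (hp : p.natDegree ≤ ∑ j, μ j) (r : ℝ) :
    ∃ R B : ℝ, 1 ≤ R ∧ 0 ≤ B ∧ ∀ x : ι → ℂ, (∀ j, ‖x j‖ ≤ r) → ∀ z : ℂ, R ≤ ‖z‖ →
      0 < ‖(Qp μ x).eval z‖ ∧ ‖p.eval z‖ ≤ B * ‖(Qp μ x).eval z‖ := by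
  obtain ⟨B, hB, hb⟩ := poly_bound p _ hp
  refine ⟨max 1 (2 * r), B * 2 ^ (∑ j, μ j), le_max_left _ _, by positivity, ?_⟩
  intro x hx z hz
  have h1 : 1 ≤ ‖z‖ := (le_max_left _ _).trans hz
  have h2 := Qp_lower μ r x hx z ((le_max_right _ _).trans hz)
  have h3 : 0 < (‖z‖ / 2) ^ (∑ j, μ j) := by positivity
  refine ⟨h3.trans_le h2, (hb z h1).trans ?_⟩
  rw [mul_assoc]
  refine mul_le_mul_of_nonneg_left ?_ hB
  calc ‖z‖ ^ (∑ j, μ j) = 2 ^ (∑ j, μ j) * (‖z‖ / 2) ^ (∑ j, μ j) := by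
        rw [← mul_pow]; congr 1; ring
    _ ≤ _ := mul_le_mul_of_nonneg_left h2 (by positivity)

theorem Cnt.remove {f : ℂ → ℂ} {M : ℕ} (h : Cnt f Set.univ (M + 1)) (z₀ : ℂ) (h0 : f z₀ = 0) :
    Cnt f {z | z ≠ z₀} M := by
  refine ⟨?_, fun z _ hz => h.2 z trivial hz⟩
  have h1 := h.1
  have h2 : {z | z ∈ Set.univ ∧ f z = 0} = insert z₀ {z | z ∈ {z | z ≠ z₀} ∧ f z = 0} := by
    ext z
    simp only [Set.mem_univ, true_and, Set.mem_insert_iff, Set.mem_setOf_eq]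
    by_cases hz : z = z₀
    · simp [hz, h0]
    · simp [hz]
  rw [h2, Set.encard_insert_of_notMem (by simp)] at h1
  apply ENat.add_left_injective_of_ne_top ENat.one_ne_top
  simpa using h1

theorem insertion {ι : Type*} [Fintype ι] (μ : ι → ℕ) (x : ι → ℂ) (p : ℂ[X])
    (hp : p.natDegree ≤ ∑ j, μ j) (M k : ℕ) (hk : 2 ≤ k)
    (hM : Cnt (GG p (Qp μ x)) Set.univ (M + 1)) (z₀ : ℂ) (H : ℂ[X])
    (hfac : p - C ((starRingEnd ℂ) z₀) * Qp μ x = (X - C z₀) ^ k * H)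
    (hH : H.eval z₀ ≠ 0) (hq0 : (Qp μ x).eval z₀ ≠ 0) :
    ∃ ε : ℂ, ε ≠ 0 ∧
      Cnt (GG ((X - C z₀) * p + C ε * Qp μ x) ((X - C z₀) * Qp μ x)) Set.univ
        (2 * (k + 1) + M) := by
  set q := Qp μ x with hq
  obtain ⟨r, hr⟩ : ∃ r : ℝ, ∀ j, ‖x j‖ ≤ r := by
    obtain ⟨r, hr⟩ := (Set.finite_range (fun j => ‖x j‖)).bddAbove
    exact ⟨r, fun j => hr ⟨j, rfl⟩⟩
  obtain ⟨R₁, B, hR₁, hB, hbig⟩ := big μ p hp r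
  have hfe : ∀ z, GG p q z = (z - z₀) ^ k * H.eval z - (starRingEnd ℂ) (z - z₀) * q.eval z := by
    intro z
    have := congrArg (fun P => P.eval z) hfac
    simp only [eval_sub, eval_mul, eval_C, eval_pow, eval_X] at this
    rw [GG, map_sub, ← this]; ring
  have hG1 : ∀ (ε z : ℂ), GG ((X - C z₀) * p + C ε * q) ((X - C z₀) * q) z =
      (z - z₀) * GG p q z + ε * q.eval z := by
    intro ε z
    simp only [GG, eval_add, eval_mul, eval_sub, eval_X, eval_C]
    ring
  have hz0 : GG p q z₀ = 0 := by rw [hfe]; simp [show k ≠ 0 by omega]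
  -- local radius
  obtain ⟨ρ, hρ, hloc⟩ : ∃ ρ > 0, ∀ z, ‖z - z₀‖ ≤ ρ → q.eval z ≠ 0 ∧
      4 * (‖z - z₀‖ ^ (k - 1) * ‖H.eval z‖) < ‖q.eval z‖ := by
    have c1 : Continuous (fun z : ℂ => 4 * (‖z - z₀‖ ^ (k - 1) * ‖H.eval z‖)) := by
      have := H.continuous
      fun_prop
    have c2 : Continuous (fun z : ℂ => ‖q.eval z‖) := q.continuous.norm
    have e1 : ∀ᶠ z in 𝓝 z₀, 4 * (‖z - z₀‖ ^ (k - 1) * ‖H.eval z‖) < ‖q.eval z‖ := by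
      refine c1.continuousAt.eventually_lt c2.continuousAt ?_
      simpa [show k - 1 ≠ 0 by omega] using hq0
    obtain ⟨ρ, hρ, h⟩ := Metric.eventually_nhds_iff.1 e1
    refine ⟨ρ / 2, by positivity, fun z hz => ?_⟩
    have h1 := h (y := z) (by rw [dist_eq_norm]; linarith)
    refine ⟨fun h0 => ?_, h1⟩
    rw [h0, norm_zero] at h1
    have : 0 ≤ 4 * (‖z - z₀‖ ^ (k - 1) * ‖H.eval z‖) := by positivity
    linarith
  have hcl : ∀ (ε : ℝ) (z : ℂ), ‖z - z₀‖ ≤ ρ → (z - z₀) * GG p q z + ε * q.eval z = 0 →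
      |Complex.normSq (z - z₀) - ε| ≤ Complex.normSq (z - z₀) / 4 := by
    intro ε z hz h0
    obtain ⟨hqz, hlt⟩ := hloc z hz
    have hqp : 0 < ‖q.eval z‖ := norm_pos_iff.2 hqz
    rw [hfe] at h0
    have h1 : (z - z₀) ^ (k + 1) * H.eval z =
        ((Complex.normSq (z - z₀) - ε : ℝ) : ℂ) * q.eval z := by
      push_cast
      rw [← Complex.mul_conj]
      linear_combination h0
    have h2 := congrArg norm h1
    rw [norm_mul, norm_mul, norm_pow, Complex.norm_real, Real.norm_eq_abs] at h2
    have h3 : ‖z - z₀‖ ^ (k + 1) = ‖z - z₀‖ ^ 2 * ‖z - z₀‖ ^ (k - 1) := by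
      rw [← pow_add]; congr 1; omega
    rw [Complex.normSq_eq_norm_sq] at h2 ⊢
    rw [h3] at h2
    have h4 : |‖z - z₀‖ ^ 2 - ε| * ‖q.eval z‖ ≤ (‖z - z₀‖ ^ 2 / 4) * ‖q.eval z‖ := by
      rw [← h2]
      have : 0 ≤ ‖z - z₀‖ ^ 2 := by positivity
      nlinarith
    exact le_of_mul_le_mul_right h4 hqp
  -- outer radius
  set R := max (max R₁ (B + 2)) (max (‖z₀‖ + ρ + 1) (‖z₀‖ + 2)) with hR
  have hfar : ∀ (ε : ℝ) (z : ℂ), |ε| ≤ 1 → R ≤ ‖z‖ → (z - z₀) * GG p q z + ε * q.eval z ≠ 0 := by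
    intro ε z hε hz h0
    have g1 : R₁ ≤ ‖z‖ := ((le_max_left _ _).trans (le_max_left _ _)).trans hz
    have g2 : B + 2 ≤ ‖z‖ := ((le_max_right _ _).trans (le_max_left _ _)).trans hz
    have g3 : ‖z₀‖ + 2 ≤ ‖z‖ := ((le_max_right _ _).trans (le_max_right _ _)).trans hz
    obtain ⟨hq1, hq2⟩ := hbig x hr z g1
    have h1 : (z - z₀) * GG p q z = - (ε * q.eval z) := eq_neg_of_add_eq_zero_left h0
    have h2 := congrArg norm h1
    rw [norm_mul, norm_neg, norm_mul, Complex.norm_real, Real.norm_eq_abs] at h2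
    have h3 : 2 * ‖q.eval z‖ ≤ ‖GG p q z‖ := by
      have h4 : ‖(starRingEnd ℂ) z * q.eval z‖ - ‖p.eval z‖ ≤ ‖GG p q z‖ := by
        rw [GG, norm_sub_rev]; exact norm_sub_norm_le _ _
      rw [norm_mul, RCLike.norm_conj] at h4
      have h5 : (B + 2) * ‖q.eval z‖ ≤ ‖z‖ * ‖q.eval z‖ := mul_le_mul_of_nonneg_right g2 hq1.le
      change ‖p.eval z‖ ≤ B * ‖q.eval z‖ at hq2
      linarith
    have h6 : 2 ≤ ‖z - z₀‖ := by
      have := norm_sub_norm_le z z₀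
      linarith
    have hq1' : 0 < ‖q.eval z‖ := hq1
    have h7 : |ε| * ‖q.eval z‖ ≤ 1 * ‖q.eval z‖ := mul_le_mul_of_nonneg_right hε hq1'.le
    nlinarith [mul_le_mul h6 h3 (by positivity) (norm_nonneg (z - z₀))]
  -- middle region
  set K : Set ℂ := {z | ρ ≤ ‖z - z₀‖} ∩ Metric.closedBall 0 R with hKdef
  have hK : IsCompact K := (isCompact_closedBall _ _).inter_left
    (isClosed_le continuous_const (by fun_prop))
  have hKint : ∀ z, ρ < ‖z - z₀‖ → ‖z‖ < R → z ∈ interior K := by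
    intro z h1 h2
    refine mem_interior.2 ⟨{z | ρ < ‖z - z₀‖} ∩ Metric.ball 0 R, ?_, ?_, ?_⟩
    · exact Set.inter_subset_inter (fun z (hz : ρ < ‖z - z₀‖) => hz.le) Metric.ball_subset_closedBall
    · exact (isOpen_lt continuous_const (by fun_prop)).inter Metric.isOpen_ball
    · exact ⟨h1, by simpa using h2⟩
  have hbase : ∀ z, (z - z₀) * GG p q z = 0 → ρ ≤ ‖z - z₀‖ → ρ < ‖z - z₀‖ ∧ ‖z‖ < R := by
    intro z h0 h1
    constructor
    · refine lt_of_le_of_ne h1 fun h2 => ?_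
      have := hcl 0 z h2.ge (by rw [h0]; simp)
      rw [sub_zero, abs_of_nonneg (Complex.normSq_nonneg _), Complex.normSq_eq_norm_sq, ← h2] at this
      nlinarith [pow_pos hρ 2]
    · by_contra h2
      push Not at h2
      exact hfar 0 z (by simp) h2 (by rw [h0]; simp)
  have hmid : Cnt (fun z => (z - z₀) * GG p q z) {z | z ≠ z₀} M := by
    refine (hM.remove z₀ hz0).transfer (fun z => (z - z₀)⁻¹) id (fun _ _ _ _ _ _ h => h)
      (fun z hz _ => hz) (fun w hw _ => ⟨w, hw, rfl⟩) ?_ ?_ ?_ ?_ ?_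
    · intro z hz; exact inv_ne_zero (sub_ne_zero.2 hz)
    · intro z hz
      have : DifferentiableAt ℝ (fun z : ℂ => z - z₀) z := by fun_prop
      exact this.fun_inv (sub_ne_zero.2 hz)
    · intro z _; exact differentiableAt_id
    · intro z _
      have h1 : DifferentiableAt ℝ (fun z : ℂ => z - z₀) z := by fun_prop
      exact h1.mul (GG_diff p q z)
    · intro z hz
      filter_upwards [isOpen_ne.mem_nhds hz] with w hw
      have : w - z₀ ≠ 0 := sub_ne_zero.2 hw
      simp only [id]
      rw [inv_mul_cancel_left₀ this]
  have hmidK : Cnt (fun z => (z - z₀) * GG p q z) K M := by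
    refine hmid.congr_set fun z hz => ⟨fun h => ?_, fun h => ?_⟩
    · rintro rfl
      have : ρ ≤ ‖z - z‖ := h.1
      rw [sub_self, norm_zero] at this
      linarith
    · have h1 : ρ ≤ ‖z - z₀‖ := by
        by_contra h2
        push Not at h2
        have h3 := hcl 0 z h2.le (by simpa using hz)
        rw [sub_zero, abs_of_nonneg (Complex.normSq_nonneg _)] at h3
        have h4 : 0 < Complex.normSq (z - z₀) := Complex.normSq_pos.2 (sub_ne_zero.2 h)
        linarith
      exact ⟨h1, by simpa using (hbase z hz h1).2.le⟩
  have hGc : ContDiff ℝ 1 (fun P : ℝ × ℂ => (P.2 - z₀) * GG p q P.2 + (P.1 : ℂ) * q.eval P.2) := by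
    have c1 : ContDiff ℝ 1 (fun P : ℝ × ℂ => GG p q P.2) := (contDiff_GG p q).comp contDiff_snd
    have c2 : ContDiff ℝ 1 (fun P : ℝ × ℂ => q.eval P.2) := (poly_contDiffR q).comp contDiff_snd
    have c3 : ContDiff ℝ 1 (fun P : ℝ × ℂ => (P.1 : ℂ)) := Complex.ofRealCLM.contDiff.comp contDiff_fst
    exact ((contDiff_snd.sub contDiff_const).mul c1).add (c3.mul c2)
  have E1 := CL (fun P : ℝ × ℂ => (P.2 - z₀) * GG p q P.2 + (P.1 : ℂ) * q.eval P.2) K hK 0 M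
    (fun v _ => hGc.continuous.continuousAt) (by
      intro v hv h0
      refine ⟨hGc.contDiffAt, ?_⟩
      have h1 := hbase v (by simpa using h0) hv.1
      exact hKint v h1.1 h1.2) (by simpa using hmidK)
  -- circle
  have E2 := circle_lemma (E := ℝ)
    (fun P => H.eval (z₀ + (P.1.1 : ℂ) * P.2) * (q.eval (z₀ + (P.1.1 : ℂ) * P.2))⁻¹) 0 (k - 1) (k + 1)
    (by omega) (by omega) (H.eval z₀ * (q.eval z₀)⁻¹) (mul_ne_zero hH (inv_ne_zero hq0)) (by
      intro ζ _ _
      have c3 : ContDiff ℝ 1 (fun P : (ℝ × ℝ) × ℂ => z₀ + (P.1.1 : ℂ) * P.2) :=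
        contDiff_const.add ((Complex.ofRealCLM.contDiff.comp (contDiff_fst.comp contDiff_fst)).mul contDiff_snd)
      have c1 := ((poly_contDiffR H).comp c3)
      have c2 := ((poly_contDiffR q).comp c3)
      exact c1.contDiffAt.mul (c2.contDiffAt.inv (by simpa using hq0))) (by
      intro ζ _; simp)
  have T1 : Tendsto (fun σ : ℝ => σ ^ 2) (𝓝[>] 0) (𝓝 0) := by
    have : Continuous (fun σ : ℝ => σ ^ 2) := by fun_prop
    have := this.tendsto 0
    simp only [ne_eq, OfNat.ofNat_ne_zero, not_false_eq_true, zero_pow] at this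
    exact this.mono_left nhdsWithin_le_nhds
  have T2 : Tendsto (fun σ : ℝ => (σ, (0 : ℝ))) (𝓝[>] 0) (𝓝 ((0 : ℝ), (0 : ℝ))) := by
    have : Continuous (fun σ : ℝ => (σ, (0 : ℝ))) := by fun_prop
    exact (this.tendsto 0).mono_left nhdsWithin_le_nhds
  have E3 : ∀ᶠ σ : ℝ in 𝓝[>] 0, σ ^ 2 < min 1 (ρ ^ 2 / 2) :=
    T1.eventually (gt_mem_nhds (by positivity))
  obtain ⟨σ, ⟨hK1, hK2⟩, hC, hσs, hσ⟩ :=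
    ((T1.eventually E1).and ((T2.eventually E2).and (E3.and self_mem_nhdsWithin))).exists
  have hσ : 0 < σ := hσ
  have hs1 : σ ^ 2 < 1 := hσs.trans_le (min_le_left _ _)
  have hs2 : σ ^ 2 < ρ ^ 2 / 2 := hσs.trans_le (min_le_right _ _)
  have hC := hC hσ
  have hσc : (σ : ℂ) ≠ 0 := by exact_mod_cast hσ.ne'
  simp only at hC hK1 hK2
  refine ⟨((σ ^ 2 : ℝ) : ℂ), by exact_mod_cast (pow_pos hσ 2).ne', ?_⟩
  have hfun : GG ((X - C z₀) * p + C (((σ ^ 2 : ℝ) : ℂ)) * q) ((X - C z₀) * q) =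
      fun z => (z - z₀) * GG p q z + ((σ ^ 2 : ℝ) : ℂ) * q.eval z := by
    funext z; rw [hG1]
  rw [hfun]
  set S : Set ℂ := {z | σ ^ 2 / 2 ≤ Complex.normSq (z - z₀) ∧ Complex.normSq (z - z₀) ≤ 3 / 2 * σ ^ 2} with hS
  have hSρ : ∀ z ∈ S, ‖z - z₀‖ < ρ := by
    intro z hz
    have h1 := hz.2
    rw [Complex.normSq_eq_norm_sq] at h1
    refine lt_of_pow_lt_pow_left₀ 2 hρ.le ?_
    nlinarith
  have hns : ∀ ζ : ℂ, Complex.normSq ((σ : ℂ) * ζ) = σ ^ 2 * Complex.normSq ζ := by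
    intro ζ; rw [Complex.normSq_mul, Complex.normSq_ofReal]; ring
  have hTS : ∀ ζ : ℂ, 1 / 2 ≤ Complex.normSq ζ ∧ Complex.normSq ζ ≤ 3 / 2 → z₀ + σ * ζ ∈ S := by
    intro ζ hζ
    have hp2 := pow_pos hσ 2
    change _ ∧ _
    rw [add_sub_cancel_left, hns]
    constructor <;> nlinarith [hζ.1, hζ.2]
  have hcirc : Cnt (fun z => (z - z₀) * GG p q z + ((σ ^ 2 : ℝ) : ℂ) * q.eval z) S (2 * (k + 1)) := by
    refine hC.transfer (fun ζ => (-(σ : ℂ) ^ 2 * q.eval (z₀ + σ * ζ))⁻¹) (fun ζ => z₀ + σ * ζ)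
      ?_ ?_ ?_ ?_ ?_ ?_ ?_ ?_
    · intro z _ w _ _ _ h
      exact mul_left_cancel₀ hσc (add_left_cancel h)
    · intro ζ hζ _; exact hTS ζ hζ
    · intro w hw _
      refine ⟨(w - z₀) / σ, ?_, by field_simp; ring⟩
      have h1 : Complex.normSq (w - z₀) = σ ^ 2 * Complex.normSq ((w - z₀) / σ) := by
        rw [← hns]; congr 1; field_simp
      have hp2 := pow_pos hσ 2
      have h2 := hw.1
      have h3 := hw.2
      rw [h1] at h2 h3
      constructor
      · by_contra h; push Not at h; nlinarith
      · by_contra h; push Not at h; nlinarith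
    · intro ζ hζ
      exact inv_ne_zero (mul_ne_zero (neg_ne_zero.2 (pow_ne_zero _ hσc))
        (hloc _ (hSρ _ (hTS ζ hζ)).le).1)
    · intro ζ hζ
      have h1 : DifferentiableAt ℝ (fun ζ : ℂ => z₀ + (σ : ℂ) * ζ) ζ := by fun_prop
      have h2 : DifferentiableAt ℝ (fun ζ : ℂ => q.eval (z₀ + (σ : ℂ) * ζ)) ζ :=
        (poly_diffR q _).comp ζ h1
      have h3 : DifferentiableAt ℝ (fun ζ : ℂ => -(σ : ℂ) ^ 2 * q.eval (z₀ + σ * ζ)) ζ :=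
        (differentiableAt_const _).mul h2
      exact h3.fun_inv (mul_ne_zero (neg_ne_zero.2 (pow_ne_zero _ hσc))
        (hloc _ (hSρ _ (hTS ζ hζ)).le).1)
    · intro ζ _; fun_prop
    · intro ζ _
      have h1 : DifferentiableAt ℝ (fun z : ℂ => z - z₀) (z₀ + σ * ζ) := by fun_prop
      exact (h1.mul (GG_diff p q _)).add ((differentiableAt_const _).mul (poly_diffR q _))
    · intro ζ hζ
      have hcont : ContinuousAt (fun ζ : ℂ => q.eval (z₀ + (σ : ℂ) * ζ)) ζ := by
        have := q.continuous
        fun_prop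
      filter_upwards [hcont.eventually_ne (hloc _ (hSρ _ (hTS ζ hζ)).le).1] with w hw
      rw [hfe, add_sub_cancel_left, ← Complex.mul_conj]
      rw [map_mul, Complex.conj_ofReal]
      have hkk : (σ : ℂ) ^ k = σ ^ (k - 1) * σ := by
        rw [← pow_succ, Nat.sub_add_cancel (by omega)]
      rw [mul_pow, hkk]
      generalize q.eval (z₀ + (σ : ℂ) * w) = qq at hw
      generalize H.eval (z₀ + (σ : ℂ) * w) = hh
      push_cast
      field_simp
      ring
  have hdisj : Disjoint S K := by
    rw [Set.disjoint_left]
    intro z h1 h2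
    have h3 := hSρ z h1
    have h4 : ρ ≤ ‖z - z₀‖ := h2.1
    linarith
  refine (hcirc.union hK1 hdisj).congr_set fun z hz => ?_
  simp only [Set.mem_univ, true_iff]
  by_cases h1 : ‖z - z₀‖ ≤ ρ
  · left
    have h2 := hcl (σ ^ 2) z h1 hz
    rw [abs_le] at h2
    have hp2 := pow_pos hσ 2
    constructor <;> nlinarith [h2.1, h2.2]
  · right
    push Not at h1
    refine ⟨h1.le, ?_⟩
    by_contra h2
    rw [mem_closedBall_zero_iff] at h2
    push Not at h2
    exact hfar (σ ^ 2) z (by rw [abs_of_pos (pow_pos hσ 2)]; exact hs1.le) h2.le hz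


theorem persist {ι : Type*} [Fintype ι] (μ : ι → ℕ) (x₀ : ι → ℂ) (p : ℂ[X])
    (hp : p.natDegree ≤ ∑ j, μ j) (N : ℕ) (hN : Cnt (GG p (Qp μ x₀)) Set.univ N)
    (hx : ∀ j, p.eval (x₀ j) ≠ 0) :
    ∀ᶠ x in 𝓝 x₀, Cnt (GG p (Qp μ x)) Set.univ N ∧ ∀ j, p.eval (x j) ≠ 0 := by
  obtain ⟨R, B, hR, hB, hbig⟩ := big μ p hp (‖x₀‖ + 1)
  set R' := max R (B + 1) with hR'
  have hfar : ∀ x : ι → ℂ, ‖x‖ ≤ ‖x₀‖ + 1 → ∀ z, R' ≤ ‖z‖ → GG p (Qp μ x) z ≠ 0 := by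
    intro x hx z hz h0
    obtain ⟨h1, h2⟩ := hbig x (fun j => (norm_le_pi_norm x j).trans hx) z ((le_max_left _ _).trans hz)
    have h3 : B + 1 ≤ ‖z‖ := (le_max_right _ _).trans hz
    rw [GG, sub_eq_zero] at h0
    rw [h0, norm_mul, RCLike.norm_conj] at h2
    have := le_of_mul_le_mul_right h2 h1
    linarith
  have hc : ContDiff ℝ 1 (fun P : (ι → ℂ) × ℂ => GG p (Qp μ P.1) P.2) := by
    have h1 : ContDiff ℝ 1 (fun P : (ι → ℂ) × ℂ => p.eval P.2) := (poly_contDiffR p).comp contDiff_snd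
    have h2 : ContDiff ℝ 1 (fun P : (ι → ℂ) × ℂ => (starRingEnd ℂ) P.2) := contDiff_conj.comp contDiff_snd
    simp only [GG, Qp_eval]
    exact h1.sub (h2.mul ((contDiff_qe μ).comp (contDiff_fst.prodMk contDiff_snd)))
  have E := CL (fun P : (ι → ℂ) × ℂ => GG p (Qp μ P.1) P.2) (Metric.closedBall 0 R')
    (isCompact_closedBall _ _) x₀ N (fun v _ => hc.continuous.continuousAt) (by
      intro v hv h0
      refine ⟨hc.contDiffAt, Metric.ball_subset_interior_closedBall ?_⟩
      rw [mem_ball_zero_iff]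
      by_contra h
      push Not at h
      exact hfar x₀ (by linarith) v h h0) (by
      refine hN.congr_set fun z hz => ?_
      simp only [Set.mem_univ, iff_true]
      rw [mem_closedBall_zero_iff]
      by_contra h
      push Not at h
      exact hfar x₀ (by linarith) z h.le hz)
  have E2 : ∀ᶠ x in 𝓝 x₀, ∀ j, p.eval (x j) ≠ 0 := by
    rw [eventually_all]
    intro j
    have : Continuous (fun x : ι → ℂ => p.eval (x j)) := p.continuous.comp (continuous_apply j)
    exact this.continuousAt.eventually_ne (hx j)
  have E3 : ∀ᶠ x in 𝓝 x₀, ‖x‖ < ‖x₀‖ + 1 :=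
    continuous_norm.continuousAt.eventually_lt continuousAt_const (by linarith)
  filter_upwards [E, E2, E3] with x h1 h2 h3
  refine ⟨h1.1.congr_set fun z hz => ?_, h2⟩
  simp only [Set.mem_univ, true_iff]
  rw [mem_closedBall_zero_iff]
  by_contra h
  push Not at h
  exact hfar x h3.le z h.le hz

theorem good {ι : Type*} [Fintype ι] (μ : ι → ℕ) (hμ : ∀ j, 0 < μ j)
    (hn : 1 ≤ Fintype.card ι) (hD : Fintype.card ι < ∑ j, μ j) :
    Clu μ (3 * ∑ j, μ j + 2 * Fintype.card ι - 3) := by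
  classical
  by_cases h1 : Fintype.card ι = 1
  · exact caseOne μ hμ h1
  by_cases h2 : 2 * Fintype.card ι ≤ ∑ j, μ j + 1
  · exact caseC μ hμ (by omega) h2
  obtain ⟨j₀, hj⟩ : ∃ j₀, μ j₀ = 1 := by
    by_contra h
    push Not at h
    have : ∑ j : ι, 2 ≤ ∑ j, μ j := Finset.sum_le_sum fun j _ => by
      have := hμ j; have := h j; omega
    simp only [Finset.sum_const, Finset.card_univ, smul_eq_mul] at this
    omega
  have hcard : Fintype.card {j // j ≠ j₀} = Fintype.card ι - 1 := by
    simp [Fintype.card_subtype_compl]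
  have hsum : ∑ j, μ j = 1 + ∑ j : {j // j ≠ j₀}, μ j := by
    rw [Fintype.sum_eq_add_sum_subtype_ne _ j₀, hj]
  obtain ⟨x, p, hx, hp, hpx, hC, z₀, H, hfac, hH, hq0⟩ :=
    caseB (fun j : {j // j ≠ j₀} => μ j) (fun j => hμ j) (by rw [hcard]; omega)
      (by rw [hcard]; omega)
  set S := ∑ j : {j // j ≠ j₀}, μ j with hS
  obtain ⟨ε, hε, hins⟩ := insertion (fun j : {j // j ≠ j₀} => μ j) x p hp (3 * S)
    _ (by rw [hcard]; omega) hC z₀ H hfac hH hq0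
  set q := Qp (fun j : {j // j ≠ j₀} => μ j) x with hq
  set y : ι → ℂ := fun j => if h : j = j₀ then z₀ else x ⟨j, h⟩ with hy
  have hy0 : y j₀ = z₀ := by simp [hy]
  have hy1 : ∀ j : {j // j ≠ j₀}, y j = x j := by intro j; simp [hy, j.2]
  have hQ : Qp μ y = (X - C z₀) * q := by
    unfold Qp
    rw [Fintype.prod_eq_mul_prod_subtype_ne _ j₀, hy0, hj, pow_one]
    congr 1
    refine Finset.prod_congr rfl fun j _ => ?_
    rw [hy1]
  have hxz : ∀ j, x j ≠ z₀ := by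
    intro j h
    apply hq0
    rw [← h]
    exact Qp_root _ (fun j : {j // j ≠ j₀} => hμ j) x j
  refine ⟨y, (X - C z₀) * p + C ε * q, ?_, ?_, ?_, ?_⟩
  · intro a b h
    by_cases ha : a = j₀ <;> by_cases hb : b = j₀
    · rw [ha, hb]
    · subst ha
      rw [hy0, hy1 ⟨b, hb⟩] at h
      exact absurd h.symm (hxz _)
    · subst hb
      rw [hy0, hy1 ⟨a, ha⟩] at h
      exact absurd h (hxz _)
    · rw [hy1 ⟨a, ha⟩, hy1 ⟨b, hb⟩] at h
      have := hx h
      simpa using this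
  · rw [hsum]
    refine natDegree_add_le_of_degree_le ?_ ?_
    · refine natDegree_mul_le.trans ?_
      rw [natDegree_X_sub_C]; omega
    · refine (natDegree_C_mul_le _ _).trans ?_
      rw [hq, Qp_natDegree]; omega
  · intro j
    by_cases hj' : j = j₀
    · subst hj'
      rw [hy0]; simp [hε, hq0]
    · have h3 : q.eval (x ⟨j, hj'⟩) = 0 := Qp_root _ (fun j : {j // j ≠ j₀} => hμ j) x _
      rw [hy1 ⟨j, hj'⟩]
      simp only [eval_add, eval_mul, eval_sub, eval_X, eval_C, h3, mul_zero, add_zero]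
      exact mul_ne_zero (sub_ne_zero.2 (hxz _)) (hpx _)
  · rw [hQ]
    convert hins using 1
    rw [hcard]; omega

theorem caseAll {ι : Type*} [Fintype ι] (μ : ι → ℕ) (hμ : ∀ j, μ j = 1)
    (hn : 2 ≤ Fintype.card ι) : Clu μ (5 * Fintype.card ι - 5) := by
  classical
  obtain ⟨j₀, j₁, hj⟩ := Fintype.one_lt_card_iff.1 (by omega : 1 < Fintype.card ι)
  have hj1 : j₁ ≠ j₀ := hj.symm
  have hcard : Fintype.card {j // j ≠ j₀} = Fintype.card ι - 1 := by
    simp [Fintype.card_subtype_compl]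
  set ν : {j // j ≠ j₀} → ℕ := fun j => if j = ⟨j₁, hj1⟩ then 2 else 1 with hν
  have hνs : ∑ j, ν j = Fintype.card ι := by
    have : ∀ j, ν j = 1 + if j = ⟨j₁, hj1⟩ then 1 else 0 := by
      intro j; simp only [hν]; split_ifs <;> rfl
    simp only [this, Finset.sum_add_distrib, Finset.sum_ite_eq', Finset.mem_univ, if_true,
      Finset.sum_const, Finset.card_univ, hcard, smul_eq_mul]
    omega
  obtain ⟨x, p, hx, hp, hpx, hC⟩ := good ν (fun j => by simp only [hν]; split_ifs <;> norm_num)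
    (by rw [hcard]; omega) (by rw [hcard, hνs]; omega)
  set y : ℂ → ι → ℂ := fun δ j => if h : j = j₀ then x ⟨j₁, hj1⟩ + δ else x ⟨j, h⟩ with hy
  have hy0 : ∀ δ, y δ j₀ = x ⟨j₁, hj1⟩ + δ := by intro δ; simp [hy]
  have hy1 : ∀ δ, ∀ j : {j // j ≠ j₀}, y δ j = x j := by intro δ j; simp [hy, j.2]
  have hQ : Qp μ (y 0) = Qp ν x := by
    unfold Qp
    rw [Fintype.prod_eq_mul_prod_subtype_ne _ j₀, hy0, hμ, pow_one, add_zero]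
    have : ∀ j, (X - C (x j)) ^ ν j = (if j = ⟨j₁, hj1⟩ then (X - C (x j)) else 1) * (X - C (x j)) := by
      intro j; simp only [hν]; split_ifs <;> ring
    simp only [this, Finset.prod_mul_distrib, Finset.prod_ite_eq', Finset.mem_univ, if_true]
    congr 1
    refine Finset.prod_congr rfl fun j _ => ?_
    rw [hy1, hμ, pow_one]
  have hμs : ∑ j, μ j = Fintype.card ι := by simp [hμ]
  have hpm : p.natDegree ≤ ∑ j, μ j := by rw [hμs, ← hνs]; exact hp
  rw [← hQ] at hC
  have P := persist μ (y 0) p hpm _ hC (by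
    intro j
    by_cases h : j = j₀
    · subst h; rw [hy0, add_zero]; exact hpx _
    · rw [hy1 0 ⟨j, h⟩]; exact hpx _)
  have hyc : Continuous y := by
    refine continuous_pi fun j => ?_
    by_cases h : j = j₀
    · subst h; simp only [hy0]; fun_prop
    · have : ∀ δ, y δ j = x ⟨j, h⟩ := fun δ => hy1 δ ⟨j, h⟩
      simp only [this]; fun_prop
  have E1 := ((hyc.tendsto 0).mono_left (nhdsWithin_le_nhds (s := {0}ᶜ))).eventually P
  have E2 : ∀ᶠ δ : ℂ in 𝓝[≠] 0, ∀ j, x ⟨j₁, hj1⟩ + δ ≠ x j := by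
    rw [eventually_all]
    intro j
    by_cases h : x j = x ⟨j₁, hj1⟩
    · filter_upwards [self_mem_nhdsWithin] with δ hδ h2
      apply hδ
      rw [h] at h2
      simpa using h2
    · have : ∀ᶠ δ : ℂ in 𝓝 0, δ ≠ x j - x ⟨j₁, hj1⟩ := eventually_ne_nhds (sub_ne_zero.2 h).symm
      filter_upwards [nhdsWithin_le_nhds this] with δ hδ h2
      apply hδ
      rw [← h2]; ring
  obtain ⟨δ, ⟨hc, hpy⟩, hδ⟩ := (E1.and E2).exists
  refine ⟨y δ, p, ?_, hpm, hpy, ?_⟩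
  · intro a b h
    by_cases ha : a = j₀ <;> by_cases hb : b = j₀
    · rw [ha, hb]
    · subst ha
      rw [hy0, hy1 δ ⟨b, hb⟩] at h
      exact absurd h (hδ _)
    · subst hb
      rw [hy0, hy1 δ ⟨a, ha⟩] at h
      exact absurd h.symm (hδ _)
    · rw [hy1 δ ⟨a, ha⟩, hy1 δ ⟨b, hb⟩] at h
      have := hx h
      simpa using this
  · convert hc using 1
    rw [hcard, hνs]; omega

theorem clu_final (d n : ℕ) (hd : 2 ≤ d) (hn1 : 1 ≤ n) (hnd : n ≤ d)
    (μ : Fin n → ℕ) (hμ : ∀ j, 0 < μ j) (hsum : ∑ j, μ j = d) :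
    Clu μ (min (3 * d + 2 * n - 3) (5 * d - 5)) := by
  rcases hnd.lt_or_eq with h | h
  · have := good μ hμ (by simpa using hn1) (by simpa [hsum] using h)
    rw [hsum, Fintype.card_fin] at this
    rwa [min_eq_left (by omega)]
  · subst h
    have h1 : ∀ j, μ j = 1 := by
      by_contra hne
      push Not at hne
      obtain ⟨i, hi⟩ := hne
      have : ∑ j : Fin n, 1 < ∑ j, μ j := Finset.sum_lt_sum (fun j _ => hμ j)
        ⟨i, Finset.mem_univ _, by have := hμ i; omega⟩
      simp only [Finset.sum_const, Finset.card_univ, Fintype.card_fin, smul_eq_mul, mul_one] at this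
      omega
    have := caseAll μ h1 (by simpa using hd)
    rw [Fintype.card_fin] at this
    rwa [min_eq_right (by omega)]


end Aux

/-- Sharpness of the fixed point bound: Given `d ≥ 2`, `1 ≤ n ≤ d` and a
partition `d = μ₁ + ⋯ + μ_n`, there is a rational function `r = p/q` with `deg p ≤ d`,
`q = ∏ (z − z_j)^{μ_j}` for distinct `z_j` (so `r` has degree `d`, `r(∞) ≠ ∞`, and
exactly `n` poles of multiplicities `μ₁, …, μ_n`), such that the equation
`r(z) = conj z` has exactly `min(3d + 2n − 3, 5d − 5)` solutions in `ℂ`. -/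
theorem stmt_14 (d n : ℕ) (hd : 2 ≤ d) (hn1 : 1 ≤ n) (hnd : n ≤ d)
    (μ : Fin n → ℕ) (hμ : ∀ j, 0 < μ j) (hsum : ∑ j, μ j = d) :
    ∃ (z : Fin n → ℂ) (p : Polynomial ℂ),
      Function.Injective z ∧
      p.natDegree ≤ d ∧
      IsCoprime p (∏ j, (X - C (z j)) ^ μ j) ∧
      (fixedPts p (∏ j, (X - C (z j)) ^ μ j)).Finite ∧
      (fixedPts p (∏ j, (X - C (z j)) ^ μ j)).ncard =
        min (3 * d + 2 * n - 3) (5 * d - 5) := by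
  obtain ⟨z, p, hz, hp, hpz, hC⟩ := clu_final d n hd hn1 hnd μ hμ hsum
  have hq : ∀ v : ℂ, (∏ j, (X - C (z j)) ^ μ j).eval v = 0 → p.eval v ≠ 0 := by
    intro v hv
    rw [eval_prod, Finset.prod_eq_zero_iff] at hv
    obtain ⟨j, -, hj⟩ := hv
    rw [eval_pow, eval_sub, eval_X, eval_C] at hj
    rw [sub_eq_zero.1 (eq_zero_of_pow_eq_zero hj)]
    exact hpz j
  have hset : fixedPts p (∏ j, (X - C (z j)) ^ μ j) =
      {v | v ∈ Set.univ ∧ GG p (Qp μ z) v = 0} := by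
    ext v
    constructor
    · rintro ⟨-, h⟩
      exact ⟨trivial, sub_eq_zero.2 h⟩
    · rintro ⟨-, h⟩
      have h2 : p.eval v = (starRingEnd ℂ) v * (∏ j, (X - C (z j)) ^ μ j).eval v :=
        sub_eq_zero.1 h
      refine ⟨fun h0 => hq v h0 ?_, h2⟩
      rw [h2, h0, mul_zero]
  refine ⟨z, p, hz, by rw [← hsum]; exact hp, ?_, ?_, ?_⟩
  · rw [isCoprime_iff_aeval_ne_zero_of_isAlgClosed (k := ℂ) (K := ℂ)]
    intro a
    by_cases h : (∏ j, (X - C (z j)) ^ μ j).eval a = 0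
    · left; simpa using hq a h
    · right; rw [coe_aeval_eq_eval]; exact h
  · rw [hset]; exact Set.finite_of_encard_eq_coe hC.1
  · rw [hset, Set.ncard, hC.1]; rfl
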